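/- Let k ≥ 2, m ≥ 2 and n ≥ 1 be integers, let p be a prime, and let α_p(n) denote the p-adic valuation of the central binomial coefficient C(2n, n) (the exponent of the largest power of p dividing C(2n, n)). If p^{α_p(n)·⌊k/2⌋ + 1} divides m, then TC_k(L^{2n+1}_m) = k·(2n+1). -/

import Mathlib

/-!
Write `L` for the lens space and `S` for the sphere `S^{2n+1}`. Since `⌊k/2⌋ ≥ 1`, the divisibility
hypothesis implies that `p^{α_p(n)+1}` divides `m`, so that the binomial coefficient `C(2n, n)` is not
zero in `ℤ/m`; this is all that is needed about `m`.

*Upper bound* (`LensTC.upper_bound`). Stratify `S^k` by types. The type of a point consists of the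
positions `i_a` of the first non-zero coordinate in each factor, together with the partition of the
factors according to the argument of the `m`-th power of that coordinate. Its weight is
`2 ∑ i_a + (k - number of classes)`, a number less than `k (2n + 1)`. Near a given point, all points of
the same weight have the same type (`ty_local`, which rests on the counting lemma `rigid`), so the
strata of one weight have disjoint open neighbourhoods (`nbhd_disj`), and these are invariant under the
deck transformations. Over the images of such neighbourhoods the coordinate maps to `L` are homotopic
to each other (`homotopic_coords`): move linearly to a multiple of a fixed vector, then rotate through
an `m`-th of a continuously chosen angle. This yields a section of `π_k` over the union of the images
for the types of each weight, and `k (2n + 1)` open sets suffice.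

*Lower bound* (`LensTC.lower_bound`). Suppose that `L^k` is covered by `r < k (2n + 1)` open sets with
sections. There is an equivariant map `Phi` to `S^k` from the `k`-fold product of `(2n+2)`-fold joins
of `ℤ/m`; subdivide the joins finely, and colour each cell by the least index of an open set containing
its image. The section over this open set also gives each cell a label in `(ℤ/m)^k`, by comparing the
lifted paths with the given points (`exists_label`). Passing to a face never raises the colour, and
changes the label only if the colour drops. So a normalised cochain of degree `k (2n + 1) - 1` on the
set of labels evaluates to zero on every cell: a flag of the required length along which all labels
change would need too many colours (`no_coloring`).

On the other hand, let `x_c` be the `1`-cocycle given by the differences of the `c`-th coordinates of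
labels, and `y_c` a cocycle for its Bockstein. The cocycle `y_1^{2n} x_1 ∏_{c ≥ 2} y_c^n x_c` evaluates
to `± C(2n, n)` on an explicit chain (`LabSys.main_eval`), a product of the chains of the periodic
resolution of `ℤ` over `ℤ[ℤ/m]`. Indeed, Stokes' formula for explicit primitives of the powers of the
`y_c`, applied to a product of two such chains, becomes Pascal's rule (`LabSys.b_eq`). This is a
contradiction, since `C(2n, n)` is not zero in `ℤ/m`.
-/

open scoped unitInterval

/-- The map `π_k : C([0,1],X) → X^k`, `γ ↦ (γ(0), γ(1/(k-1)), …, γ(1))`. -/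
noncomputable def pik {X : Type*} [TopologicalSpace X] (k : ℕ) (γ : C(unitInterval, X)) :
    Fin k → X :=
  fun i => γ (Set.projIcc 0 1 zero_le_one ((i : ℝ) / ((k : ℝ) - 1)))

/-- The restriction of `π_k` over `S ⊆ X^k` admits a continuous section. -/
def HasSec {X : Type*} [TopologicalSpace X] (k : ℕ) (S : Set (Fin k → X)) : Prop :=
  ∃ s : C(S, C(unitInterval, X)), ∀ u : S, pik k (s u) = (u : Fin k → X)

/-- The inclusion of `U` into `Z` is null-homotopic. -/
def NullHomotopicIncl {Z : Type*} [TopologicalSpace Z] (U : Set Z) : Prop :=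
  ∃ z : Z, ContinuousMap.Homotopic ⟨Subtype.val, continuous_subtype_val⟩
    (ContinuousMap.const ↥U z)

/-- `X^k` can be covered by `r` open sets, each admitting a continuous section of `π_k`. -/
def TCCoverAt (X : Type*) [TopologicalSpace X] (k r : ℕ) : Prop :=
  ∃ U : Fin r → Set (Fin k → X),
    (∀ i, IsOpen (U i)) ∧ (⋃ i, U i) = Set.univ ∧ ∀ i, HasSec k (U i)

/-- The higher (sequential) topological complexity `TC_k(X)`. -/
noncomputable def higherTC (X : Type*) [TopologicalSpace X] (k : ℕ) : ℕ :=
  sInf {r | TCCoverAt X k r}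

/-- A Hurewicz fibration: homotopy lifting property with respect to every space. -/
def IsHurewiczFibration.{u} {E B : Type*} [TopologicalSpace E] [TopologicalSpace B]
    (p : C(E, B)) : Prop :=
  ∀ (Z : Type u) [TopologicalSpace Z] (f : C(Z, E)) (H : C(Z × unitInterval, B)),
    (∀ z, H (z, 0) = p (f z)) →
    ∃ G : C(Z × unitInterval, E), (∀ z, G (z, 0) = f z) ∧ ∀ z t, p (G (z, t)) = H (z, t)

/-- The equivalence relation on `S^{2n+1} ⊆ ℂ^{n+1}` identifying points in the same
orbit of the group of `m`-th roots of unity acting by complex scalar multiplication. -/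
noncomputable def lensSetoid (m n : ℕ) :
    Setoid (Metric.sphere (0 : EuclideanSpace ℂ (Fin (n + 1))) 1) where
  r x y := ∃ ζ : ℂˣ, ζ ^ m = 1 ∧
    (y : EuclideanSpace ℂ (Fin (n + 1))) = ζ • (x : EuclideanSpace ℂ (Fin (n + 1)))
  iseqv := by
    constructor
    · exact fun x => ⟨1, one_pow m, (one_smul _ _).symm⟩
    · rintro x y ⟨ζ, hζ, h⟩
      exact ⟨ζ⁻¹, by rw [inv_pow, hζ, inv_one], by rw [h, inv_smul_smul]⟩
    · rintro x y z ⟨ζ₁, h₁, e₁⟩ ⟨ζ₂, h₂, e₂⟩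
      exact ⟨ζ₂ * ζ₁, by rw [mul_pow, h₁, h₂, one_mul], by rw [e₂, e₁, smul_smul]⟩

/-- The lens space `L^{2n+1}_m`, the quotient of the unit sphere `S^{2n+1} ⊆ ℂ^{n+1}`
by the action of the `m`-th roots of unity, with the quotient topology. -/
noncomputable def LensSpace (m n : ℕ) : Type :=
  Quotient (lensSetoid m n)

noncomputable instance (m n : ℕ) : TopologicalSpace (LensSpace m n) :=
  inferInstanceAs (TopologicalSpace (Quotient (lensSetoid m n)))

/-! ### Chains on powers of a subdivided cone -/

namespace LensTC

/-- The cells of the cone over the discrete set `ZMod m`, each ray being subdivided: the centre,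
the vertex `vert g i` at step `i + 1` on the ray `g`, and the edge `edge g i` on the ray `g` from
step `i` to step `i + 1`, step `0` being the centre. The rays are infinite; a finite length `M` is
imposed later. -/
inductive TC (m : ℕ) : Type
  | ctr : TC m
  | vert (g : ZMod m) (i : ℕ) : TC m
  | edge (g : ZMod m) (i : ℕ) : TC m

/-- Cellular chains, with coefficients in `ℤ/m`, on all finite powers of the cone at once: words
of letters are product cells and juxtaposition is the product of cells, so that chains form the
free associative algebra on the letters. -/
abbrev Ch (m : ℕ) : Type := MonoidAlgebra (ZMod m) (FreeMonoid (TC m))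

variable {m : ℕ}

/-- The product cell given by a word, as a chain. -/
noncomputable def wd (l : List (TC m)) : Ch m := MonoidAlgebra.single (FreeMonoid.ofList l) 1

/-- Linear extension of a function on words. -/
noncomputable def lin {N : Type*} [AddCommGroup N] [Module (ZMod m) N] (f : List (TC m) → N) :
    Ch m →ₗ[ZMod m] N :=
  (MonoidAlgebra.basis (FreeMonoid (TC m)) (ZMod m)).constr (ZMod m) (fun w => f w.toList)

theorem lin_wd {N : Type*} [AddCommGroup N] [Module (ZMod m) N] (f : List (TC m) → N)
    (l : List (TC m)) : lin f (wd l) = f l := by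
  have h : wd l = MonoidAlgebra.basis (FreeMonoid (TC m)) (ZMod m) (FreeMonoid.ofList l) := by
    simp [wd]
  rw [h, lin, Module.Basis.constr_basis]; simp

theorem wd_append (l l' : List (TC m)) : wd (l ++ l') = wd l * wd l' := by
  simp [wd, MonoidAlgebra.single_mul_single]

theorem wd_nil : wd ([] : List (TC m)) = 1 := rfl

theorem wd_cons (a : TC m) (l : List (TC m)) : wd (a :: l) = wd [a] * wd l := by
  rw [← wd_append]; rfl

theorem ch_ind {p : Ch m → Prop} (x : Ch m) (h0 : p 0) (hw : ∀ l, p (wd l))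
    (ha : ∀ x y, p x → p y → p (x + y)) (hs : ∀ (r : ZMod m) x, p x → p (r • x)) : p x := by
  induction x using MonoidAlgebra.induction_linear with
  | zero => exact h0
  | add f g hf hg => exact ha _ _ hf hg
  | single a b =>
    have : (MonoidAlgebra.single a b : Ch m) = b • wd a.toList := by
      simp [wd, MonoidAlgebra.smul_single]
    rw [this]; exact hs _ _ (hw _)

/-- `(-1) ^ dim` of a letter. -/
def sgnL : TC m → ZMod m
  | .edge _ _ => -1
  | _ => 1

/-- `(-1) ^ dim` of a product cell. -/
def sgn (l : List (TC m)) : ZMod m := (l.map sgnL).prod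

/-- The sign automorphism: chains of dimension `d` are multiplied by `(-1) ^ d`. -/
noncomputable def sig : Ch m →ₗ[ZMod m] Ch m := lin fun l => sgn l • wd l

/-- The generator of `ℤ/m` permuting the rays. -/
def rotL : TC m → TC m
  | .ctr => .ctr
  | .vert g i => .vert (g + 1) i
  | .edge g i => .edge (g + 1) i

/-- The diagonal action of the generator of `ℤ/m` on chains. -/
noncomputable def rot : Ch m →ₗ[ZMod m] Ch m := lin fun l => wd (l.map rotL)

/-- The vertex at step `i` on the ray `g`; step `0` is the centre for every `g`. -/
def pt (g : ZMod m) : ℕ → TC m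
  | 0 => .ctr
  | i + 1 => .vert g i

/-- The boundary of a letter. -/
noncomputable def dL : TC m → Ch m
  | .edge g i => wd [pt g (i + 1)] - wd [pt g i]
  | _ => 0

/-- The boundary of a product cell, by the Leibniz rule. -/
noncomputable def dW : List (TC m) → Ch m
  | [] => 0
  | a :: l => dL a * wd l + sgnL a • (wd [a] * dW l)

/-- The cellular boundary operator. -/
noncomputable def bd : Ch m →ₗ[ZMod m] Ch m := lin dW

theorem sig_wd (l : List (TC m)) : sig (wd l) = sgn l • wd l := lin_wd _ _
theorem rot_wd (l : List (TC m)) : rot (wd l) = wd (l.map rotL) := lin_wd _ _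
theorem bd_wd (l : List (TC m)) : bd (wd l) = dW l := lin_wd _ _

theorem sgn_append (l l' : List (TC m)) : sgn (l ++ l') = sgn l * sgn l' := by
  simp [sgn]

theorem sig_mul (x y : Ch m) : sig (x * y) = sig x * sig y := by
  induction x using ch_ind with
  | h0 => simp
  | ha x x' h h' => simp only [add_mul, map_add, h, h']
  | hs r x h => simp only [smul_mul_assoc, map_smul, h]
  | hw l =>
    induction y using ch_ind with
    | h0 => simp
    | ha x x' h h' => simp only [mul_add, map_add, h, h']
    | hs r x h => simp only [mul_smul_comm, map_smul, h]
    | hw l' => rw [← wd_append, sig_wd, sig_wd, sig_wd, sgn_append, wd_append, smul_mul_smul_comm]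

theorem rot_mul (x y : Ch m) : rot (x * y) = rot x * rot y := by
  induction x using ch_ind with
  | h0 => simp
  | ha x x' h h' => simp only [add_mul, map_add, h, h']
  | hs r x h => simp only [smul_mul_assoc, map_smul, h]
  | hw l =>
    induction y using ch_ind with
    | h0 => simp
    | ha x x' h h' => simp only [mul_add, map_add, h, h']
    | hs r x h => simp only [mul_smul_comm, map_smul, h]
    | hw l' => rw [← wd_append, rot_wd, rot_wd, rot_wd, List.map_append, wd_append]

theorem dW_append (l l' : List (TC m)) :
    dW (l ++ l') = dW l * wd l' + sgn l • (wd l * dW l') := by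
  induction l with
  | nil => simp [dW, sgn, wd_nil]
  | cons a l ih =>
    simp only [List.cons_append, dW, ih, wd_append, sgn, List.map_cons, List.prod_cons]
    rw [wd_cons a l]
    simp only [mul_add, add_mul, smul_add, smul_mul_assoc, mul_smul_comm, mul_assoc, mul_smul,
      add_assoc]

theorem bd_mul (x y : Ch m) : bd (x * y) = bd x * y + sig x * bd y := by
  induction x using ch_ind with
  | h0 => simp
  | ha x x' h h' => simp only [add_mul, map_add, h, h']; abel
  | hs r x h => simp only [smul_mul_assoc, map_smul, h, smul_add]
  | hw l =>
    induction y using ch_ind with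
    | h0 => simp
    | ha x x' h h' => simp only [mul_add, map_add, h, h']; abel
    | hs r x h => simp only [mul_smul_comm, map_smul, h, smul_add]
    | hw l' => rw [← wd_append, bd_wd, bd_wd, bd_wd, dW_append, sig_wd, smul_mul_assoc]

theorem bd_one : bd (1 : Ch m) = 0 := by rw [← wd_nil, bd_wd]; rfl
theorem sig_one : sig (1 : Ch m) = 1 := by rw [← wd_nil, sig_wd]; simp [sgn]
theorem rot_one : rot (1 : Ch m) = 1 := by rw [← wd_nil, rot_wd]; simp

theorem sig_pt (g : ZMod m) (i : ℕ) : sig (wd [pt g i]) = wd [pt g i] := by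
  rw [sig_wd]; cases i <;> simp [pt, sgn, sgnL]

theorem bd_pt (g : ZMod m) (i : ℕ) : bd (wd [pt g i]) = 0 := by
  rw [bd_wd]; cases i <;> simp [pt, dW, dL]

theorem rotL_pt (g : ZMod m) (i : ℕ) : rotL (pt g i) = pt (g + 1) i := by
  cases i <;> rfl

theorem bd_letter (a : TC m) : bd (wd [a]) = dL a := by
  rw [bd_wd]; simp [dW, wd_nil]

theorem sig_dL (a : TC m) : sig (dL a) = dL a := by
  cases a <;> simp [dL, sig_pt]

theorem bd_dL (a : TC m) : bd (dL a) = 0 := by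
  cases a <;> simp [dL, bd_pt]

theorem sgnL_smul_dL (a : TC m) : sgnL a • dL a = - dL a := by
  cases a <;> simp [dL, sgnL]

theorem sgnL_mul (a : TC m) : sgnL a * sgnL a = 1 := by
  cases a <;> simp [sgnL]

theorem sig_letter (a : TC m) : sig (wd [a]) = sgnL a • wd [a] := by
  rw [sig_wd]; simp [sgn]

theorem sig_bd (x : Ch m) : sig (bd x) = - bd (sig x) := by
  induction x using ch_ind with
  | h0 => simp
  | ha x x' h h' => simp only [map_add, h, h']; abel
  | hs r x h => simp only [map_smul, h, smul_neg]
  | hw l =>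
    induction l with
    | nil => simp [wd_nil, bd_one, sig_one]
    | cons a l ih =>
      rw [wd_cons, bd_mul, sig_mul, bd_mul, map_add, sig_mul, sig_mul, bd_letter, sig_dL, ih,
        sig_letter, map_smul, map_smul, bd_letter, sgnL_smul_dL, sig_letter]
      simp only [smul_mul_assoc, mul_neg, neg_mul, neg_add_rev, neg_neg]
      abel

theorem bd_bd (x : Ch m) : bd (bd x) = 0 := by
  induction x using ch_ind with
  | h0 => simp
  | ha x x' h h' => simp only [map_add, h, h']; abel
  | hs r x h => simp only [map_smul, h, smul_zero]
  | hw l =>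
    induction l with
    | nil => simp [wd_nil, bd_one]
    | cons a l ih =>
      rw [wd_cons, bd_mul, map_add, bd_mul, bd_mul, bd_letter, sig_dL, ih, bd_dL,
        sig_letter, map_smul, bd_letter, sgnL_smul_dL]
      simp

theorem rot_dL (a : TC m) : rot (dL a) = dL (rotL a) := by
  cases a with
  | ctr => simp [dL, rotL]
  | vert g i => simp [dL, rotL]
  | edge g i =>
    simp only [dL, map_sub, rot_wd, List.map_singleton, rotL_pt]
    rfl

theorem sgnL_rotL (a : TC m) : sgnL (rotL a) = sgnL a := by cases a <;> rfl

theorem rot_bd (x : Ch m) : rot (bd x) = bd (rot x) := by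
  induction x using ch_ind with
  | h0 => simp
  | ha x x' h h' => simp only [map_add, h, h']
  | hs r x h => simp only [map_smul, h]
  | hw l =>
    induction l with
    | nil => simp [wd_nil, bd_one, rot_one]
    | cons a l ih =>
      rw [wd_cons, bd_mul, rot_mul, bd_mul, map_add, rot_mul, rot_mul, bd_letter, ih,
        sig_letter, rot_dL, rot_wd, map_smul, rot_wd, List.map_singleton, sig_letter, bd_letter,
        sgnL_rotL]

theorem rot_sig (x : Ch m) : rot (sig x) = sig (rot x) := by
  induction x using ch_ind with
  | h0 => simp
  | ha x x' h h' => simp only [map_add, h, h']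
  | hs r x h => simp only [map_smul, h]
  | hw l =>
    rw [rot_wd, sig_wd, sig_wd, map_smul, rot_wd]
    congr 1
    simp only [sgn, List.map_map]
    congr 2
    funext a; exact (sgnL_rotL a).symm

/-- The functional with value `1` on every product cell, cells of positive dimension included. It
kills boundaries (`aug_bd`) because each edge contributes its two ends with opposite signs. -/
noncomputable def aug : Ch m →ₗ[ZMod m] ZMod m := lin fun _ => 1

theorem aug_wd (l : List (TC m)) : aug (wd l) = 1 := lin_wd _ _

theorem aug_mul (x y : Ch m) : aug (x * y) = aug x * aug y := by
  induction x using ch_ind with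
  | h0 => simp
  | ha x x' h h' => simp only [add_mul, map_add, h, h']
  | hs r x h => simp only [smul_mul_assoc, map_smul, h]
  | hw l =>
    induction y using ch_ind with
    | h0 => simp
    | ha x x' h h' => simp only [mul_add, map_add, h, h']
    | hs r x h => simp only [mul_smul_comm, map_smul, h]
    | hw l' => rw [← wd_append, aug_wd, aug_wd, aug_wd, one_mul]

theorem aug_bd (x : Ch m) : aug (bd x) = 0 := by
  induction x using ch_ind with
  | h0 => simp
  | ha x x' h h' => simp only [map_add, h, h', add_zero]
  | hs r x h => simp only [map_smul, h, smul_zero]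
  | hw l =>
    induction l with
    | nil => simp [wd_nil, bd_one]
    | cons a l ih =>
      rw [wd_cons, bd_mul, map_add, aug_mul, aug_mul, bd_letter, ih]
      cases a <;> simp [dL, aug_wd]

end LensTC

/-! ### Equivariant chains in iterated joins -/

namespace LensTC
variable {m : ℕ}

/-- The ray `0`, as a `1`-chain from the centre to step `M`. -/
noncomputable def ray (M : ℕ) : Ch m := ∑ i ∈ Finset.range M, wd [TC.edge 0 i]

/-- The centre of the cone, as a `0`-chain. -/
noncomputable def cc : Ch m := wd [TC.ctr]

/-- The end of the ray `0`, as a `0`-chain. -/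
noncomputable def uu (M : ℕ) : Ch m := wd [pt 0 M]

theorem bd_ray (M : ℕ) : bd (ray M : Ch m) = uu M - cc := by
  simp only [ray, map_sum, bd_letter, dL]
  rw [Finset.sum_range_sub (fun i => wd [pt (0 : ZMod m) i])]
  rfl

theorem sig_ray (M : ℕ) : sig (ray M : Ch m) = - ray M := by
  simp [ray, map_sum, sig_letter, sgnL]

theorem bd_cc : bd (cc : Ch m) = 0 := bd_pt 0 0
theorem sig_cc : sig (cc : Ch m) = cc := sig_pt 0 0
theorem rot_cc : rot (cc : Ch m) = cc := by rw [cc, rot_wd]; rfl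
theorem bd_uu (M : ℕ) : bd (uu M : Ch m) = 0 := bd_pt 0 M
theorem sig_uu (M : ℕ) : sig (uu M : Ch m) = uu M := sig_pt 0 M

/-- The differentials of the periodic resolution of `ℤ` over `ℤ[ℤ/m]`: the norm element for even
`j` and `rot - 1` for odd `j`. -/
noncomputable def kap (j : ℕ) : Ch m →ₗ[ZMod m] Ch m :=
  if Even j then ∑ u ∈ Finset.range m, rot ^ u else rot - 1

theorem kap_even {j : ℕ} (h : Even j) (x : Ch m) :
    kap j x = ∑ u ∈ Finset.range m, (rot ^ u) x := by
  simp [kap, h, LinearMap.sum_apply]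

theorem kap_odd {j : ℕ} (h : ¬ Even j) (x : Ch m) : kap j x = rot x - x := by
  simp [kap, h]

theorem rotpow_wd (u : ℕ) (l : List (TC m)) : (rot ^ u) (wd l) = wd (l.map rotL^[u]) := by
  induction u with
  | zero => simp
  | succ u ih =>
    rw [pow_succ', Module.End.mul_apply, ih, rot_wd, List.map_map, Function.iterate_succ']

theorem rotL_iter (u : ℕ) (a : TC m) : rotL^[u] a = match a with
    | .ctr => .ctr
    | .vert g i => .vert (g + u) i
    | .edge g i => .edge (g + u) i := by
  induction u with
  | zero => cases a <;> simp
  | succ u ih =>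
    rw [Function.iterate_succ_apply', ih]
    cases a <;> simp [rotL, add_assoc]

theorem rot_pow_m : (rot : Ch m →ₗ[ZMod m] Ch m) ^ m = 1 := by
  refine LinearMap.ext fun x => ?_
  induction x using ch_ind with
  | h0 => simp
  | ha x x' h h' => simp only [map_add, h, h']
  | hs r x h => simp only [map_smul, h]
  | hw l =>
    rw [rotpow_wd]
    have : (rotL^[m] : TC m → TC m) = id := by
      funext a; rw [rotL_iter]; cases a <;> simp
    simp [this]

theorem kap_kap (j : ℕ) (x : Ch m) : kap (j + 1) (kap j x) = 0 := by
  have key : (∑ u ∈ Finset.range m, (rot : Ch m →ₗ[ZMod m] Ch m) ^ u) * (rot - 1) = 0 := by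
    rw [geom_sum_mul, rot_pow_m, sub_self]
  have key' : (rot - 1) * (∑ u ∈ Finset.range m, (rot : Ch m →ₗ[ZMod m] Ch m) ^ u) = 0 := by
    rw [mul_geom_sum, rot_pow_m, sub_self]
  rw [← Module.End.mul_apply]
  by_cases h : Even j
  · have h' : ¬ Even (j + 1) := by simpa [Nat.even_add_one] using h
    simp only [kap, h, h', if_true, if_false, key', LinearMap.zero_apply]
  · have h' : Even (j + 1) := by simpa [Nat.even_add_one] using h
    simp only [kap, h, h', if_true, if_false, key, LinearMap.zero_apply]

theorem kap_comm (T : Ch m →ₗ[ZMod m] Ch m) (hT : ∀ x, T (rot x) = rot (T x)) (j : ℕ) (x : Ch m) :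
    T (kap j x) = kap j (T x) := by
  have hp : ∀ u x, T ((rot ^ u) x) = (rot ^ u) (T x) := by
    intro u
    induction u with
    | zero => simp
    | succ u ih => intro x; rw [pow_succ, Module.End.mul_apply, Module.End.mul_apply, ih, hT]
  by_cases h : Even j
  · simp only [kap_even h, map_sum, hp]
  · simp only [kap_odd h, map_sub, hT]

theorem bd_kap (j : ℕ) (x : Ch m) : bd (kap j x) = kap j (bd x) :=
  kap_comm bd (fun x => (rot_bd x).symm) j x

theorem sig_kap (j : ℕ) (x : Ch m) : sig (kap j x) = kap j (sig x) :=
  kap_comm sig (fun x => (rot_sig x).symm) j x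

theorem kap_mul_cc (j : ℕ) (x : Ch m) : kap j x * cc = kap j (x * cc) :=
  kap_comm (LinearMap.mulRight (ZMod m) cc) (fun x => by simp [rot_mul, rot_cc]) j x

theorem kap_mul_cc_pow (j q : ℕ) (x : Ch m) : kap j x * cc ^ q = kap j (x * cc ^ q) := by
  induction q generalizing x with
  | zero => simp
  | succ q ih => rw [pow_succ', ← mul_assoc, kap_mul_cc, ih, ← mul_assoc]

/-- A chain of dimension `j` in the `j`-fold product of the cone with `kap (j + 1) (DD M j) = 0`
(`kap_DD`), built by multiplying by a ray and symmetrising. -/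
noncomputable def DD (M : ℕ) : ℕ → Ch m
  | 0 => 1
  | j + 1 => (-1 : ZMod m) ^ j • kap (j + 1) (DD M j * ray M)

/-- Up to sign, the part of the boundary of `DD M j * ray M` that lies in the join, namely the
cells having a coordinate at the base of the cone. It is a chain of dimension `j` on words of
length `j + 1`. -/
noncomputable def core (M j : ℕ) : Ch m :=
  (-1 : ZMod m) ^ j • (bd (DD M j) * ray M) + DD M j * uu M

theorem sig_DD (M j : ℕ) : sig (DD M j : Ch m) = (-1 : ZMod m) ^ j • DD M j := by
  induction j with
  | zero => simp [DD, sig_one]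
  | succ j ih =>
    rw [DD, map_smul, sig_kap, sig_mul, ih, sig_ray, smul_mul_assoc, mul_neg, map_smul, map_neg,
      pow_succ (-1 : ZMod m) j]
    simp

theorem neg_one_pow_smul_self (j : ℕ) (x : Ch m) :
    (-1 : ZMod m) ^ j • ((-1 : ZMod m) ^ j • x) = x := by
  rw [smul_smul, ← mul_pow]; simp

theorem kap_DD (M j : ℕ) : kap (j + 1) (DD M j : Ch m) = 0 := by
  cases j with
  | zero => rw [kap_odd (by decide)]; simp [DD, rot_one]
  | succ j => rw [DD, map_smul, kap_kap, smul_zero]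

/-- The step of the induction producing the periodic resolution: the remaining part `DD M j * cc`
of the boundary of `DD M j * ray M` is killed by `kap (j + 1)`. -/
theorem bd_DD_succ (M j : ℕ) : bd (DD M (j + 1) : Ch m) = kap (j + 1) (core M j) := by
  have h : bd (DD M j * ray M : Ch m) = (-1 : ZMod m) ^ j • (core M j - DD M j * cc) := by
    rw [bd_mul, sig_DD, bd_ray, core, smul_sub, smul_add, neg_one_pow_smul_self, smul_mul_assoc,
      mul_sub, smul_sub]
    abel
  rw [DD, map_smul, bd_kap, h, map_smul, neg_one_pow_smul_self, map_sub, ← kap_mul_cc, kap_DD,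
    zero_mul, sub_zero]

theorem bd_core (M j : ℕ) : bd (core M j : Ch m) = bd (DD M j) * cc := by
  rw [core, map_add, map_smul, bd_mul, bd_mul, bd_bd, bd_ray, bd_uu, sig_bd, sig_DD, map_smul]
  simp only [zero_mul, mul_zero, zero_add, add_zero, neg_mul, smul_neg, smul_mul_assoc]
  rw [neg_one_pow_smul_self, mul_sub]; abel

/-- The `j`-dimensional chain in the `L`-fold join obtained from `core M j` by placing the other
coordinates at the centre (for `j < L`). By `bd_ee_succ`, the boundary of `ee (j + 1)` is `kap (j
+ 1) (ee j)`, so these chains and their rotations form an image of the periodic resolution. -/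
noncomputable def ee (M L j : ℕ) : Ch m := core M j * cc ^ (L - 1 - j)

theorem bd_cc_pow (q : ℕ) : bd (cc ^ q : Ch m) = 0 := by
  induction q with
  | zero => simp [bd_one]
  | succ q ih => rw [pow_succ, bd_mul, ih, bd_cc]; simp

theorem sig_cc_pow (q : ℕ) : sig (cc ^ q : Ch m) = cc ^ q := by
  induction q with
  | zero => simp [sig_one]
  | succ q ih => rw [pow_succ, sig_mul, ih, sig_cc]

theorem sig_core (M j : ℕ) : sig (core M j : Ch m) = (-1 : ZMod m) ^ j • core M j := by
  rw [core, map_add, map_smul, sig_mul, sig_mul, sig_bd, sig_DD, sig_ray, sig_uu, map_smul]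
  simp

theorem sig_ee (M L j : ℕ) : sig (ee M L j : Ch m) = (-1 : ZMod m) ^ j • ee M L j := by
  rw [ee, sig_mul, sig_core, sig_cc_pow, smul_mul_assoc]

theorem bd_ee_zero (M L : ℕ) : bd (ee M L 0 : Ch m) = 0 := by
  rw [ee, bd_mul, bd_core, bd_cc_pow]; simp [DD, bd_one]

theorem bd_ee_succ (M L j : ℕ) (h : j + 1 < L) :
    bd (ee M L (j + 1) : Ch m) = kap (j + 1) (ee M L j) := by
  rw [ee, bd_mul, bd_core, bd_cc_pow, mul_zero, add_zero, bd_DD_succ, mul_assoc, ← pow_succ',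
    kap_mul_cc_pow, ee]
  congr 3; omega

theorem aug_ee_zero (M L : ℕ) : aug (ee M L 0 : Ch m) = 1 := by
  have hp : ∀ q, aug (cc ^ q : Ch m) = 1 := by
    intro q
    induction q with
    | zero => rw [pow_zero, ← wd_nil, aug_wd]
    | succ q ih => rw [pow_succ, aug_mul, ih, cc, aug_wd, one_mul]
  rw [ee, aug_mul, hp, core, map_add]
  simp [DD, bd_one, uu, aug_wd]

/-- The letter is the end, at step `M`, of some ray. -/
def IsEnd (M : ℕ) (a : TC m) : Prop := ∃ g, a = pt g M

/-- Words of length `L` containing the end of a ray. These are the cells of the `L`-fold join of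
`ℤ/m`, realised in the `L`-fold product of the cone as the points with some coordinate at the
base. -/
def GW (M L : ℕ) : Set (List (TC m)) := {l | l.length = L ∧ ∃ a ∈ l, IsEnd M a}

/-- Concatenations of `b` words in `GW M L`: the cells of the product of `b` joins. -/
def GWs (M L : ℕ) : ℕ → Set (List (TC m))
  | 0 => {[]}
  | b + 1 => {l | ∃ l₁ ∈ GW M L, ∃ l₂ ∈ GWs M L b, l = l₁ ++ l₂}

/-- The span of the cells in `s`. -/
noncomputable def sp (s : Set (List (TC m))) : Submodule (ZMod m) (Ch m) := Submodule.span _ (wd '' s)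

theorem wd_mem_sp {s : Set (List (TC m))} {l} (h : l ∈ s) : wd l ∈ sp s :=
  Submodule.subset_span ⟨l, h, rfl⟩

theorem sp_ind {s : Set (List (TC m))} {p : Ch m → Prop} {x : Ch m} (hx : x ∈ sp s) (h0 : p 0)
    (hw : ∀ l ∈ s, p (wd l)) (ha : ∀ x y, p x → p y → p (x + y))
    (hs : ∀ (r : ZMod m) x, p x → p (r • x)) : p x := by
  induction hx using Submodule.span_induction with
  | mem x hx => obtain ⟨l, hl, rfl⟩ := hx; exact hw l hl
  | zero => exact h0
  | add x y _ _ hx hy => exact ha x y hx hy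
  | smul r x _ hx => exact hs r x hx

theorem sp_map {s t : Set (List (TC m))} (f : Ch m →ₗ[ZMod m] Ch m)
    (h : ∀ l ∈ s, f (wd l) ∈ sp t) {x : Ch m} (hx : x ∈ sp s) : f x ∈ sp t := by
  refine sp_ind (p := fun x => f x ∈ sp t) hx (by simp) h ?_ ?_
  · intro x y hx hy; rw [map_add]; exact add_mem hx hy
  · intro r x hx; rw [map_smul]; exact Submodule.smul_mem _ _ hx

theorem sp_mul {s t v : Set (List (TC m))} (h : ∀ l ∈ s, ∀ l' ∈ t, l ++ l' ∈ v)
    {x y : Ch m} (hx : x ∈ sp s) (hy : y ∈ sp t) : x * y ∈ sp v := by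
  refine sp_map (LinearMap.mulRight (ZMod m) y) (fun l hl => ?_) hx
  refine sp_map (LinearMap.mulLeft (ZMod m) (wd l)) (fun l' hl' => ?_) hy
  simp only [LinearMap.mulLeft_apply, ← wd_append]
  exact wd_mem_sp (h l hl l' hl')

theorem isEnd_rotL {M : ℕ} {a : TC m} (h : IsEnd M a) : IsEnd M (rotL a) := by
  obtain ⟨g, rfl⟩ := h; exact ⟨g + 1, rotL_pt g M⟩

theorem GW_rot {M L : ℕ} {l : List (TC m)} (h : l ∈ GW M L) : l.map rotL ∈ GW M L :=
  ⟨by simpa using h.1, by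
    obtain ⟨a, ha, he⟩ := h.2
    exact ⟨rotL a, List.mem_map_of_mem ha, isEnd_rotL he⟩⟩

theorem rot_mem {M L : ℕ} {x : Ch m} (h : x ∈ sp (GW M L)) : rot x ∈ sp (GW M L) :=
  sp_map rot (fun l hl => by rw [rot_wd]; exact wd_mem_sp (GW_rot hl)) h

theorem kap_mem' {s : Set (List (TC m))} (hs : ∀ x ∈ sp s, rot x ∈ sp s) {x : Ch m}
    (h : x ∈ sp s) (j : ℕ) : kap j x ∈ sp s := by
  have hp : ∀ u, (rot ^ u) x ∈ sp s := by
    intro u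
    induction u with
    | zero => simpa using h
    | succ u ih => rw [pow_succ', Module.End.mul_apply]; exact hs _ ih
  by_cases hj : Even j
  · rw [kap_even hj]; exact Submodule.sum_mem _ fun u _ => hp u
  · rw [kap_odd hj]; exact sub_mem (hs _ h) h

/-- All words of length `L`. -/
def LW (L : ℕ) : Set (List (TC m)) := {l | l.length = L}

theorem rot_mem_LW {L : ℕ} {x : Ch m} (h : x ∈ sp (LW L)) : rot x ∈ sp (LW L) :=
  sp_map rot (fun l hl => by
    rw [rot_wd]; exact wd_mem_sp (by simpa [LW] using hl)) h

theorem ray_mem (M : ℕ) : (ray M : Ch m) ∈ sp (LW 1) :=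
  Submodule.sum_mem _ fun _ _ => wd_mem_sp rfl

theorem cc_pow_mem (q : ℕ) : (cc ^ q : Ch m) ∈ sp (LW q) := by
  induction q with
  | zero => exact wd_mem_sp rfl
  | succ q ih =>
    rw [pow_succ]
    exact sp_mul (v := LW (q + 1)) (t := LW 1)
      (fun l hl l' hl' => by simp_all [LW]) ih (wd_mem_sp rfl)

theorem DD_mem (M j : ℕ) : (DD M j : Ch m) ∈ sp (LW j) := by
  induction j with
  | zero => exact wd_mem_sp rfl
  | succ j ih =>
    rw [DD]
    refine Submodule.smul_mem _ _ (kap_mem' (fun _ => rot_mem_LW) ?_ _)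
    exact sp_mul (fun l hl l' hl' => by simp_all [LW]) ih (ray_mem M)

theorem GW_append_LW {M L q : ℕ} {l l' : List (TC m)} (h : l ∈ GW M L) (h' : l' ∈ LW q) :
    l ++ l' ∈ GW M (L + q) := by
  refine ⟨by rw [List.length_append, h.1, h'], ?_⟩
  obtain ⟨a, ha, he⟩ := h.2
  exact ⟨a, by simp [ha], he⟩

theorem LW_append_GW {M L q : ℕ} {l l' : List (TC m)} (h : l ∈ LW q) (h' : l' ∈ GW M L) :
    l ++ l' ∈ GW M (q + L) := by
  refine ⟨by rw [List.length_append, h'.1, h], ?_⟩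
  obtain ⟨a, ha, he⟩ := h'.2
  exact ⟨a, by simp [ha], he⟩

theorem uu_mem (M : ℕ) : (uu M : Ch m) ∈ sp (GW M 1) :=
  wd_mem_sp ⟨rfl, _, by simp, 0, rfl⟩

theorem core_mem (M j : ℕ) : (core M j : Ch m) ∈ sp (GW M (j + 1)) := by
  induction j with
  | zero =>
    simp only [core, DD, bd_one, zero_mul, smul_zero, zero_add, one_mul]
    exact uu_mem M
  | succ j ih =>
    refine add_mem (Submodule.smul_mem _ _ ?_) ?_
    · rw [bd_DD_succ]
      exact sp_mul (fun l hl l' hl' => GW_append_LW hl hl')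
        (kap_mem' (fun _ => rot_mem) ih _) (ray_mem M)
    · exact sp_mul (fun l hl l' hl' => LW_append_GW hl hl') (DD_mem M (j + 1)) (uu_mem M)

theorem ee_mem (M L j : ℕ) (h : j < L) : (ee M L j : Ch m) ∈ sp (GW M L) := by
  refine sp_mul (fun l hl l' hl' => ?_) (core_mem M j) (cc_pow_mem (L - 1 - j))
  have := GW_append_LW hl hl'
  rwa [show j + 1 + (L - 1 - j) = L by omega] at this

/-- Codimension-one faces: one edge is replaced by one of its end points. -/
inductive Face : List (TC m) → List (TC m) → Prop
  | src (g i l) : Face (pt g i :: l) (.edge g i :: l)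
  | tgt (g i l) : Face (pt g (i + 1) :: l) (.edge g i :: l)
  | cons (a) {l' l} : Face l' l → Face (a :: l') (a :: l)

theorem bd_wd_mem (l : List (TC m)) : bd (wd l) ∈ sp {l' | Face l' l} := by
  induction l with
  | nil => rw [wd_nil, bd_one]; exact zero_mem _
  | cons a l ih =>
    rw [wd_cons, bd_mul, bd_letter, sig_letter, smul_mul_assoc]
    refine add_mem ?_ (Submodule.smul_mem _ _ ?_)
    · cases a with
      | edge g i =>
        rw [dL, sub_mul, ← wd_append, ← wd_append]
        exact sub_mem (wd_mem_sp (.tgt g i l)) (wd_mem_sp (.src g i l))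
      | _ => simp [dL]
    · exact sp_map (LinearMap.mulLeft (ZMod m) (wd [a])) (fun l' hl' => by
        rw [LinearMap.mulLeft_apply, ← wd_append]; exact wd_mem_sp (.cons a hl')) ih

theorem Face.length {l' l : List (TC m)} (h : Face l' l) : l'.length = l.length := by
  induction h <;> simp_all

theorem Face.mem_end {M : ℕ} {l' l : List (TC m)} (h : Face l' l) {a : TC m} (ha : IsEnd M a)
    (hM : M ≠ 0) (hal : a ∈ l) : a ∈ l' := by
  have hne : ∀ g i, a ≠ TC.edge g i := by
    rintro g i rfl
    obtain ⟨g', h⟩ := ha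
    cases M <;> simp [pt] at h
  induction h with
  | src g i l => simp_all
  | tgt g i l => simp_all
  | cons b h ih => simp only [List.mem_cons] at hal ⊢; exact hal.imp_right ih

theorem Face.GW {M L : ℕ} (hM : M ≠ 0) {l' l : List (TC m)} (h : Face l' l) (hl : l ∈ GW M L) :
    l' ∈ GW M L :=
  ⟨h.length.trans hl.1, by
    obtain ⟨a, ha, he⟩ := hl.2
    exact ⟨a, h.mem_end he hM ha, he⟩⟩

theorem Face.append {l₁ l₂ l' : List (TC m)} (h : Face l' (l₁ ++ l₂)) :
    (∃ l₁', Face l₁' l₁ ∧ l' = l₁' ++ l₂) ∨ (∃ l₂', Face l₂' l₂ ∧ l' = l₁ ++ l₂') := by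
  induction l₁ generalizing l' with
  | nil => exact .inr ⟨l', h, rfl⟩
  | cons a l₁ ih =>
    cases h with
    | src g i l => exact .inl ⟨_, .src g i _, rfl⟩
    | tgt g i l => exact .inl ⟨_, .tgt g i _, rfl⟩
    | cons _ h =>
      rcases ih h with ⟨l₁', h₁, rfl⟩ | ⟨l₂', h₂, rfl⟩
      · exact .inl ⟨_, .cons a h₁, rfl⟩
      · exact .inr ⟨_, h₂, rfl⟩

theorem Face.GWs {M L b : ℕ} (hM : M ≠ 0) {l' l : List (TC m)} (h : Face l' l)
    (hl : l ∈ GWs M L b) : l' ∈ GWs M L b := by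
  induction b generalizing l l' with
  | zero => rw [LensTC.GWs, Set.mem_singleton_iff] at hl; subst hl; cases h
  | succ b ih =>
    obtain ⟨l₁, h₁, l₂, h₂, rfl⟩ := hl
    rcases h.append with ⟨l₁', hf, rfl⟩ | ⟨l₂', hf, rfl⟩
    · exact ⟨l₁', hf.GW hM h₁, l₂, h₂, rfl⟩
    · exact ⟨l₁, h₁, l₂', ih hf h₂, rfl⟩

theorem bd_mem_GW {M L : ℕ} (hM : M ≠ 0) {x : Ch m} (h : x ∈ sp (GW M L)) :
    bd x ∈ sp (GW M L) :=
  sp_map bd (fun l hl => Submodule.span_mono (Set.image_mono fun _ hf => Face.GW hM hf hl)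
    (bd_wd_mem l)) h

theorem bd_mem_GWs {M L b : ℕ} (hM : M ≠ 0) {x : Ch m} (h : x ∈ sp (GWs M L b)) :
    bd x ∈ sp (GWs M L b) :=
  sp_map bd (fun l hl => Submodule.span_mono (Set.image_mono fun _ hf => Face.GWs hM hf hl)
    (bd_wd_mem l)) h

theorem GWs_append {M L a b : ℕ} {l l' : List (TC m)} (h : l ∈ GWs M L a) (h' : l' ∈ GWs M L b) :
    l ++ l' ∈ GWs M L (a + b) := by
  induction a generalizing l with
  | zero => rw [GWs, Set.mem_singleton_iff] at h; subst h; simpa using h'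
  | succ a ih =>
    obtain ⟨l₁, h₁, l₂, h₂, rfl⟩ := h
    rw [show a + 1 + b = a + b + 1 by omega, List.append_assoc]
    exact ⟨l₁, h₁, _, ih h₂, rfl⟩

theorem GW_one {M L : ℕ} {l : List (TC m)} (h : l ∈ GW M L) : l ∈ GWs M L 1 :=
  ⟨l, h, [], rfl, by simp⟩

theorem GWs_length {M L b : ℕ} {l : List (TC m)} (h : l ∈ GWs M L b) : l.length = b * L := by
  induction b generalizing l with
  | zero => rw [GWs, Set.mem_singleton_iff] at h; subst h; simp
  | succ b ih =>
    obtain ⟨l₁, h₁, l₂, h₂, rfl⟩ := h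
    rw [List.length_append, h₁.1, ih h₂]; ring

end LensTC

/-! ### Cochains and their evaluation on chains -/

namespace LensTC
variable {m : ℕ} {V : Type*}

/-- The simplicial coboundary of a cochain. Ordered simplices are lists of vertices; a cochain of
degree `d` is seen through its values on lists of length `d + 1`, but no degree is imposed on the
function. The recursion deletes the first vertex and subtracts the coboundary in the remaining
ones. -/
def dl : (List V → ZMod m) → List V → ZMod m
  | _, [] => 0
  | c, a :: l => c l - dl (fun l' => c (a :: l')) l

theorem dl_nil (c : List V → ZMod m) : dl c [] = 0 := by rw [dl]
theorem dl_cons (c : List V → ZMod m) (a : V) (l : List V) :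
    dl c (a :: l) = c l - dl (fun l' => c (a :: l')) l := by rw [dl]

theorem dl_add (c c' : List V → ZMod m) (l : List V) :
    dl (fun l => c l + c' l) l = dl c l + dl c' l := by
  induction l generalizing c c' with
  | nil => simp [dl_nil]
  | cons a l ih => rw [dl_cons, dl_cons, dl_cons, ih]; ring

theorem dl_smul (r : ZMod m) (c : List V → ZMod m) (l : List V) :
    dl (fun l => r * c l) l = r * dl c l := by
  induction l generalizing c with
  | nil => simp [dl_nil]
  | cons a l ih => rw [dl_cons, dl_cons, ih]; ring

/-- Cup product with a `0`-cochain on the left. -/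
def cup0 (p : V → ZMod m) (F : List V → ZMod m) : List V → ZMod m
  | a :: l => p a * F (a :: l)
  | [] => 0

/-- Cup product with a `1`-cochain on the left. -/
def cup1 (p : V → V → ZMod m) (F : List V → ZMod m) : List V → ZMod m
  | a :: b :: l => p a b * F (b :: l)
  | _ => 0

/-- Cup product with a `2`-cochain on the left. -/
def cup2 (p : V → V → V → ZMod m) (F : List V → ZMod m) : List V → ZMod m
  | a :: b :: c :: l => p a b c * F (c :: l)
  | _ => 0

theorem dl_cup0 (p : V → ZMod m) (F : List V → ZMod m) (hF : F [] = 0) (l : List V) :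
    dl (cup0 p F) l = cup1 (fun a b => p b - p a) F l + cup0 p (dl F) l := by
  cases l with
  | nil => simp [dl_nil, cup1, cup0]
  | cons a l =>
    have : (fun l' => cup0 p F (a :: l')) = fun l' => p a * F (a :: l') := rfl
    rw [dl_cons, this, dl_smul]
    cases l with
    | nil => simp [dl_nil, dl_cons, cup1, cup0, hF]
    | cons b l => simp only [cup0, cup1, dl_cons F a]; ring

theorem dl_cup1 (p : V → V → ZMod m) (F : List V → ZMod m) (hF : F [] = 0) (l : List V) :
    dl (cup1 p F) l = cup2 (fun a b c => p b c - p a c + p a b) F l - cup1 p (dl F) l := by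
  cases l with
  | nil => simp [dl_nil, cup1, cup2]
  | cons a l =>
    have : (fun l' => cup1 p F (a :: l')) = cup0 (p a) F := by
      funext l'; cases l' <;> rfl
    rw [dl_cons, this, dl_cup0 _ _ hF]
    match l with
    | [] => simp [cup1, cup2, cup0]
    | [b] => simp [cup1, cup2, cup0]
    | b :: c :: l => simp only [cup0, cup1, cup2]; ring

theorem dl_cup2 (p : V → V → V → ZMod m) (F : List V → ZMod m) (hF : F [] = 0)
    (hp : ∀ a b c d, p b c d - p a c d + p a b d - p a b c = 0) (l : List V) :
    dl (cup2 p F) l = cup2 p (dl F) l := by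
  cases l with
  | nil => simp [dl_nil, cup2]
  | cons a l =>
    have : (fun l' => cup2 p F (a :: l')) = cup1 (p a) F := by
      funext l'
      match l' with
      | [] => rfl
      | [b] => rfl
      | b :: c :: l => rfl
    rw [dl_cons, this, dl_cup1 _ _ hF]
    match l with
    | [] => simp [cup1, cup2]
    | [b] => simp [cup1, cup2]
    | [b, c] => simp [cup1, cup2, dl_nil, dl_cons, hF]
    | b :: c :: d :: l =>
      simp only [cup1, cup2]
      have h := hp a b c d
      linear_combination F (d :: l) * h

theorem cup0_map (p : V → ZMod m) (F : List V → ZMod m) (s : V → V) (l : List V) :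
    cup0 p F (l.map s) = cup0 (fun a => p (s a)) (fun l => F (l.map s)) l := by
  cases l <;> rfl
theorem cup1_map (p : V → V → ZMod m) (F : List V → ZMod m) (s : V → V) (l : List V) :
    cup1 p F (l.map s) = cup1 (fun a b => p (s a) (s b)) (fun l => F (l.map s)) l := by
  match l with
  | [] => rfl
  | [b] => rfl
  | b :: c :: l => rfl
theorem cup2_map (p : V → V → V → ZMod m) (F : List V → ZMod m) (s : V → V) (l : List V) :
    cup2 p F (l.map s) =
      cup2 (fun a b c => p (s a) (s b) (s c)) (fun l => F (l.map s)) l := by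
  match l with
  | [] => rfl
  | [b] => rfl
  | [b, c] => rfl
  | b :: c :: d :: l => rfl

/-- Normalised cochains: those vanishing on lists with two equal adjacent vertices. -/
def Normd (c : List V → ZMod m) : Prop := ∀ l, ¬ l.IsChain (· ≠ ·) → c l = 0

theorem Normd.cup1 {p : V → V → ZMod m} {F : List V → ZMod m} (hF : Normd F)
    (hp : ∀ a, p a a = 0) : Normd (cup1 p F) := by
  intro l hl
  match l with
  | [] => rfl
  | [b] => rfl
  | b :: c :: l =>
    rw [LensTC.cup1]
    by_cases h : b = c
    · subst h; simp [hp]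
    · rw [hF (c :: l) (fun h' => hl (List.isChain_cons_cons.2 ⟨h, h'⟩)), mul_zero]

theorem Normd.cup2 {p : V → V → V → ZMod m} {F : List V → ZMod m} (hF : Normd F)
    (hp : ∀ a b, p a a b = 0) (hp' : ∀ a b, p a b b = 0) : Normd (cup2 p F) := by
  intro l hl
  match l with
  | [] => rfl
  | [b] => rfl
  | [b, c] => rfl
  | b :: c :: d :: l =>
    rw [LensTC.cup2]
    by_cases h : b = c
    · subst h; simp [hp]
    by_cases h2 : c = d
    · subst h2; simp [hp']
    · rw [hF (d :: l) (fun h' => hl (List.isChain_cons_cons.2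
        ⟨h, List.isChain_cons_cons.2 ⟨h2, h'⟩⟩)), mul_zero]

/-- The evaluation of a cochain of degree `d` on a chain of cells, each cell `Q` carrying the
label `lab Q`: the sum, with incidence signs, over flags of faces `Q ⊃ Q' ⊃ ⋯` of length `d`, of
the value of the cochain on the list of labels. This is the pull-back of the cochain to the
barycentric subdivision. -/
noncomputable def pull (lab : List (TC m) → V) : ℕ → (List V → ZMod m) → Ch m →ₗ[ZMod m] ZMod m
  | 0, c => lin fun Q => c [lab Q]
  | d + 1, c => lin fun Q => pull lab d (fun l => c (lab Q :: l)) (dW Q)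

variable (lab : List (TC m) → V)

theorem pull_zero_wd (c : List V → ZMod m) (Q : List (TC m)) :
    pull lab 0 c (wd Q) = c [lab Q] := by rw [pull, lin_wd]

theorem pull_succ_wd (d : ℕ) (c : List V → ZMod m) (Q : List (TC m)) :
    pull lab (d + 1) c (wd Q) = pull lab d (fun l => c (lab Q :: l)) (bd (wd Q)) := by
  rw [pull, lin_wd, bd_wd]

theorem lin_ext {N : Type*} [AddCommGroup N] [Module (ZMod m) N] {f g : Ch m →ₗ[ZMod m] N}
    (h : ∀ l, f (wd l) = g (wd l)) : f = g := by
  refine LinearMap.ext fun x => ?_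
  induction x using ch_ind with
  | h0 => simp
  | ha x x' h h' => simp only [map_add, h, h']
  | hs r x h => simp only [map_smul, h]
  | hw l => exact h l

theorem pull_add (d : ℕ) (c c' : List V → ZMod m) :
    pull lab d (fun l => c l + c' l) = pull lab d c + pull lab d c' := by
  induction d generalizing c c' with
  | zero => exact lin_ext fun l => by simp [pull_zero_wd]
  | succ d ih => exact lin_ext fun l => by simp [pull_succ_wd, ih]

theorem pull_smul (d : ℕ) (r : ZMod m) (c : List V → ZMod m) :
    pull lab d (fun l => r * c l) = r • pull lab d c := by
  induction d generalizing c with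
  | zero => exact lin_ext fun l => by simp [pull_zero_wd]
  | succ d ih => exact lin_ext fun l => by simp [pull_succ_wd, ih]

theorem pull_zero_cochain (d : ℕ) : pull lab d (fun _ => 0) = 0 := by
  have := pull_smul lab d 0 (fun _ => 0)
  simpa using this

theorem pull_sub (d : ℕ) (c c' : List V → ZMod m) :
    pull lab d (fun l => c l - c' l) = pull lab d c - pull lab d c' := by
  rw [eq_sub_iff_add_eq, ← pull_add]
  simp

theorem pull_sum {ι : Type*} (s : Finset ι) (d : ℕ) (c : ι → List V → ZMod m) :
    pull lab d (fun l => ∑ i ∈ s, c i l) = ∑ i ∈ s, pull lab d (c i) := by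
  classical
  induction s using Finset.induction_on with
  | empty => simpa using pull_zero_cochain lab d
  | insert a s ha ih => simp only [Finset.sum_insert ha, pull_add, ih]

/-- Stokes' formula. In positive degree it follows by induction from `bd ∘ bd = 0`; in degree `0`
from the fact that `aug` kills boundaries. -/
theorem stokes (d : ℕ) (c : List V → ZMod m) (x : Ch m) :
    pull lab (d + 1) (dl c) x = pull lab d c (bd x) := by
  have : pull lab (d + 1) (dl c) = pull lab d c ∘ₗ bd := by
    induction d generalizing c with
    | zero =>
      refine lin_ext fun Q => ?_
      have h : pull lab 0 (fun l => dl c (lab Q :: l)) = pull lab 0 c - c [lab Q] • aug :=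
        lin_ext fun Q' => by
          simp [pull_zero_wd, aug_wd, dl_cons, dl_nil]
      rw [pull_succ_wd, h]
      simp [aug_bd]
    | succ d ih =>
      refine lin_ext fun Q => ?_
      have h : (fun l => dl c (lab Q :: l)) = fun l => c l - dl (fun l => c (lab Q :: l)) l := by
        funext l; rw [dl_cons]
      rw [pull_succ_wd, h, pull_sub, ih]
      simp [bd_bd]
  rw [this]; rfl

/-- If the label of a face of a cell is `rel`-related to that of the cell, then a cochain
vanishing on the `rel`-chains of labels that start at `lab Q` evaluates to zero on `Q`. -/
theorem pull_vanish {M L k : ℕ} (hM : M ≠ 0) (rel : V → V → Prop)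
    (hrel : ∀ l ∈ GWs M L k, ∀ l', Face l' l → rel (lab l) (lab l'))
    (d : ℕ) (c : List V → ZMod m)
    (Q : List (TC m)) (hQ : Q ∈ GWs M L k)
    (hc : ∀ l, l.length = d → (lab Q :: l).IsChain rel → (∀ v ∈ lab Q :: l, ∃ l ∈ GWs M L k, v = lab l) →
      c (lab Q :: l) = 0) :
    pull lab d c (wd Q) = 0 := by
  induction d generalizing c Q with
  | zero =>
    rw [pull_zero_wd]; exact hc [] rfl (by simp) (by simpa using ⟨Q, hQ, rfl⟩)
  | succ d ih =>
    rw [pull_succ_wd]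
    refine sp_ind (p := fun x => pull lab d (fun l => c (lab Q :: l)) x = 0) (bd_wd_mem Q)
      (by simp) ?_ ?_ ?_
    · intro Q' hQ'
      refine ih _ Q' (Face.GWs hM hQ' hQ) fun l hl hch hm => ?_
      refine hc _ (by simp [hl]) (List.isChain_cons_cons.2 ⟨hrel Q hQ Q' hQ', hch⟩) ?_
      intro v hv
      rcases List.mem_cons.1 hv with rfl | hv
      · exact ⟨Q, hQ, rfl⟩
      · exact hm v hv
    · intro x y hx hy; rw [map_add, hx, hy, add_zero]
    · intro r x hx; rw [map_smul, hx, smul_zero]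

theorem sig_mem {s : Set (List (TC m))} {x : Ch m} (h : x ∈ sp s) : sig x ∈ sp s :=
  sp_map sig (fun l hl => by rw [sig_wd]; exact Submodule.smul_mem _ _ (wd_mem_sp hl)) h

/-- Functionals agreeing on products of three words agree on products of three chains. -/
theorem sp_ind3 {s t v : Set (List (TC m))} {f g : Ch m →ₗ[ZMod m] ZMod m}
    {h : Ch m →ₗ[ZMod m] Ch m}
    (H : ∀ l₁ ∈ s, ∀ l₂ ∈ t, ∀ l₃ ∈ v,
      f (wd l₁ * h (wd l₂) * wd l₃) = g (wd l₁ * wd l₂ * wd l₃))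
    {x y z : Ch m} (hx : x ∈ sp s) (hy : y ∈ sp t) (hz : z ∈ sp v) :
    f (x * h y * z) = g (x * y * z) := by
  refine sp_ind (p := fun x => f (x * h y * z) = g (x * y * z)) hx (by simp)
    (fun l₁ h₁ => ?_) ?_ ?_
  · refine sp_ind (p := fun y => f (wd l₁ * h y * z) = g (wd l₁ * y * z)) hy (by simp)
      (fun l₂ h₂ => ?_) ?_ ?_
    · refine sp_ind (p := fun z => f (wd l₁ * h (wd l₂) * z) = g (wd l₁ * wd l₂ * z)) hz (by simp)
        (fun l₃ h₃ => H l₁ h₁ l₂ h₂ l₃ h₃) ?_ ?_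
      · intro x y hx hy; simp only [mul_add, map_add, hx, hy]
      · intro r x hx; simp only [mul_smul_comm, map_smul, hx]
    · intro x y hx hy; simp only [mul_add, add_mul, map_add, hx, hy]
    · intro r x hx; simp only [mul_smul_comm, smul_mul_assoc, map_smul, hx]
  · intro x y hx hy; simp only [add_mul, map_add, hx, hy]
  · intro r x hx; simp only [smul_mul_assoc, map_smul, hx]

/-- If rotating block `b` acts on the labels through `s`, then rotating this block of a chain
amounts to pulling the cochain back along `s`. -/
theorem pull_rot {M L b e : ℕ} (hM : M ≠ 0) (s : V → V)
    (hs : ∀ l₁ ∈ GWs M L b, ∀ l₂ ∈ GW M L, ∀ l₃ ∈ GWs M L e,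
      lab (l₁ ++ l₂.map rotL ++ l₃) = s (lab (l₁ ++ l₂ ++ l₃)))
    (d : ℕ) (c : List V → ZMod m) {x y z : Ch m} (hx : x ∈ sp (GWs M L b)) (hy : y ∈ sp (GW M L))
    (hz : z ∈ sp (GWs M L e)) :
    pull lab d c (x * rot y * z) = pull lab d (fun l => c (l.map s)) (x * y * z) := by
  induction d generalizing c x y z with
  | zero =>
    refine sp_ind3 (fun l₁ h₁ l₂ h₂ l₃ h₃ => ?_) hx hy hz
    rw [rot_wd, ← wd_append, ← wd_append, ← wd_append, ← wd_append, pull_zero_wd, pull_zero_wd,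
      hs l₁ h₁ l₂ h₂ l₃ h₃]
    rfl
  | succ d ih =>
    refine sp_ind3 (fun l₁ h₁ l₂ h₂ l₃ h₃ => ?_) hx hy hz
    have e1 : pull lab (d + 1) c (wd l₁ * rot (wd l₂) * wd l₃) =
        pull lab d (fun l => c (s (lab (l₁ ++ l₂ ++ l₃)) :: l))
          (bd (wd l₁ * rot (wd l₂) * wd l₃)) := by
      rw [rot_wd, ← wd_append, ← wd_append, pull_succ_wd, hs l₁ h₁ l₂ h₂ l₃ h₃]
    have e2 : pull lab (d + 1) (fun l => c (l.map s)) (wd l₁ * wd l₂ * wd l₃) =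
        pull lab d (fun l => c (s (lab (l₁ ++ l₂ ++ l₃)) :: l.map s))
          (bd (wd l₁ * wd l₂ * wd l₃)) := by
      rw [← wd_append, ← wd_append, pull_succ_wd]; rfl
    have m1 := wd_mem_sp h₁
    have m2 := wd_mem_sp h₂
    have m3 := wd_mem_sp h₃
    rw [e1, e2, bd_mul, bd_mul, sig_mul, bd_mul, bd_mul, sig_mul, ← rot_bd, ← rot_sig]
    simp only [add_mul, map_add]
    rw [ih _ (bd_mem_GWs hM m1) m2 m3, ih _ (sig_mem m1) (bd_mem_GW hM m2) m3,
      ih _ (sig_mem m1) (sig_mem m2) (bd_mem_GWs hM m3)]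

end LensTC

/-! ### Explicit cocycles for `ℤ/m` -/

namespace LensTC
variable {m : ℕ}

/-- The carry cochain: `1` if the subtraction of the representative of `a` from that of `b`
borrows (`val_sub_eq`), and `0` otherwise. -/
def gam (a b : ZMod m) : ℤ := if b.val < a.val then 1 else 0

/-- The coboundary of `gam`. It depends only on the differences of its arguments (`yyi_add`), and
represents the Bockstein of the class of `(a, b) ↦ b - a`. -/
def yyi (a b c : ZMod m) : ℤ := gam b c - gam a c + gam a b

/-- The reduction of `yyi` modulo `m`. -/
def yy (a b c : ZMod m) : ZMod m := (yyi a b c : ℤ)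

/-- A `1`-cochain whose coboundary is `HH m` times `yy` (`uf_cob`). -/
def uf (a b : ZMod m) : ZMod m := a * (b - a) + (Nat.choose (b - a).val 2 : ℕ)

/-- The class of `m (m - 1) / 2`, which is the sum of all elements of `ℤ/m`. It satisfies `2 * HH
m = 0`, and vanishes for odd `m`. -/
def HH (m : ℕ) : ZMod m := (Nat.choose m 2 : ℕ)

theorem val_sub_eq [NeZero m] (a b : ZMod m) :
    ((b - a).val : ℤ) = b.val - a.val + m * gam a b := by
  unfold gam
  split_ifs with h
  · have h1 := ZMod.val_sub h.le
    have h2 : b - a = -(a - b) := by ring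
    have hne : a - b ≠ 0 := fun h0 => by
      rw [sub_eq_zero.1 h0] at h; exact lt_irrefl _ h
    have : NeZero (a - b) := ⟨hne⟩
    rw [h2, ZMod.val_neg_of_ne_zero, h1]
    have := ZMod.val_lt a
    omega
  · rw [ZMod.val_sub (not_lt.1 h)]; omega

theorem m_mul_yyi [NeZero m] (a b c : ZMod m) :
    (m : ℤ) * yyi a b c = (b - a).val + (c - b).val - (c - a).val := by
  rw [val_sub_eq, val_sub_eq, val_sub_eq, yyi]; ring

theorem yyi_add [NeZero m] (a b c t : ZMod m) : yyi (a + t) (b + t) (c + t) = yyi a b c := by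
  have h : (m : ℤ) ≠ 0 := by exact_mod_cast NeZero.ne m
  apply mul_left_cancel₀ h
  rw [m_mul_yyi, m_mul_yyi]; simp

theorem yy_add [NeZero m] (a b c t : ZMod m) : yy (a + t) (b + t) (c + t) = yy a b c := by
  rw [yy, yyi_add, yy]

theorem yy_cocycle (a b c d : ZMod m) : yy b c d - yy a c d + yy a b d - yy a b c = 0 := by
  simp only [yy, yyi]; push_cast; ring

theorem yy_left (a b : ZMod m) : yy a a b = 0 := by simp [yy, yyi, gam]
theorem yy_right (a b : ZMod m) : yy a b b = 0 := by simp [yy, yyi, gam]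

theorem choose_add_two (a b : ℕ) :
    Nat.choose (a + b) 2 = Nat.choose a 2 + Nat.choose b 2 + a * b := by
  induction b with
  | zero => simp
  | succ b ih =>
    rw [← add_assoc, Nat.choose_succ_succ' (a + b) 1, Nat.choose_succ_succ' b 1, ih]
    simp only [Nat.choose_one_right, mul_add]; ring

theorem uf_cob [NeZero m] (a b c : ZMod m) :
    uf b c - uf a c + uf a b = HH m * yy a b c := by
  have hy := m_mul_yyi a b c
  have h1 := ZMod.val_lt (b - a)
  have h2 := ZMod.val_lt (c - b)
  have h3 := ZMod.val_lt (c - a)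
  have hx : b - a = ((b - a).val : ZMod m) := by simp
  have hz : c - b = ((c - b).val : ZMod m) := by simp
  -- By `m_mul_yyi`, `m * yyi a b c` is a combination of three representatives which lies strictly
  -- between `-m` and `2 m`.
  have hval : yyi a b c = 0 ∨ yyi a b c = 1 := by
    have hm : (0 : ℤ) < m := by exact_mod_cast NeZero.pos m
    have hlo : -1 < yyi a b c := by
      by_contra h
      have : (m : ℤ) * yyi a b c ≤ m * (-1) := by gcongr; omega
      omega
    have hhi : yyi a b c < 2 := by
      by_contra h
      have : (m : ℤ) * 2 ≤ m * yyi a b c := by gcongr; omega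
      omega
    omega
  have hcast : ((Nat.choose ((b - a).val + (c - b).val) 2 : ℕ) : ZMod m) =
      (Nat.choose (c - a).val 2 : ℕ) + HH m * yy a b c := by
    rcases hval with h | h
    · have : (b - a).val + (c - b).val = (c - a).val := by rw [h] at hy; omega
      rw [this, yy, h]; simp
    · have : (b - a).val + (c - b).val = (c - a).val + m := by rw [h] at hy; omega
      rw [this, choose_add_two, yy, h, HH]; push_cast; simp
  rw [choose_add_two] at hcast
  push_cast at hcast
  rw [← hx, ← hz] at hcast
  simp only [uf]
  linear_combination hcast

theorem two_HH : 2 * HH m = 0 := by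
  have : 2 * Nat.choose m 2 = m * (m - 1) := by
    rw [Nat.choose_two_right, Nat.mul_div_cancel' (Nat.even_mul_pred_self m).two_dvd]
  have h : ((2 * Nat.choose m 2 : ℕ) : ZMod m) = 0 := by rw [this]; simp
  simpa [HH] using h

theorem sum_range_cast [NeZero m] {A : Type*} [AddCommMonoid A] (f : ZMod m → A) :
    ∑ u ∈ Finset.range m, f u = ∑ x, f x := by
  refine Finset.sum_nbij (fun u => (u : ZMod m)) (by simp) ?_ ?_ (by simp)
  · intro a ha b hb h
    simp only [Finset.coe_range, Set.mem_Iio] at ha hb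
    have := congrArg ZMod.val h
    simpa [ZMod.val_natCast, Nat.mod_eq_of_lt ha, Nat.mod_eq_of_lt hb] using this
  · intro x _
    exact ⟨x.val, by simpa using ZMod.val_lt x, by simp⟩

theorem sum_shift [NeZero m] {A : Type*} [AddCommMonoid A] (f : ZMod m → A) (ε a : ZMod m)
    (hε : ε = 1 ∨ ε = -1) :
    ∑ u ∈ Finset.range m, f (a + u * ε) = ∑ x, f x := by
  rw [sum_range_cast (fun u : ZMod m => f (a + u * ε))]
  rcases hε with rfl | rfl
  · simpa using Equiv.sum_comp (Equiv.addLeft a) f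
  · have := Equiv.sum_comp (Equiv.subLeft a) f
    simpa [sub_eq_add_neg] using this

/-- Along an orbit of `ℤ/m` the number of borrows is the representative of `b - a`: the
differences of representatives telescope. -/
theorem sum_gam [NeZero m] (ε a b : ZMod m) (hε : ε = 1 ∨ ε = -1) :
    ∑ u ∈ Finset.range m, gam (a + (u : ZMod m) * ε) (b + (u : ZMod m) * ε) = (b - a).val := by
  have h : (m : ℤ) ≠ 0 := by exact_mod_cast NeZero.ne m
  apply mul_left_cancel₀ h
  rw [Finset.mul_sum]
  have : ∀ u : ℕ, (m : ℤ) * gam (a + (u : ZMod m) * ε) (b + (u : ZMod m) * ε) =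
      (b - a).val - ((b + (u : ZMod m) * ε).val : ℤ) + ((a + (u : ZMod m) * ε).val : ℤ) := by
    intro u
    have := val_sub_eq (a + (u : ZMod m) * ε) (b + (u : ZMod m) * ε)
    rw [add_sub_add_right_eq_sub] at this
    linarith
  simp only [this, Finset.sum_add_distrib, Finset.sum_sub_distrib]
  rw [sum_shift (fun x : ZMod m => (x.val : ℤ)) ε a hε,
    sum_shift (fun x : ZMod m => (x.val : ℤ)) ε b hε]
  simp

theorem sum_gam_cast [NeZero m] (ε a b : ZMod m) (hε : ε = 1 ∨ ε = -1) :
    ∑ u ∈ Finset.range m, ((gam (a + (u : ZMod m) * ε) (b + (u : ZMod m) * ε) : ℤ) : ZMod m) = b - a := by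
  rw [← Int.cast_sum, sum_gam ε a b hε]; simp

theorem sum_id_cast (ε a : ZMod m) (hε : ε = 1 ∨ ε = -1) :
    ∑ u ∈ Finset.range m, (a + (u : ZMod m) * ε) = HH m := by
  have h : ∑ u ∈ Finset.range m, (u : ZMod m) = HH m := by
    rw [← Nat.cast_sum, Finset.sum_range_id, HH, Nat.choose_two_right]
  rw [Finset.sum_add_distrib, ← Finset.sum_mul, h]
  rcases hε with rfl | rfl
  · simp
  · have := two_HH (m := m)
    simp only [Finset.sum_const, Finset.card_range, nsmul_eq_mul, CharP.cast_eq_zero, zero_mul,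
      zero_add]
    linear_combination -this

variable {V : Type*}

/-- The cup product of `q` copies of `yy`, pulled back along `θ`, with `F`. -/
def ev (θ : V → ZMod m) (q : ℕ) (F : List V → ZMod m) : List V → ZMod m :=
  (cup2 fun a b c => yy (θ a) (θ b) (θ c))^[q] F

theorem ev_zero (θ : V → ZMod m) (F : List V → ZMod m) : ev θ 0 F = F := rfl
theorem ev_succ (θ : V → ZMod m) (q : ℕ) (F : List V → ZMod m) :
    ev θ (q + 1) F = cup2 (fun a b c => yy (θ a) (θ b) (θ c)) (ev θ q F) :=
  Function.iterate_succ_apply' _ _ _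
theorem ev_succ' (θ : V → ZMod m) (q : ℕ) (F : List V → ZMod m) :
    ev θ (q + 1) F = ev θ q (cup2 (fun a b c => yy (θ a) (θ b) (θ c)) F) :=
  Function.iterate_succ_apply _ _ _

theorem ev_nil (θ : V → ZMod m) (q : ℕ) {F : List V → ZMod m} (hF : F [] = 0) :
    ev θ q F [] = 0 := by
  cases q with
  | zero => exact hF
  | succ q => rw [ev_succ]; rfl

theorem dl_ev (θ : V → ZMod m) (q : ℕ) {F : List V → ZMod m} (hF : F [] = 0) :
    dl (ev θ q F) = ev θ q (dl F) := by
  induction q with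
  | zero => rfl
  | succ q ih =>
    funext l
    rw [ev_succ, ev_succ, dl_cup2 (fun a b c => yy (θ a) (θ b) (θ c)) _ (ev_nil θ q hF)
      (fun a b c d => yy_cocycle _ _ _ _), ih]

theorem cup2_lin (p : V → V → V → ZMod m) (r : ZMod m) (F G : List V → ZMod m) (l : List V) :
    cup2 p (fun l => F l + r * G l) l = cup2 p F l + r * cup2 p G l := by
  match l with
  | [] => simp [cup2]
  | [b] => simp [cup2]
  | [b, c] => simp [cup2]
  | b :: c :: d :: l => simp only [cup2]; ring

theorem ev_lin (θ : V → ZMod m) (q : ℕ) (r : ZMod m) (F G : List V → ZMod m) (l : List V) :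
    ev θ q (fun l => F l + r * G l) l = ev θ q F l + r * ev θ q G l := by
  induction q generalizing l with
  | zero => rfl
  | succ q ih =>
    rw [ev_succ, funext ih, cup2_lin, ev_succ, ev_succ]

theorem ev_zero_fun (θ : V → ZMod m) (q : ℕ) (l : List V) : ev θ q (fun _ => 0) l = 0 := by
  have := ev_lin θ q (-1) (fun _ => 0) (fun _ => 0) l
  simpa using this

theorem ev_smul (θ : V → ZMod m) (q : ℕ) (r : ZMod m) (G : List V → ZMod m) (l : List V) :
    ev θ q (fun l => r * G l) l = r * ev θ q G l := by
  have := ev_lin θ q r (fun _ => 0) G l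
  simpa [ev_zero_fun] using this

theorem ev_sum (θ : V → ZMod m) (q : ℕ) {ι : Type*} (s : Finset ι) (G : ι → List V → ZMod m)
    (l : List V) : ev θ q (fun l => ∑ i ∈ s, G i l) l = ∑ i ∈ s, ev θ q (G i) l := by
  classical
  induction s using Finset.induction_on with
  | empty => simp [ev_zero_fun]
  | insert a s ha ih =>
    simp only [Finset.sum_insert ha, ← ih]
    simpa using ev_lin θ q 1 (G a) (fun l => ∑ i ∈ s, G i l) l

theorem ev_map [NeZero m] (θ : V → ZMod m) (q : ℕ) (F : List V → ZMod m) (s : V → V) (t : ZMod m)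
    (hs : ∀ v, θ (s v) = θ v + t) (l : List V) :
    ev θ q F (l.map s) = ev θ q (fun l => F (l.map s)) l := by
  induction q generalizing l with
  | zero => rfl
  | succ q ih =>
    rw [ev_succ, cup2_map, ev_succ, funext ih]
    simp only [hs, yy_add]

theorem Normd.ev {θ : V → ZMod m} {q : ℕ} {F : List V → ZMod m} (hF : Normd F) :
    Normd (ev θ q F) := by
  induction q with
  | zero => exact hF
  | succ q ih => rw [ev_succ]; exact ih.cup2 (fun _ _ => yy_left _ _) (fun _ _ => yy_right _ _)

/-- Writing `x (a, b) = θ b - θ a` and `y` for `yy` pulled back along `θ`: the cochain `y^q ∪ x ∪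
F`. -/
def od (θ : V → ZMod m) (q : ℕ) (F : List V → ZMod m) : List V → ZMod m :=
  ev θ q (cup1 (fun a b => θ b - θ a) F)

/-- The cochain `y^q ∪ θ ∪ F`, a primitive of `y^q ∪ x ∪ F` when `F` is a cocycle (`dl_pe`). -/
def pe (θ : V → ZMod m) (q : ℕ) (F : List V → ZMod m) : List V → ZMod m :=
  ev θ q (cup0 θ F)

/-- The cochain `y^q ∪ gam ∪ F`, with `gam` pulled back along `θ`: a primitive of `y^(q+1) ∪ F`
when `F` is a cocycle (`dl_po`). -/
def po (θ : V → ZMod m) (q : ℕ) (F : List V → ZMod m) : List V → ZMod m :=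
  ev θ q (cup1 (fun a b => ((gam (θ a) (θ b) : ℤ) : ZMod m)) F)

/-- The cochain `y^q ∪ uf ∪ F`, with `uf` pulled back along `θ`: a primitive of `HH m • (y^(q+1) ∪
F)` when `F` is a cocycle (`dl_pu`). -/
def pu (θ : V → ZMod m) (q : ℕ) (F : List V → ZMod m) : List V → ZMod m :=
  ev θ q (cup1 (fun a b => uf (θ a) (θ b)) F)

theorem cup1_zero (p : V → V → ZMod m) (l : List V) : cup1 p (fun _ => 0) l = 0 := by
  match l with
  | [] => rfl
  | [b] => rfl
  | b :: c :: l => simp [cup1]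

theorem cup0_zero (p : V → ZMod m) (l : List V) : cup0 p (fun _ => 0) l = 0 := by
  cases l <;> simp [cup0]

section
variable {θ : V → ZMod m} {F : List V → ZMod m} (hF0 : F [] = 0) (hF : dl F = fun _ => 0)
include hF0 hF

theorem dl_evF (q : ℕ) : dl (ev θ q F) = fun _ => 0 := by
  funext l; rw [dl_ev _ _ hF0, hF, ev_zero_fun]

theorem dl_od (q : ℕ) : dl (od θ q F) = fun _ => 0 := by
  rw [od, dl_ev _ _ rfl]
  have : dl (cup1 (fun a b => θ b - θ a) F) = fun _ => 0 := by
    funext l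
    rw [dl_cup1 _ _ hF0, hF, cup1_zero]
    have : (fun a b c => θ c - θ b - (θ c - θ a) + (θ b - θ a)) = fun _ _ _ : V => (0 : ZMod m) := by
      funext a b c; ring
    rw [this]
    match l with
    | [] => simp [cup2]
    | [b] => simp [cup2]
    | [b, c] => simp [cup2]
    | b :: c :: d :: l => simp [cup2]
  rw [this]; funext l; rw [ev_zero_fun]

theorem dl_pe (q : ℕ) : dl (pe θ q F) = od θ q F := by
  rw [pe, dl_ev _ _ rfl, od]
  congr 1
  funext l
  rw [dl_cup0 _ _ hF0, hF, cup0_zero, add_zero]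

theorem dl_po (q : ℕ) : dl (po θ q F) = ev θ (q + 1) F := by
  rw [po, dl_ev _ _ rfl, ev_succ']
  congr 1
  funext l
  rw [dl_cup1 _ _ hF0, hF, cup1_zero, sub_zero]
  simp only [yy, yyi, Int.cast_add, Int.cast_sub]

theorem dl_pu [NeZero m] (q : ℕ) : dl (pu θ q F) = fun l => HH m * ev θ (q + 1) F l := by
  funext l
  rw [pu, dl_ev _ _ rfl, ev_succ', ← ev_smul]
  congr 1
  funext l
  rw [dl_cup1 _ _ hF0, hF, cup1_zero, sub_zero]
  simp only [uf_cob]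
  match l with
  | [] => simp [cup2]
  | [b] => simp [cup2]
  | [b, c] => simp [cup2]
  | b :: c :: d :: l => simp only [cup2]; ring
end

section
variable [NeZero m] {θ : V → ZMod m} {F : List V → ZMod m} {s : V → V} {t : ZMod m}
  (hs : ∀ v, θ (s v) = θ v + t) (hF : ∀ l, F (l.map s) = F l)
include hs hF

theorem ev_inv (q : ℕ) (l : List V) : ev θ q F (l.map s) = ev θ q F l := by
  rw [ev_map θ q F s t hs]; simp only [hF]

theorem od_inv (q : ℕ) (l : List V) : od θ q F (l.map s) = od θ q F l := by
  rw [od, ev_map θ q _ s t hs]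
  congr 1; funext l
  rw [cup1_map]; simp only [hs, hF, add_sub_add_right_eq_sub]

theorem po_map (q : ℕ) (l : List V) : po θ q F (l.map s) =
    ev θ q (cup1 (fun a b => ((gam (θ a + t) (θ b + t) : ℤ) : ZMod m)) F) l := by
  rw [po, ev_map θ q _ s t hs]
  congr 1; funext l
  rw [cup1_map]; simp only [hs, hF]

theorem pe_map (q : ℕ) (l : List V) : pe θ q F (l.map s) =
    ev θ q (cup0 (fun a => θ a + t) F) l := by
  rw [pe, ev_map θ q _ s t hs]
  congr 1; funext l
  rw [cup0_map]; simp only [hs, hF]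

theorem pu_map (q : ℕ) (l : List V) : pu θ q F (l.map s) =
    pu θ q F l + t * od θ q F l := by
  rw [pu, ev_map θ q _ s t hs, od, ← ev_lin]
  congr 1; funext l
  rw [cup1_map]; simp only [hs, hF, uf, add_sub_add_right_eq_sub]
  match l with
  | [] => simp [cup1]
  | [b] => simp [cup1]
  | b :: c :: l => simp only [cup1]; ring
end

/-- The operator on cochains dual to `kap j` when the generator acts on labels through `s`. -/
def opk (m j : ℕ) (s : V → V) (c : List V → ZMod m) : List V → ZMod m :=
  if Even j then fun l => ∑ u ∈ Finset.range m, c (l.map s^[u]) else fun l => c (l.map s) - c l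

section
variable [NeZero m] {θ : V → ZMod m} {F : List V → ZMod m} {s : V → V} {t : ZMod m}
  (ht : t = 1 ∨ t = -1) (hs : ∀ v, θ (s v) = θ v + t) (hF : ∀ l, F (l.map s) = F l)

omit [NeZero m] in
include hs in
theorem iter_shift (u : ℕ) (v : V) : θ (s^[u] v) = θ v + u * t := by
  induction u with
  | zero => simp
  | succ u ih => rw [Function.iterate_succ_apply', hs, ih]; push_cast; ring

omit [NeZero m] in
include hF in
theorem iter_inv (u : ℕ) (l : List V) : F (l.map s^[u]) = F l := by
  induction u with
  | zero => simp
  | succ u ih => rw [Function.iterate_succ', ← List.map_map, hF, ih]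

include ht hs hF

theorem opk_po {j : ℕ} (hj : Even j) (q : ℕ) : opk m j s (po θ q F) = od θ q F := by
  funext l
  rw [opk, if_pos hj]
  have : ∀ u : ℕ, po θ q F (l.map s^[u]) = _ :=
    fun u => po_map (iter_shift hs u) (iter_inv hF u) q l
  simp only [this]
  rw [← ev_sum, od]
  congr 1
  funext l
  match l with
  | [] => simp [cup1]
  | [b] => simp [cup1]
  | b :: c :: l =>
    simp only [cup1]
    rw [← Finset.sum_mul, sum_gam_cast t _ _ ht]

theorem opk_pe_even {j : ℕ} (hj : Even j) (q : ℕ) :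
    opk m j s (pe θ q F) = fun l => HH m * ev θ q (cup0 (fun _ => 1) F) l := by
  funext l
  rw [opk, if_pos hj]
  have : ∀ u : ℕ, pe θ q F (l.map s^[u]) = _ :=
    fun u => pe_map (iter_shift hs u) (iter_inv hF u) q l
  simp only [this]
  rw [← ev_sum, ← ev_smul]
  congr 1
  funext l
  match l with
  | [] => simp [cup0]
  | b :: l =>
    simp only [cup0]
    rw [← Finset.sum_mul, sum_id_cast t _ ht]; ring

omit ht in
theorem opk_pe_odd {j : ℕ} (hj : ¬ Even j) (q : ℕ) :
    opk m j s (pe θ q F) = fun l => t * ev θ q (cup0 (fun _ => 1) F) l := by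
  funext l
  rw [opk, if_neg hj]
  rw [pe_map hs hF, pe, ← ev_smul, sub_eq_iff_eq_add, add_comm]
  have := ev_lin θ q 1 (cup0 θ F) (fun l => t * cup0 (fun _ => 1) F l) l
  simp only [one_mul] at this
  rw [← this]
  congr 1
  funext l
  cases l with
  | nil => simp [cup0]
  | cons b l => simp only [cup0]; ring

omit ht in
theorem opk_pu {j : ℕ} (hj : ¬ Even j) (q : ℕ) :
    opk m j s (pu θ q F) = fun l => t * od θ q F l := by
  funext l
  rw [opk, if_neg hj]
  rw [pu_map hs hF]; ring
end

theorem cup0_one {F : List V → ZMod m} (hF : F [] = 0) : cup0 (fun _ => 1) F = F := by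
  funext l
  cases l <;> simp [cup0, hF]

end LensTC

/-! ### The evaluation of the test cocycle -/

namespace LensTC
variable {m : ℕ}

/-- A labelling of the cells by `V` that is compatible with the rotations of the `k` blocks: `s b`
is the effect on labels of rotating block `b`. For `1 ≤ a < k`, `th a` is the `a`-th
`ℤ/m`-coordinate of a label; rotating block `0` raises it by `1`, rotating block `a` lowers it by
`1`, and the other rotations leave it unchanged. -/
structure LabSys (m M L k : ℕ) (V : Type*) where
  lab : List (TC m) → V
  s : ℕ → V → V
  th : ℕ → V → ZMod m
  hs : ∀ b e, b + 1 + e = k → ∀ l₁ ∈ GWs M L b, ∀ l₂ ∈ GW M L, ∀ l₃ ∈ GWs M L e,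
    lab (l₁ ++ l₂.map rotL ++ l₃) = s b (lab (l₁ ++ l₂ ++ l₃))
  th_zero : ∀ a, 1 ≤ a → a < k → ∀ v, th a (s 0 v) = th a v + 1
  th_self : ∀ a, 1 ≤ a → a < k → ∀ v, th a (s a v) = th a v + (-1)
  th_other : ∀ a b, 1 ≤ a → a < k → b < k → b ≠ 0 → b ≠ a → ∀ v, th a (s b v) = th a v

/-- The chain with `bd (ee M L j) = kap j (ep M L j)` (`bd_ee`): the previous `ee`, and `0` for `j
= 0`. -/
noncomputable def ep (M L : ℕ) : ℕ → Ch m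
  | 0 => 0
  | j + 1 => ee M L j

theorem bd_ee (M L j : ℕ) (h : j < L) : bd (ee M L j : Ch m) = kap j (ep M L j) := by
  cases j with
  | zero => rw [bd_ee_zero, ep, map_zero]
  | succ j => rw [bd_ee_succ M L j h, ep]

theorem ep_mem (M L j : ℕ) (h : j < L) : (ep M L j : Ch m) ∈ sp (GW M L) := by
  cases j with
  | zero => exact zero_mem _
  | succ j => exact ee_mem M L j (by omega)

namespace LabSys
variable {M L k : ℕ} {V : Type*} (S : LabSys m M L k V)

theorem th_shift (a b : ℕ) (ha : 1 ≤ a) (hak : a < k) (hb : b < k) :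
    ∃ t : ZMod m, ∀ v, S.th a (S.s b v) = S.th a v + t := by
  by_cases h0 : b = 0
  · subst h0; exact ⟨1, S.th_zero a ha hak⟩
  by_cases h1 : b = a
  · subst h1; exact ⟨-1, S.th_self b ha hak⟩
  · exact ⟨0, fun v => by rw [S.th_other a b ha hak hb h0 h1, add_zero]⟩

/-- Transfer of `kap j` on one block of a chain to the operator `opk` on cochains. -/
theorem pull_kap (hM : M ≠ 0) {b e : ℕ} (hk : b + 1 + e = k) (d j : ℕ)
    (c : List V → ZMod m) {x y z : Ch m} (hx : x ∈ sp (GWs M L b)) (hy : y ∈ sp (GW M L))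
    (hz : z ∈ sp (GWs M L e)) :
    pull S.lab d c (x * kap j y * z) = pull S.lab d (opk m j (S.s b) c) (x * y * z) := by
  have hp : ∀ u (c : List V → ZMod m) (y : Ch m), y ∈ sp (GW M L) →
      pull S.lab d c (x * (rot ^ u) y * z) = pull S.lab d (fun l => c (l.map (S.s b)^[u])) (x * y * z) := by
    intro u
    induction u with
    | zero => intro c y _; simp
    | succ u ih =>
      intro c y hy
      rw [pow_succ, Module.End.mul_apply, ih _ _ (rot_mem hy),
        pull_rot S.lab hM (S.s b) (S.hs b e hk) d _ hx hy hz]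
      simp only [List.map_map, Function.iterate_succ]
  by_cases hj : Even j
  · rw [kap_even hj, opk, if_pos hj, pull_sum, LinearMap.sum_apply, Finset.mul_sum, Finset.sum_mul,
      map_sum]
    exact Finset.sum_congr rfl fun u _ => hp u c y hy
  · rw [kap_odd hj, opk, if_neg hj, pull_sub, LinearMap.sub_apply, mul_sub, sub_mul, map_sub]
    have := hp 1 c y hy
    simp only [pow_one, Function.iterate_one] at this
    rw [this]

theorem pow_mem {x : Ch m} (hx : x ∈ sp (GW M L)) (q : ℕ) : x ^ q ∈ sp (GWs M L q) := by
  induction q with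
  | zero => exact wd_mem_sp rfl
  | succ q ih =>
    rw [pow_succ']
    exact sp_mul (s := GW M L) (t := GWs M L q) (v := GWs M L (q + 1))
      (fun l hl l' hl' => ⟨l, hl, l', hl', rfl⟩) hx ih

theorem GW_sub (x : Ch m) (hx : x ∈ sp (GW M L)) : x ∈ sp (GWs M L 1) :=
  Submodule.span_mono (Set.image_mono fun _ h => GW_one h) hx

theorem mul_mem {a b : ℕ} {x y : Ch m} (hx : x ∈ sp (GWs M L a)) (hy : y ∈ sp (GWs M L b)) :
    x * y ∈ sp (GWs M L (a + b)) :=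
  sp_mul (fun _ hl _ hl' => GWs_append hl hl') hx hy

/-- A cochain invariant under the rotations of the last `q` blocks does not see the boundary of
`ee (2 * n + 1) ^ q`, since `kap (2 * n + 1) = rot - 1`. -/
theorem tail_zero (hM : M ≠ 0) (n : ℕ) (hn : 2 * n + 1 < L) (d : ℕ)
    (q : ℕ) (b : ℕ) (hb : b + q = k) (c : List V → ZMod m)
    (hc : ∀ b', b ≤ b' → b' < k → ∀ l, c (l.map (S.s b')) = c l)
    (x : Ch m) (hx : x ∈ sp (GWs M L b)) :
    pull S.lab d c (x * bd (ee M L (2 * n + 1) ^ q)) = 0 := by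
  induction q generalizing b x with
  | zero => simp [bd_one]
  | succ q ih =>
    have he := ee_mem (m := m) M L (2 * n + 1) hn
    rw [pow_succ', bd_mul, bd_ee _ _ _ hn, mul_add, map_add, ← mul_assoc, ← mul_assoc,
      S.pull_kap hM (by omega) d _ c hx (ep_mem _ _ _ hn) (pow_mem he q),
      ih (b + 1) (by omega) (fun b' h h' => hc b' (by omega) h')
        (x * sig (ee M L (2 * n + 1))) (mul_mem hx (GW_sub _ (sig_mem he))), add_zero]
    have : opk m (2 * n + 1) (S.s b) c = fun _ => 0 := by
      rw [opk, if_neg (by simp)]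
      funext l
      rw [hc b le_rfl (by omega), sub_self]
    rw [this, pull_zero_cochain]; rfl

/-- The test chain `x × ee_0^a × y × ee_{2n+1}^q` in a product of `a + 2 + q` joins. -/
noncomputable def Bg (M L n a q : ℕ) (x y : Ch m) : Ch m :=
  x * ee M L 0 ^ a * y * ee M L (2 * n + 1) ^ q

theorem sig_pow_zero (a : ℕ) : sig (ee M L 0 ^ a : Ch m) = ee M L 0 ^ a := by
  induction a with
  | zero => simp [sig_one]
  | succ a ih => rw [pow_succ, sig_mul, ih, sig_ee]; simp

theorem bd_pow_zero (a : ℕ) : bd (ee M L 0 ^ a : Ch m) = 0 := by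
  induction a with
  | zero => simp [bd_one]
  | succ a ih => rw [pow_succ, bd_mul, ih, bd_ee_zero]; simp

/-- Stokes' formula on the test chain: the factors `ee i` and `ee j` contribute through `kap`, and
the remaining factors do not contribute. -/
theorem bdry (hM : M ≠ 0) (n : ℕ) (hn : 2 * n + 1 < L) (a q : ℕ) (hk : a + 2 + q = k)
    (d : ℕ) (c : List V → ZMod m) (hc : ∀ b, a + 1 < b → b < k → ∀ l, c (l.map (S.s b)) = c l)
    (i j : ℕ) (hi : i < L) (hj : j < L) :
    pull S.lab (d + 1) (dl c) (Bg M L n a q (ee M L i) (ee M L j)) =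
      pull S.lab d (opk m i (S.s 0) c) (Bg M L n a q (ep M L i) (ee M L j)) +
      (-1) ^ i * pull S.lab d (opk m j (S.s (a + 1)) c) (Bg M L n a q (ee M L i) (ep M L j)) := by
  have hz := ee_mem (m := m) M L 0 (by omega)
  have hei := ee_mem (m := m) M L i hi
  have hej := ee_mem (m := m) M L j hj
  have hw := ee_mem (m := m) M L (2 * n + 1) hn
  have hpi := ep_mem (m := m) M L i hi
  have hpj := ep_mem (m := m) M L j hj
  have t1 := S.pull_kap hM (b := 0) (e := a + 1 + q) (by omega) d i c (x := 1) (wd_mem_sp rfl) hpi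
    (mul_mem (mul_mem (pow_mem hz a) (GW_sub _ hej)) (pow_mem hw q))
  have t2 := S.pull_kap hM (b := a + 1) (e := q) (by omega) d j c
    (x := ee M L i * ee M L 0 ^ a)
    (by rw [add_comm]; exact mul_mem (GW_sub _ hei) (pow_mem hz a)) hpj (pow_mem hw q)
  have t3 := S.tail_zero hM n hn d q (a + 2) hk c (fun b h h' => hc b (by omega) h')
    (ee M L i * ee M L 0 ^ a * ee M L j) (by
      rw [show a + 2 = 1 + a + 1 by omega]
      exact mul_mem (mul_mem (GW_sub _ hei) (pow_mem hz a)) (GW_sub _ hej))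
  have hb : bd (Bg M L n a q (ee M L i) (ee M L j) : Ch m) =
      1 * kap i (ep M L i) * (ee M L 0 ^ a * ee M L j * ee M L (2 * n + 1) ^ q) +
      (-1 : ZMod m) ^ i • (ee M L i * ee M L 0 ^ a * kap j (ep M L j) * ee M L (2 * n + 1) ^ q) +
      ((-1 : ZMod m) ^ i * (-1) ^ j) •
        (ee M L i * ee M L 0 ^ a * ee M L j * bd (ee M L (2 * n + 1) ^ q)) := by
    rw [Bg, bd_mul, bd_mul, bd_mul, bd_pow_zero, sig_mul, sig_mul, sig_pow_zero, sig_ee, sig_ee,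
      bd_ee _ _ _ hi, bd_ee _ _ _ hj]
    simp only [sig_mul, sig_pow_zero, sig_ee, mul_zero, add_zero, add_mul, smul_mul_assoc,
      mul_smul_comm, mul_assoc, one_mul, mul_smul]
    congr 1
    try rw [smul_comm ((-1 : ZMod m) ^ j)]
  rw [stokes, hb, map_add, map_add, map_smul, map_smul, t1, t2, t3]
  simp only [Bg, one_mul, mul_assoc, smul_eq_mul, mul_zero, add_zero]

/-- The tail cocycle `∏_{c=a}^{a+q-1} y_c^n x_c`, where `x_c`, `y_c` are the cochains belonging to
`th c`. For `q = 0` it is the unit `0`-cochain. -/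
def Ft (n : ℕ) : ℕ → ℕ → List V → ZMod m
  | _, 0 => fun l => if l.length = 1 then 1 else 0
  | a, q + 1 => od (S.th a) n (Ft n (a + 1) q)

theorem Ft_nil (n a q : ℕ) : S.Ft n a q [] = 0 := by
  cases q with
  | zero => rfl
  | succ q => exact ev_nil _ _ rfl

theorem dl_Ft (n a q : ℕ) : dl (S.Ft n a q) = fun _ => 0 := by
  induction q generalizing a with
  | zero =>
    funext l
    match l with
    | [] => rfl
    | [b] => simp [dl_cons, dl_nil, Ft]
    | [b, c] => simp [dl_cons, dl_nil, Ft]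
    | b :: c :: d :: l =>
      have h0 : ∀ l : List V, dl (fun _ : List V => (0 : ZMod m)) l = 0 := by
        intro l
        have := dl_smul (0 : ZMod m) (fun _ => 0) l
        simpa using this
      simp [dl_cons, Ft, h0]
  | succ q ih => exact dl_od (S.Ft_nil n (a + 1) q) (ih (a + 1)) n

theorem Ft_inv [NeZero m] (n a q : ℕ) (ha : 1 ≤ a) (haq : a + q ≤ k) (b : ℕ) (hb : b < k)
    (l : List V) : S.Ft n a q (l.map (S.s b)) = S.Ft n a q l := by
  induction q generalizing a l with
  | zero => simp [Ft]
  | succ q ih =>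
    obtain ⟨t, ht⟩ := S.th_shift a b ha (by omega) hb
    exact od_inv ht (ih (a + 1) (by omega) (by omega)) n l

theorem Ft_normd (n a q : ℕ) : Normd (S.Ft n a q) := by
  induction q generalizing a with
  | zero =>
    intro l hl
    match l with
    | [] => rfl
    | [b] => simp at hl
    | b :: c :: l => simp [Ft]
  | succ q ih => exact ((ih (a + 1)).cup1 fun a => sub_self _).ev

section level
variable [NeZero m] (hM : M ≠ 0) (n : ℕ) (hn : L = 2 * n + 2) (a q : ℕ) (hk : a + 2 + q = k)
include hM hn hk

/-- The value on the test chain of `y_{a+1}^r` times the tail cocycle of the last `q` blocks. -/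
noncomputable def vE (n a q r : ℕ) (x y : Ch m) : ZMod m :=
  pull S.lab (2 * r + q * (2 * n + 1)) (ev (S.th (a + 1)) r (S.Ft n (a + 2) q)) (Bg M L n a q x y)

/-- The value on the test chain of `y_{a+1}^r x_{a+1}` times the tail cocycle of the last `q`
blocks. -/
noncomputable def vO (n a q r : ℕ) (x y : Ch m) : ZMod m :=
  pull S.lab (2 * r + 1 + q * (2 * n + 1)) (od (S.th (a + 1)) r (S.Ft n (a + 2) q))
    (Bg M L n a q x y)

theorem other_inv (b : ℕ) (h1 : a + 1 < b) (hb : b < k) (v : V) :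
    S.th (a + 1) (S.s b v) = S.th (a + 1) v + 0 := by
  rw [add_zero]
  exact S.th_other (a + 1) b (by omega) (by omega) hb (by omega) (by omega) v

/-- Stokes' formula for the primitive `po`. -/
theorem rel_b (i j r : ℕ) (hi : i < L) (hj : j < L) (hi2 : Even i) (hj2 : Even j) :
    S.vE n a q (r + 1) (ee M L i) (ee M L j) =
      S.vO n a q r (ep M L i) (ee M L j) + S.vO n a q r (ee M L i) (ep M L j) := by
  have hF := S.Ft_inv n (a + 2) q (by omega) (by omega)
  have h := S.bdry hM n (by omega) a q hk (2 * r + 1 + q * (2 * n + 1))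
    (po (S.th (a + 1)) r (S.Ft n (a + 2) q)) (fun b h1 hb l => by
      rw [po_map (S.other_inv hM n hn a q hk b h1 hb) (hF b hb)]
      simp only [add_zero]; rfl) i j hi hj
  rw [dl_po (S.Ft_nil _ _ _) (S.dl_Ft _ _ _),
    opk_po (Or.inl rfl) (S.th_zero (a + 1) (by omega) (by omega)) (hF 0 (by omega)) hi2,
    opk_po (Or.inr rfl) (S.th_self (a + 1) (by omega) (by omega)) (hF (a + 1) (by omega)) hj2,
    hi2.neg_one_pow, one_mul] at h
  rw [vE, vO, vO, ← h]
  congr 2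
  ring

theorem pe_inv (r b : ℕ) (h1 : a + 1 < b) (hb : b < k) (l : List V) :
    pe (S.th (a + 1)) r (S.Ft n (a + 2) q) (l.map (S.s b)) =
      pe (S.th (a + 1)) r (S.Ft n (a + 2) q) l := by
  rw [pe_map (S.other_inv hM n hn a q hk b h1 hb)
    (S.Ft_inv n (a + 2) q (by omega) (by omega) b hb)]
  simp only [add_zero]; rfl

/-- Stokes' formula for the primitive `pe`. -/
theorem rel_C (i j r : ℕ) (hi : i < L) (hj : j < L) (hi2 : Even i) (hj2 : ¬ Even j) :
    S.vO n a q r (ee M L i) (ee M L j) =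
      HH m * S.vE n a q r (ep M L i) (ee M L j) - S.vE n a q r (ee M L i) (ep M L j) := by
  have hF := S.Ft_inv n (a + 2) q (by omega) (by omega)
  have h := S.bdry hM n (by omega) a q hk (2 * r + q * (2 * n + 1))
    (pe (S.th (a + 1)) r (S.Ft n (a + 2) q)) (S.pe_inv hM n hn a q hk r) i j hi hj
  rw [dl_pe (S.Ft_nil _ _ _) (S.dl_Ft _ _ _),
    opk_pe_even (Or.inl rfl) (S.th_zero (a + 1) (by omega) (by omega)) (hF 0 (by omega)) hi2,
    opk_pe_odd (S.th_self (a + 1) (by omega) (by omega)) (hF (a + 1) (by omega)) hj2,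
    hi2.neg_one_pow, one_mul, cup0_one (S.Ft_nil _ _ _), pull_smul, pull_smul] at h
  simp only [LinearMap.smul_apply, smul_eq_mul] at h
  rw [vE, vE, vO, show 2 * r + 1 + q * (2 * n + 1) = 2 * r + q * (2 * n + 1) + 1 by ring, h]
  ring

/-- Stokes' formula for the primitive `pe`, with the parities of `i` and `j` exchanged. -/
theorem rel_D (i j r : ℕ) (hi : i < L) (hj : j < L) (hi2 : ¬ Even i) (hj2 : Even j) :
    S.vO n a q r (ee M L i) (ee M L j) =
      S.vE n a q r (ep M L i) (ee M L j) - HH m * S.vE n a q r (ee M L i) (ep M L j) := by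
  have hF := S.Ft_inv n (a + 2) q (by omega) (by omega)
  have h := S.bdry hM n (by omega) a q hk (2 * r + q * (2 * n + 1))
    (pe (S.th (a + 1)) r (S.Ft n (a + 2) q)) (S.pe_inv hM n hn a q hk r) i j hi hj
  rw [dl_pe (S.Ft_nil _ _ _) (S.dl_Ft _ _ _),
    opk_pe_odd (S.th_zero (a + 1) (by omega) (by omega)) (hF 0 (by omega)) hi2,
    opk_pe_even (Or.inr rfl) (S.th_self (a + 1) (by omega) (by omega)) (hF (a + 1) (by omega)) hj2,
    (Nat.not_even_iff_odd.1 hi2).neg_one_pow, cup0_one (S.Ft_nil _ _ _), pull_smul,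
    pull_smul] at h
  simp only [LinearMap.smul_apply, smul_eq_mul] at h
  rw [vE, vE, vO, show 2 * r + 1 + q * (2 * n + 1) = 2 * r + q * (2 * n + 1) + 1 by ring, h]
  ring

/-- Stokes' formula for the primitive `pu`; it controls the terms with a factor `HH m` in `rel_C`
and `rel_D`, which arise only for even `m`. -/
theorem rel_A (i j r : ℕ) (hi : i < L) (hj : j < L) (hi2 : ¬ Even i) (hj2 : ¬ Even j) :
    HH m * S.vE n a q (r + 1) (ee M L i) (ee M L j) =
      S.vO n a q r (ep M L i) (ee M L j) + S.vO n a q r (ee M L i) (ep M L j) := by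
  have hF := S.Ft_inv n (a + 2) q (by omega) (by omega)
  have h := S.bdry hM n (by omega) a q hk (2 * r + 1 + q * (2 * n + 1))
    (pu (S.th (a + 1)) r (S.Ft n (a + 2) q)) (fun b h1 hb l => by
      rw [pu_map (S.other_inv hM n hn a q hk b h1 hb) (hF b hb)]
      ring) i j hi hj
  rw [dl_pu (S.Ft_nil _ _ _) (S.dl_Ft _ _ _),
    opk_pu (S.th_zero (a + 1) (by omega) (by omega)) (hF 0 (by omega)) hi2,
    opk_pu (S.th_self (a + 1) (by omega) (by omega)) (hF (a + 1) (by omega)) hj2,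
    (Nat.not_even_iff_odd.1 hi2).neg_one_pow, pull_smul, pull_smul, pull_smul] at h
  simp only [LinearMap.smul_apply, smul_eq_mul] at h
  rw [vE, vO, vO, show 2 * (r + 1) + q * (2 * n + 1) = 2 * r + 1 + q * (2 * n + 1) + 1 by ring, h]
  ring

theorem ep_zero_left (r : ℕ) (y : Ch m) : S.vE n a q r (ep M L 0) y = 0 := by
  simp [vE, ep, Bg]
theorem ep_zero_right (r : ℕ) (x : Ch m) : S.vE n a q r x (ep M L 0) = 0 := by
  simp [vE, ep, Bg]
theorem ep_zero_leftO (r : ℕ) (y : Ch m) : S.vO n a q r (ep M L 0) y = 0 := by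
  simp [vO, ep, Bg]
theorem ep_zero_rightO (r : ℕ) (x : Ch m) : S.vO n a q r x (ep M L 0) = 0 := by
  simp [vO, ep, Bg]

/-- The terms with a factor `HH m` vanish. By `rel_A`, `rel_C` and `rel_D`, such a term is a sum
of terms of the same kind with smaller `p + p'` and of two values that cancel. -/
theorem HA_zero (w : ℕ) : ∀ p p', p + p' = w → p ≤ n → p' ≤ n →
    HH m * S.vE n a q (p + p' + 1) (ee M L (2 * p + 1)) (ee M L (2 * p' + 1)) = 0 := by
  induction w with
  | zero =>
    intro p p' h hp hp'
    obtain ⟨rfl, rfl⟩ : p = 0 ∧ p' = 0 := by omega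
    rw [S.rel_A hM n hn a q hk _ _ _ (by omega) (by omega) (by decide) (by decide)]
    simp only [ep]
    rw [S.rel_C hM n hn a q hk _ _ _ (by omega) (by omega) (by decide) (by decide),
      S.rel_D hM n hn a q hk _ _ _ (by omega) (by omega) (by decide) (by decide),
      S.ep_zero_left hM n hn a q hk, S.ep_zero_right hM n hn a q hk]
    simp only [ep]; ring
  | succ w ih =>
    intro p p' h hp hp'
    have o : ∀ x : ℕ, ¬ Even (2 * x + 1) := fun x => by simp [Nat.even_add_one]
    have e : ∀ x : ℕ, Even (2 * x) := fun x => even_two_mul x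
    rw [S.rel_A hM n hn a q hk _ _ _ (by omega) (by omega) (o _) (o _)]
    simp only [ep]
    rw [S.rel_C hM n hn a q hk _ _ _ (by omega) (by omega) (e _) (o _),
      S.rel_D hM n hn a q hk _ _ _ (by omega) (by omega) (o _) (e _)]
    have h1 : HH m * S.vE n a q (p + p') (ep M L (2 * p)) (ee M L (2 * p' + 1)) = 0 := by
      cases p with
      | zero => rw [mul_zero, S.ep_zero_left hM n hn a q hk, mul_zero]
      | succ p =>
        have := ih p p' (by omega) (by omega) hp'
        rw [show p + 1 + p' = p + p' + 1 by ring]; exact this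
    have h2 : HH m * S.vE n a q (p + p') (ee M L (2 * p + 1)) (ep M L (2 * p')) = 0 := by
      cases p' with
      | zero => rw [mul_zero, S.ep_zero_right hM n hn a q hk, mul_zero]
      | succ p' => exact ih p p' (by omega) hp (by omega)
    rw [h1, h2]
    simp only [ep]; ring

/-- `rel_C` without its `HH m` term. -/
theorem C_eq (p p' : ℕ) (hp : p ≤ n) (hp' : p' ≤ n) :
    S.vO n a q (p + p') (ee M L (2 * p)) (ee M L (2 * p' + 1)) =
      - S.vE n a q (p + p') (ee M L (2 * p)) (ee M L (2 * p')) := by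
  rw [S.rel_C hM n hn a q hk _ _ _ (by omega) (by omega) (even_two_mul _)
    (by simp)]
  have h1 : HH m * S.vE n a q (p + p') (ep M L (2 * p)) (ee M L (2 * p' + 1)) = 0 := by
    cases p with
    | zero => rw [mul_zero, S.ep_zero_left hM n hn a q hk, mul_zero]
    | succ p =>
      have := S.HA_zero hM n hn a q hk _ p p' rfl (by omega) hp'
      rw [show p + 1 + p' = p + p' + 1 by ring]; exact this
  rw [h1]; simp only [ep]; ring

/-- `rel_D` without its `HH m` term. -/
theorem D_eq (p p' : ℕ) (hp : p ≤ n) (hp' : p' ≤ n) :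
    S.vO n a q (p + p') (ee M L (2 * p + 1)) (ee M L (2 * p')) =
      S.vE n a q (p + p') (ee M L (2 * p)) (ee M L (2 * p')) := by
  rw [S.rel_D hM n hn a q hk _ _ _ (by omega) (by omega) (by simp)
    (even_two_mul _)]
  have h2 : HH m * S.vE n a q (p + p') (ee M L (2 * p + 1)) (ep M L (2 * p')) = 0 := by
    cases p' with
    | zero => rw [mul_zero, S.ep_zero_right hM n hn a q hk, mul_zero]
    | succ p' => exact S.HA_zero hM n hn a q hk _ p p' rfl hp (by omega)
  rw [h2]; simp only [ep]; ring

/-- The source of the binomial coefficient: `rel_b`, `C_eq` and `D_eq` turn Stokes' formula into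
Pascal's rule. -/
theorem b_eq (w : ℕ) : ∀ p p', p + p' = w → p ≤ n → p' ≤ n →
    S.vE n a q w (ee M L (2 * p)) (ee M L (2 * p')) =
      (-1) ^ p' * (Nat.choose w p : ZMod m) * S.vE n a q 0 (ee M L 0) (ee M L 0) := by
  induction w with
  | zero =>
    intro p p' h hp hp'
    obtain ⟨rfl, rfl⟩ : p = 0 ∧ p' = 0 := by omega
    simp
  | succ w ih =>
    intro p p' h hp hp'
    rw [S.rel_b hM n hn a q hk _ _ _ (by omega) (by omega) (even_two_mul _) (even_two_mul _)]
    cases p with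
    | zero =>
      obtain rfl : p' = w + 1 := by omega
      have := S.C_eq hM n hn a q hk 0 w hp (by omega)
      rw [zero_add, mul_zero] at this
      rw [mul_zero, S.ep_zero_leftO hM n hn a q hk, zero_add, mul_add, mul_one]
      change S.vO n a q w (ee M L 0) (ee M L (2 * w + 1)) = _
      rw [this]
      have := ih 0 w (by omega) (by omega) (by omega)
      rw [mul_zero] at this
      rw [this]; simp [pow_succ]
    | succ p =>
      have hD : S.vO n a q w (ep M L (2 * (p + 1))) (ee M L (2 * p')) =
          (-1) ^ p' * (Nat.choose w p : ZMod m) * S.vE n a q 0 (ee M L 0) (ee M L 0) := by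
        rw [← ih p p' (by omega) (by omega) hp']
        have := S.D_eq hM n hn a q hk p p' (by omega) hp'
        rw [show p + p' = w by omega] at this
        exact this
      rw [hD]
      cases p' with
      | zero =>
        obtain rfl : p = w := by omega
        rw [mul_zero, S.ep_zero_rightO hM n hn a q hk]; simp
      | succ p' =>
        have hC : S.vO n a q w (ee M L (2 * (p + 1))) (ep M L (2 * (p' + 1))) =
            - ((-1) ^ p' * (Nat.choose w (p + 1) : ZMod m) * S.vE n a q 0 (ee M L 0) (ee M L 0)) := by
          rw [← ih (p + 1) p' (by omega) (by omega) (by omega)]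
          have := S.C_eq hM n hn a q hk (p + 1) p' (by omega) (by omega)
          rw [show p + 1 + p' = w by omega] at this
          exact this
        rw [hC, Nat.choose_succ_succ']
        push_cast
        ring

end level

variable [NeZero m] (hM : M ≠ 0) (n : ℕ) (hn : L = 2 * n + 2)
include hM hn

/-- The remaining constant is `±1`. By induction on `q`: one factor of the tail is moved into the
second slot of the test chain, where `b_eq` applies with the trivial binomial coefficient
`n.choose 0`. -/
theorem base_unit (q a : ℕ) (hk : a + 2 + q = k) :
    S.vE n a q 0 (ee M L 0) (ee M L 0) = 1 ∨ S.vE n a q 0 (ee M L 0) (ee M L 0) = -1 := by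
  induction q generalizing a with
  | zero =>
    left
    have hp : ∀ q, aug (ee M L 0 ^ q : Ch m) = 1 := by
      intro q
      induction q with
      | zero => rw [pow_zero, ← wd_nil, aug_wd]
      | succ q ih => rw [pow_succ, aug_mul, ih, aug_ee_zero, one_mul]
    have h : pull S.lab 0 (ev (S.th (a + 1)) 0 (S.Ft n (a + 2) 0)) = aug :=
      lin_ext fun l => by rw [pull_zero_wd, aug_wd]; rfl
    simp only [vE, Nat.zero_mul, Nat.mul_zero, Nat.add_zero, h, Bg, aug_mul, hp, aug_ee_zero,
      mul_one, pow_zero]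
  | succ q ih =>
    have h : S.vE n a (q + 1) 0 (ee M L 0) (ee M L 0) =
        S.vO n (a + 1) q (0 + n) (ee M L (2 * 0)) (ee M L (2 * n + 1)) := by
      have hB : (Bg M L n a (q + 1) (ee M L 0) (ee M L 0) : Ch m) =
          Bg M L n (a + 1) q (ee M L 0) (ee M L (2 * n + 1)) := by
        unfold Bg
        rw [pow_succ' (ee M L (2 * n + 1)), pow_succ (ee M L 0)]
        simp only [mul_assoc]
      have hd : 2 * 0 + (q + 1) * (2 * n + 1) = 2 * (0 + n) + 1 + q * (2 * n + 1) := by ring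
      unfold vE vO
      rw [hB, hd, Nat.mul_zero, Nat.zero_add n]
      rfl
    rw [h, S.C_eq hM n hn (a + 1) q (by omega) 0 n (by omega) le_rfl,
      S.b_eq hM n hn (a + 1) q (by omega) (0 + n) 0 n rfl (by omega) le_rfl]
    have hpow := neg_one_pow_eq_or (ZMod m) n
    rcases ih (a + 1) (by omega) with h1 | h1 <;> rcases hpow with h2 | h2 <;>
      simp [h1, h2]

/-- The normalised cocycle `y_1^{2n} x_1 ∏_{c=2}^{k-1} y_c^n x_c` takes the value `±C(2n, n)` on
the chain `ee_{2n} × ee_{2n+1}^{k-1}`. -/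
theorem main_eval (hk2 : 2 ≤ k) :
    ∃ c : List V → ZMod m, Normd c ∧ ∃ x : Ch m, x ∈ sp (GWs M L k) ∧
      (pull S.lab (k * (2 * n + 1) - 1) c x = (Nat.choose (2 * n) n : ZMod m) ∨
        pull S.lab (k * (2 * n + 1) - 1) c x = - (Nat.choose (2 * n) n : ZMod m)) := by
  obtain ⟨q, rfl⟩ : ∃ q, k = 0 + 2 + q := ⟨k - 2, by omega⟩
  refine ⟨od (S.th 1) (n + n) (S.Ft n 2 q), ((S.Ft_normd n 2 q).cup1 fun a => sub_self _).ev,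
    Bg M L n 0 q (ee M L (2 * n)) (ee M L (2 * n + 1)), ?_, ?_⟩
  · rw [show 0 + 2 + q = 1 + 0 + 1 + q by omega]
    exact mul_mem (mul_mem (mul_mem (GW_sub _ (ee_mem _ _ _ (by omega)))
      (pow_mem (ee_mem _ _ _ (by omega)) 0)) (GW_sub _ (ee_mem _ _ _ (by omega))))
      (pow_mem (ee_mem _ _ _ (by omega)) q)
  · have h : pull S.lab ((0 + 2 + q) * (2 * n + 1) - 1) (od (S.th 1) (n + n) (S.Ft n 2 q))
        (Bg M L n 0 q (ee M L (2 * n)) (ee M L (2 * n + 1))) =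
        S.vO n 0 q (n + n) (ee M L (2 * n)) (ee M L (2 * n + 1)) := by
      rw [vO]
      congr 2
      have : (0 + 2 + q) * (2 * n + 1) = 2 * (n + n) + 1 + q * (2 * n + 1) + 1 := by ring
      omega
    rw [h, S.C_eq hM n hn 0 q rfl n n le_rfl le_rfl, S.b_eq hM n hn 0 q rfl (n + n) n n rfl le_rfl
      le_rfl, ← two_mul]
    have hpow := neg_one_pow_eq_or (ZMod m) n
    rcases S.base_unit hM n hn q 0 rfl with h1 | h1 <;> rcases hpow with h2 | h2 <;>
      simp [h1, h2]

end LabSys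

end LensTC

/-! ### The combinatorial lower bound -/

namespace LensTC
variable {m : ℕ}

/-- A strictly decreasing sequence of natural numbers `f v > ⋯` has at most `f v` further terms.
-/
theorem chain_length {V : Type*} {f : V → ℕ} :
    ∀ (l : List V) (v : V), (v :: l).IsChain (fun v w => f w < f v) → l.length ≤ f v
  | [], _, _ => Nat.zero_le _
  | w :: l, v, h => by
    rw [List.isChain_cons_cons] at h
    have := chain_length l w h.2
    simp only [List.length_cons]; omega

theorem chain_and {V : Type*} {r s : V → V → Prop} :
    ∀ l : List V, l.IsChain r → l.IsChain s → l.IsChain (fun v w => r v w ∧ s v w)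
  | [], _, _ => .nil
  | [_], _, _ => .singleton _
  | _ :: w :: l, hr, hs => by
    rw [List.isChain_cons_cons] at *
    exact ⟨⟨hr.1, hs.1⟩, chain_and (w :: l) hr.2 hs.2⟩

/-- There is no colouring of the cells of a product of `k` joins by fewer than `k (2n + 1)`
colours, together with labels in `(ℤ/m)^k`, such that passing to a face does not raise the colour,
and keeps the label whenever it keeps the colour, while rotations of the blocks act on labels as
they do for a section over the lens space. -/
theorem no_coloring [NeZero m] {n k M r : ℕ} (hC : (Nat.choose (2 * n) n : ZMod m) ≠ 0)
    (hk : 2 ≤ k) (hM : M ≠ 0) (hr : r < k * (2 * n + 1))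
    (col : List (TC m) → ℕ) (lb : List (TC m) → Fin k → ZMod m)
    (hcol : ∀ Q ∈ GWs M (2 * n + 2) k, col Q < r)
    (hface : ∀ Q ∈ GWs M (2 * n + 2) k, ∀ Q', Face Q' Q →
      col Q' ≤ col Q ∧ (col Q' = col Q → lb Q' = lb Q))
    (hrot : ∀ b e, b + 1 + e = k → ∀ l₁ ∈ GWs M (2 * n + 2) b, ∀ l₂ ∈ GW M (2 * n + 2),
      ∀ l₃ ∈ GWs M (2 * n + 2) e,
      col (l₁ ++ l₂.map rotL ++ l₃) = col (l₁ ++ l₂ ++ l₃) ∧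
      lb (l₁ ++ l₂.map rotL ++ l₃) = fun a : Fin k => lb (l₁ ++ l₂ ++ l₃) a +
        (if b = 0 then 1 else 0) + (if b = a then -1 else 0)) : False := by
  let S : LabSys m M (2 * n + 2) k (ℕ × (Fin k → ZMod m)) :=
    { lab := fun Q => (col Q, lb Q)
      s := fun b v => (v.1, fun a => v.2 a + (if b = 0 then 1 else 0) +
        (if b = (a : ℕ) then -1 else 0))
      th := fun a v => if h : a < k then v.2 ⟨a, h⟩ else 0
      hs := fun b e h l₁ h₁ l₂ h₂ l₃ h₃ =>
        Prod.ext (hrot b e h l₁ h₁ l₂ h₂ l₃ h₃).1 (hrot b e h l₁ h₁ l₂ h₂ l₃ h₃).2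
      th_zero := fun a h1 hak v => (by simp [hak]; omega)
      th_self := fun a h1 hak v => (by simp [hak]; omega)
      th_other := fun a b h1 hak hb hb0 hba v => by simp [hak, hb0, hba] }
  obtain ⟨c, hc, x, hx, hval⟩ := S.main_eval hM n rfl hk
  have h0 : pull S.lab (k * (2 * n + 1) - 1) c x = 0 := by
    refine sp_ind (p := fun x => pull S.lab (k * (2 * n + 1) - 1) c x = 0) hx (map_zero _) ?_
      (fun x y hx hy => by rw [map_add, hx, hy, add_zero])
      (fun s x hx => by rw [map_smul, hx, smul_zero])
    intro Q hQ
    refine pull_vanish S.lab hM (fun v v' => v'.1 ≤ v.1 ∧ (v'.1 = v.1 → v' = v))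
      (fun l hl l' hl' => ⟨(hface l hl l' hl').1, fun h => Prod.ext h ((hface l hl l' hl').2 h)⟩)
      _ _ Q hQ ?_
    intro l hl hch _
    by_contra hne
    -- A normalised cochain sees only flags whose labels change at every step. Then the colours
    -- strictly decrease, and there are too few colours for a flag of this length.
    have hd : (S.lab Q :: l).IsChain (· ≠ ·) := by
      by_contra h; exact hne (hc _ h)
    have hlt : (S.lab Q :: l).IsChain (fun v w => w.1 < v.1) := by
      refine (chain_and _ hch hd).imp ?_
      rintro v w ⟨⟨h1, h2⟩, h3⟩
      exact lt_of_le_of_ne h1 fun h => h3 (h2 h).symm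
    have h1 := chain_length l _ hlt
    have h2 := hcol Q hQ
    have h3 : (S.lab Q).1 = col Q := rfl
    omega
  rcases hval with h | h
  · exact hC (by rw [← h, h0])
  · exact hC (by rw [← neg_eq_zero, ← h, h0])

end LensTC

/-! ### The sphere as a covering of the lens space -/

namespace LensTC
open Topology unitInterval

/-- The unit sphere. -/
abbrev Sph (n : ℕ) : Type := Metric.sphere (0 : EuclideanSpace ℂ (Fin (n + 1))) 1

/-- `g ↦ exp(2πi g/m)`. -/
noncomputable def zt {m : ℕ} [NeZero m] (g : ZMod m) : ℂ := (ZMod.toCircle g : ℂ)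

section
variable {m : ℕ} [NeZero m]

theorem zt_add (g h : ZMod m) : zt (g + h) = zt g * zt h := by
  simp [zt, AddChar.map_add_eq_mul]

theorem zt_zero : zt (0 : ZMod m) = 1 := by simp [zt]

theorem norm_zt (g : ZMod m) : ‖zt g‖ = 1 := Circle.norm_coe _

theorem zt_ne (g : ZMod m) : zt g ≠ 0 := norm_ne_zero_iff.1 (by rw [norm_zt]; exact one_ne_zero)

theorem zt_inj {g h : ZMod m} (H : zt g = zt h) : g = h :=
  ZMod.injective_toCircle (Subtype.ext H)

theorem zt_pow (g : ZMod m) : zt g ^ m = 1 := by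
  have : ZMod.toCircle g ^ m = 1 := by
    rw [← AddChar.map_nsmul_eq_pow, nsmul_eq_mul, ZMod.natCast_self, zero_mul,
      AddChar.map_zero_eq_one]
  rw [zt, ← Circle.coe_pow, this, Circle.coe_one]

theorem exists_zt {ζ : ℂˣ} (h : ζ ^ m = 1) : ∃ g : ZMod m, zt g = ζ := by
  obtain ⟨i, hi, h⟩ := (Complex.mem_rootsOfUnity m ζ).1 ((mem_rootsOfUnity _ _).2 h)
  refine ⟨(i : ZMod m), ?_⟩
  rw [zt, ZMod.toCircle_natCast, ← h]
  congr 1; ring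

variable {n : ℕ}

/-- Multiplication of points of the sphere by a unit complex number. -/
noncomputable def rt (c : ℂ) (hc : ‖c‖ = 1) (x : Sph n) : Sph n :=
  ⟨c • (x : EuclideanSpace ℂ (Fin (n + 1))), by
    have := x.2
    rw [mem_sphere_zero_iff_norm] at this ⊢
    rw [norm_smul, hc, this, one_mul]⟩

/-- `ℤ/m` acts on the sphere through multiplication by `m`-th roots of unity. -/
noncomputable instance : AddAction (ZMod m) (Sph n) where
  vadd g x := rt (zt g) (norm_zt g) x
  zero_vadd x := Subtype.ext (by
    change zt (0 : ZMod m) • (x : EuclideanSpace ℂ (Fin (n + 1))) = x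
    rw [zt_zero, one_smul])
  add_vadd g h x := Subtype.ext (by
    change zt (g + h) • (x : EuclideanSpace ℂ (Fin (n + 1))) = zt g • zt h • x.1
    rw [zt_add, mul_smul])

theorem vadd_coe (g : ZMod m) (x : Sph n) :
    ((g +ᵥ x : Sph n) : EuclideanSpace ℂ (Fin (n + 1))) = zt g • x.1 := rfl

theorem vadd_apply (g : ZMod m) (x : Sph n) (i : Fin (n + 1)) :
    (g +ᵥ x : Sph n).1 i = zt g * x.1 i := rfl

instance : ContinuousConstVAdd (ZMod m) (Sph n) where
  continuous_const_vadd g := by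
    refine Continuous.subtype_mk ?_ _
    exact Continuous.const_smul continuous_subtype_val (zt g)

theorem vadd_free {g : ZMod m} {x : Sph n} (h : g +ᵥ x = x) : g = 0 := by
  have h1 : (zt g - 1) • x.1 = 0 := by
    rw [sub_smul, one_smul, ← vadd_coe, h, sub_self]
  rcases smul_eq_zero.1 h1 with h | h
  · exact zt_inj (by rw [zt_zero]; exact sub_eq_zero.1 h)
  · have := x.2
    rw [mem_sphere_zero_iff_norm, h, norm_zero] at this
    exact absurd this zero_ne_one

instance : IsCancelVAdd (ZMod m) (Sph n) := by
  refine ⟨fun g h x H => ?_⟩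
  have : (g - h) +ᵥ x = x := by
    rw [sub_eq_neg_add, add_vadd, H, neg_vadd_vadd]
  exact sub_eq_zero.1 (vadd_free this)

variable (m n) in
/-- The projection `S^{2n+1} → L^{2n+1}_m`. -/
noncomputable def pr : Sph n → LensSpace m n := Quotient.mk (lensSetoid m n)

theorem pr_eq_iff {x y : Sph n} : pr m n x = pr m n y ↔ x ∈ AddAction.orbit (ZMod m) y := by
  rw [eq_comm]
  constructor
  · intro h
    obtain ⟨ζ, hζ, h⟩ := (Quotient.exact h : (lensSetoid m n) y x)
    obtain ⟨g, hg⟩ := exists_zt hζ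
    exact ⟨g, Subtype.ext (by rw [h]; change zt g • y.1 = _; rw [hg]; rfl)⟩
  · rintro ⟨g, rfl⟩
    exact Quotient.sound ⟨Units.mk0 (zt g) (zt_ne g), by ext; simp [zt_pow], rfl⟩

omit [NeZero m] in
theorem pr_quot : IsQuotientMap (pr m n) := isQuotientMap_quot_mk

theorem pr_cov' : IsAddQuotientCoveringMap (pr m n) (ZMod m) :=
  pr_quot.isAddQuotientCoveringMap_of_properlyDiscontinuousVAdd pr_eq_iff

theorem pr_cov : IsCoveringMap (pr m n) := pr_cov'.isCoveringMap

theorem pr_vadd (g : ZMod m) (x : Sph n) : pr m n (g +ᵥ x) = pr m n x := pr_cov'.map_vadd g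

theorem pr_open : IsOpenQuotientMap (pr m n) := pr_cov'.isOpenQuotientMap

end

end LensTC

/-! ### Labels from a section -/

namespace LensTC
open Topology unitInterval
variable {m : ℕ} [NeZero m] {n k : ℕ}

/-- A map to a finite set with closed fibres is locally constant. -/
theorem locConst_of_closed {A Z : Type*} [TopologicalSpace A] [Finite Z] (f : A → Z)
    (h : ∀ z, IsClosed {a | f a = z}) : IsLocallyConstant f := by
  rw [IsLocallyConstant.iff_isOpen_fiber]
  intro z
  have : f ⁻¹' {z} = (⋃ w : {w : Z // w ≠ z}, {a | f a = w})ᶜ := by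
    ext a
    simp only [Set.mem_preimage, Set.mem_singleton_iff, Set.mem_ofPred_eq, Set.mem_compl_iff, Set.mem_iUnion, not_exists]
    exact ⟨fun h w hw => w.2 (by rw [← hw, h]), fun h => by_contra fun hz => h ⟨f a, hz⟩ rfl⟩
  rw [this]
  exact isOpen_compl_iff.2 (isClosed_iUnion_of_finite fun w : {w : Z // w ≠ z} => h w.1)

/-- A section `s` over `U` labels the points `y` of `(S^{2n+1})^k` over `U`: lift the path `s(y)`
to the sphere starting at `y_0`; the `a`-th label is the `g` for which `g +ᵥ y_a` is the lift at
time `a / (k - 1)`. The labels are constant on preconnected sets. Rotating `y_0` rotates the whole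
lift, and rotating `y_a` changes the point with which the lift is compared. -/
theorem exists_label (hk : 2 ≤ k) {U : Set (Fin k → LensSpace m n)} (hU : HasSec k U) :
    ∃ lb : (Fin k → Sph n) → Fin k → ZMod m,
      (∀ C : Set (Fin k → Sph n), IsPreconnected C → (∀ y ∈ C, (fun a => pr m n (y a)) ∈ U) →
        ∀ y ∈ C, ∀ y' ∈ C, lb y = lb y') ∧
      (∀ y : Fin k → Sph n, (fun a => pr m n (y a)) ∈ U → ∀ b a : Fin k,
        lb (Function.update y b ((1 : ZMod m) +ᵥ y b)) a =
          lb y a + (if (b : ℕ) = 0 then 1 else 0) + (if b = a then -1 else 0)) := by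
  classical
  obtain ⟨s, hs⟩ := hU
  let A := {y : Fin k → Sph n // (fun a => pr m n (y a)) ∈ U}
  let P : C(A, U) := ⟨fun y => ⟨fun a => pr m n (y.1 a), y.2⟩, by
    refine Continuous.subtype_mk (continuous_pi fun a => ?_) _
    exact pr_quot.continuous.comp ((continuous_apply a).comp continuous_subtype_val)⟩
  let z0 : Fin k := ⟨0, by omega⟩
  let tt : Fin k → I := fun i => Set.projIcc 0 1 zero_le_one ((i : ℝ) / ((k : ℝ) - 1))
  have htt : tt z0 = 0 := by simp [tt, z0]
  have hend : ∀ (y : A) a, s (P y) (tt a) = pr m n (y.1 a) := fun y a => congrFun (hs (P y)) a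
  let H : C(I × A, LensSpace m n) := ⟨fun q => s (P q.2) q.1, by
    have : Continuous fun q : A × I => s (P q.1) q.2 :=
      ContinuousMap.continuous_uncurry_of_continuous (s.comp P)
    exact this.comp continuous_swap⟩
  let f : C(A, Sph n) := ⟨fun y => y.1 z0, (continuous_apply z0).comp continuous_subtype_val⟩
  have H0 : ∀ y, H (0, y) = pr m n (f y) := fun y => by rw [← htt]; exact hend y z0
  -- The lifts to the sphere of all the paths `s(y)`, starting at the point `y_0`.
  let G := pr_cov.liftHomotopy H f H0
  have hG : ∀ t y, pr m n (G (t, y)) = s (P y) t := fun t y =>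
    congrFun (pr_cov.liftHomotopy_lifts H f H0) (t, y)
  have hG0 : ∀ y, G (0, y) = y.1 z0 := pr_cov.liftHomotopy_zero H f H0
  have hex : ∀ (y : A) a, ∃ g : ZMod m, g +ᵥ y.1 a = G (tt a, y) := fun y a =>
    pr_eq_iff.1 ((hG _ _).trans (hend y a))
  choose lb hlb using hex
  refine ⟨fun y a => if h : (fun a => pr m n (y a)) ∈ U then lb ⟨y, h⟩ a else 0, ?_, ?_⟩
  · intro C hC hCU y hy y' hy'
    funext a
    simp only [dif_pos (hCU y hy), dif_pos (hCU y' hy')]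
    have hloc : IsLocallyConstant fun y : A => lb y a := by
      refine locConst_of_closed _ fun j => ?_
      have : {y : A | lb y a = j} = {y : A | j +ᵥ y.1 a = G (tt a, y)} := by
        ext y
        constructor
        · rintro rfl; exact hlb y a
        · intro h
          have := h.trans (hlb y a).symm
          exact (IsCancelVAdd.right_cancel _ _ _ this).symm
      rw [this]
      refine isClosed_eq ?_ (by fun_prop)
      exact Continuous.const_vadd ((continuous_apply a).comp continuous_subtype_val) j
    have hC' : IsPreconnected (Subtype.val ⁻¹' C : Set A) := by
      refine IsInducing.subtypeVal.isPreconnected_image.1 ?_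
      convert hC using 1
      ext z
      exact ⟨by rintro ⟨z, hz, rfl⟩; exact hz, fun hz => ⟨⟨z, hCU z hz⟩, hz, rfl⟩⟩
    exact hloc.apply_eq_of_isPreconnected hC' (x := ⟨y, hCU y hy⟩) (y := ⟨y', hCU y' hy'⟩) hy hy'
  · intro y hy b a
    set y' := Function.update y b ((1 : ZMod m) +ᵥ y b) with hy'
    have hpy : (fun a => pr m n (y' a)) = fun a => pr m n (y a) := by
      funext c
      by_cases h : c = b
      · subst h; rw [hy', Function.update_self, pr_vadd]
      · rw [hy', Function.update_of_ne h]
    have hyU : (fun a => pr m n (y' a)) ∈ U := by rw [hpy]; exact hy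
    simp only [dif_pos hyU, dif_pos hy]
    let e : ZMod m := if (b : ℕ) = 0 then 1 else 0
    have hP : P ⟨y', hyU⟩ = P ⟨y, hy⟩ := Subtype.ext hpy
    have hGe : ∀ t, G (t, ⟨y', hyU⟩) = e +ᵥ G (t, ⟨y, hy⟩) := by
      have : (fun t => G (t, ⟨y', hyU⟩)) = fun t => e +ᵥ G (t, ⟨y, hy⟩) := by
        refine (pr_cov (m := m) (n := n)).eq_of_comp_eq (by fun_prop)
          (Continuous.const_vadd (by fun_prop) e) ?_ 0 ?_
        · funext t
          simp only [Function.comp, pr_vadd, hG, hP]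
        · simp only [hG0]
          by_cases hb : (b : ℕ) = 0
          · have : b = z0 := Fin.ext hb
            subst this
            simp [hy', e, z0]
          · have : z0 ≠ b := fun h => hb (by rw [← h])
            simp [hy', e, hb, Function.update_of_ne this]
      exact congrFun this
    have h1 := hlb ⟨y', hyU⟩ a
    rw [hGe, ← hlb ⟨y, hy⟩ a, ← add_vadd] at h1
    by_cases hab : b = a
    · subst hab
      simp only [hy', Function.update_self, ← add_vadd] at h1
      have := IsCancelVAdd.right_cancel _ _ _ h1
      simp only [if_true]
      rw [show lb ⟨y, hy⟩ b + (if (b : ℕ) = 0 then (1 : ZMod m) else 0) = e + lb ⟨y, hy⟩ b from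
        add_comm _ _, ← this]
      ring
    · simp only [hy', Function.update_of_ne (Ne.symm hab)] at h1
      have := IsCancelVAdd.right_cancel _ _ _ h1
      rw [if_neg hab, add_zero]
      exact this.trans (add_comm _ _)

end LensTC

/-! ### Geometry of the cone -/

namespace LensTC
open Topology unitInterval
variable {m : ℕ} [NeZero m]

/-- The distance from the centre of the vertices at step `i` when a ray has `M` steps, truncated
at `1`. The value for `M = 0` is not meaningful. -/
noncomputable def rad (M i : ℕ) : ℝ := min 1 ((i : ℝ) / M)

theorem rad_nonneg (M i : ℕ) : 0 ≤ rad M i := le_min zero_le_one (by positivity)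
theorem rad_le (M i : ℕ) : rad M i ≤ 1 := min_le_left _ _
theorem rad_zero (M : ℕ) : rad M 0 = 0 := by simp [rad]
theorem rad_self {M : ℕ} (h : M ≠ 0) : rad M M = 1 := by
  have : (M : ℝ) ≠ 0 := by exact_mod_cast h
  simp [rad, this]
theorem rad_mono (M i : ℕ) : rad M i ≤ rad M (i + 1) :=
  min_le_min_left _ (by push_cast; gcongr; linarith)
theorem rad_step (M i : ℕ) : rad M (i + 1) ≤ rad M i + 1 / M := by
  have h : ((i + 1 : ℕ) : ℝ) / M = (i : ℝ) / M + 1 / M := by push_cast; ring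
  have : (0 : ℝ) ≤ 1 / M := by positivity
  rw [rad, rad, h, min_add]
  exact min_le_min_right _ (by linarith)

/-- The subset of the cone over the `m`-th roots of unity realising a letter, for rays of `M`
steps. -/
noncomputable def cs (M : ℕ) : TC m → Set ℂ
  | .ctr => {0}
  | .vert g i => {zt g * rad M (i + 1)}
  | .edge g i => (fun t : ℝ => zt g * t) '' Set.Icc (rad M i) (rad M (i + 1))

theorem cs_pt (M : ℕ) (g : ZMod m) (i : ℕ) : cs M (pt g i) = {zt g * rad M i} := by
  cases i with
  | zero => simp [pt, cs, rad_zero]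
  | succ i => simp [pt, cs]

theorem cs_nonempty (M : ℕ) (a : TC m) : (cs M a).Nonempty := by
  cases a with
  | ctr => exact ⟨_, rfl⟩
  | vert g i => exact ⟨_, rfl⟩
  | edge g i => exact (Set.nonempty_Icc.2 (rad_mono M i)).image _

theorem cs_preconnected (M : ℕ) (a : TC m) : IsPreconnected (cs M a) := by
  cases a with
  | ctr => exact isPreconnected_singleton
  | vert g i => exact isPreconnected_singleton
  | edge g i => exact isPreconnected_Icc.image _ (by fun_prop)

theorem cs_dist (M : ℕ) (a : TC m) {x y : ℂ} (hx : x ∈ cs M a) (hy : y ∈ cs M a) :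
    dist x y ≤ 1 / M := by
  have h0 : (0 : ℝ) ≤ 1 / M := by positivity
  cases a with
  | ctr => rw [Set.mem_singleton_iff.1 hx, Set.mem_singleton_iff.1 hy, dist_self]; exact h0
  | vert g i => rw [Set.mem_singleton_iff.1 hx, Set.mem_singleton_iff.1 hy, dist_self]; exact h0
  | edge g i =>
    obtain ⟨s, hs, rfl⟩ := hx
    obtain ⟨t, ht, rfl⟩ := hy
    rw [dist_eq_norm, ← mul_sub, norm_mul, norm_zt, one_mul, ← Complex.ofReal_sub,
      Complex.norm_real, Real.norm_eq_abs, abs_le]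
    have := rad_step M i
    constructor <;> linarith [hs.1, hs.2, ht.1, ht.2]

theorem cs_rotL (M : ℕ) (a : TC m) : cs M (rotL a) = (fun z => zt (1 : ZMod m) * z) '' cs M a := by
  cases a with
  | ctr => simp [rotL, cs]
  | vert g i => simp [rotL, cs, zt_add]; ring
  | edge g i =>
    simp only [rotL, cs, Set.image_image, zt_add]
    congr 1; funext t; ring

/-- The cone over the m-th roots of unity. -/
def cone (m : ℕ) [NeZero m] : Set ℂ :=
  ⋃ g : ZMod m, (fun t : ℝ => zt g * t) '' Set.Icc 0 1

theorem cone_compact : IsCompact (cone m) :=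
  isCompact_iUnion fun _ => isCompact_Icc.image (by fun_prop)

theorem cs_cone (M : ℕ) (a : TC m) : cs M a ⊆ cone m := by
  intro x hx
  cases a with
  | ctr => exact Set.mem_iUnion.2 ⟨0, 0, by simp, by rw [Set.mem_singleton_iff.1 hx]; simp⟩
  | vert g i =>
    exact Set.mem_iUnion.2 ⟨g, rad M (i + 1), ⟨rad_nonneg _ _, rad_le _ _⟩,
      (Set.mem_singleton_iff.1 hx).symm⟩
  | edge g i =>
    obtain ⟨s, hs, rfl⟩ := hx
    exact Set.mem_iUnion.2 ⟨g, s, ⟨(rad_nonneg _ _).trans hs.1, hs.2.trans (rad_le _ _)⟩, rfl⟩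

theorem cone_pow {x : ℂ} (hx : x ∈ cone m) (h : ‖x‖ = 1) : x ^ m = 1 := by
  obtain ⟨g, t, ht, rfl⟩ := Set.mem_iUnion.1 hx
  simp only [norm_mul, norm_zt, one_mul, Complex.norm_real, Real.norm_of_nonneg ht.1] at h
  simp [h, zt_pow]

theorem cone_rot {x : ℂ} (hx : x ∈ cone m) : zt (1 : ZMod m) * x ∈ cone m := by
  obtain ⟨g, t, ht, rfl⟩ := Set.mem_iUnion.1 hx
  exact Set.mem_iUnion.2 ⟨1 + g, t, ht, by simp only [zt_add]; ring⟩

/-- A unit complex number with m-th power `i`. -/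
noncomputable def c0 (m : ℕ) : ℂ := Complex.exp (Real.pi / (2 * m) * Complex.I)

omit [NeZero m] in
theorem norm_c0 : ‖c0 m‖ = 1 := by
  have := Complex.norm_exp_ofReal_mul_I (Real.pi / (2 * m))
  push_cast at this
  exact this

theorem c0_pow : c0 m ^ m = Complex.I := by
  have hm : (m : ℂ) ≠ 0 := NeZero.ne _
  have : (m : ℂ) * (Real.pi / (2 * m) * Complex.I) = Real.pi / 2 * Complex.I := by field_simp
  rw [c0, ← Complex.exp_nat_mul, this, Complex.exp_pi_div_two_mul_I]

/-- If `x = -c0 y` then `|x| = |y| = 1`, and `x ^ m = 1` contradicts `(-c0 y) ^ m = ±i`. -/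
theorem nonvanish {x y : ℂ} (hx : x ∈ cone m) (hy : y ∈ cone m) (h : ‖x‖ = 1 ∨ ‖y‖ = 1) :
    x + c0 m * y ≠ 0 := by
  intro h0
  have hxy : x = - (c0 m * y) := eq_neg_of_add_eq_zero_left h0
  have hn : ‖x‖ = ‖y‖ := by rw [hxy, norm_neg, norm_mul, norm_c0, one_mul]
  have h1 : ‖x‖ = 1 := by rcases h with h | h <;> [exact h; exact hn.trans h]
  have e := cone_pow hx h1
  rw [hxy, neg_pow, mul_pow, c0_pow, cone_pow hy (hn ▸ h1), mul_one] at e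
  have e2 : ((-1 : ℂ) ^ m * Complex.I) ^ 2 = 1 := by rw [e, one_pow]
  rw [mul_pow, Complex.I_sq, ← pow_mul, mul_comm m 2, pow_mul] at e2
  norm_num at e2

end LensTC

/-! ### Realisation of words and the map to the spheres -/

namespace LensTC
open Topology unitInterval
variable {m : ℕ} [NeZero m] {n k : ℕ}

section words
omit [NeZero m]

theorem Face.getD {l' l : List (TC m)} (h : Face l' l) :
    ∀ p, l'.getD p .ctr = l.getD p .ctr ∨
      ∃ g i, l.getD p .ctr = .edge g i ∧ (l'.getD p .ctr = pt g i ∨ l'.getD p .ctr = pt g (i + 1)) := by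
  induction h with
  | src g i l => rintro (_ | p) <;> simp
  | tgt g i l => rintro (_ | p) <;> simp
  | cons a h ih =>
    rintro (_ | p)
    · simp
    · simpa using ih p

theorem GWs_isEnd {M L : ℕ} {Q : List (TC m)} (hQ : Q ∈ GWs M L k) {b : ℕ} (hb : b < k) :
    ∃ j < L, IsEnd M (Q.getD (b * L + j) .ctr) := by
  induction k generalizing Q b with
  | zero => omega
  | succ k ih =>
    obtain ⟨l₁, h₁, l₂, h₂, rfl⟩ := hQ
    cases b with
    | zero =>
      obtain ⟨hl, a, ha, he⟩ := h₁
      obtain ⟨j, hj, rfl⟩ := List.mem_iff_getElem.1 ha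
      refine ⟨j, hl ▸ hj, ?_⟩
      rw [Nat.zero_mul, Nat.zero_add, List.getD_append _ _ _ _ hj, List.getD_eq_getElem _ _ hj]
      exact he
    | succ b =>
      obtain ⟨j, hj, he⟩ := ih h₂ (b := b) (by omega)
      refine ⟨j, hj, ?_⟩
      have : (b + 1) * L + j = l₁.length + (b * L + j) := by rw [h₁.1]; ring
      rw [this, List.getD_append_right _ _ _ _ (by omega), Nat.add_sub_cancel_left]
      exact he

theorem rot_getD {L : ℕ} {l₁ l₂ l₃ : List (TC m)} {b : ℕ} (h₁ : l₁.length = b * L)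
    (h₂ : l₂.length = L) (b' j : ℕ) (hj : j < L) :
    (l₁ ++ l₂.map rotL ++ l₃).getD (b' * L + j) .ctr =
      if b' = b then rotL ((l₁ ++ l₂ ++ l₃).getD (b' * L + j) .ctr)
      else (l₁ ++ l₂ ++ l₃).getD (b' * L + j) .ctr := by
  have hm : (l₂.map rotL).length = L := by rw [List.length_map, h₂]
  rw [List.append_assoc, List.append_assoc]
  rcases lt_trichotomy b' b with h | h | h
  · have : b' * L + j < l₁.length := by
      rw [h₁]; calc b' * L + j < (b' + 1) * L := by rw [add_mul, one_mul]; omega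
        _ ≤ b * L := Nat.mul_le_mul_right _ h
    rw [if_neg h.ne, List.getD_append _ _ _ _ this, List.getD_append _ _ _ _ this]
  · subst h
    have e : b' * L + j - l₁.length = j := by omega
    rw [if_pos rfl, List.getD_append_right l₁ (l₂.map rotL ++ l₃) _ _ (by omega),
      List.getD_append_right l₁ (l₂ ++ l₃) _ _ (by omega), e,
      List.getD_append _ _ _ _ (by omega), List.getD_append _ _ _ _ (by omega),
      List.getD_eq_getElem _ _ (by omega), List.getD_eq_getElem _ _ (by omega), List.getElem_map]
  · have : l₁.length + L ≤ b' * L + j := by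
      rw [h₁]; calc b * L + L = (b + 1) * L := by ring
        _ ≤ b' * L := Nat.mul_le_mul_right _ h
        _ ≤ _ := Nat.le_add_right _ _
    rw [if_neg h.ne', List.getD_append_right l₁ (l₂.map rotL ++ l₃) _ _ (by omega),
      List.getD_append_right l₁ (l₂ ++ l₃) _ _ (by omega),
      List.getD_append_right (l₂.map rotL) _ _ _ (by omega),
      List.getD_append_right l₂ _ _ _ (by omega), hm, h₂]

end words

/-- The realisation of a word in `k L` coordinates; the coordinate `(b, j)` is governed by the
letter number `b L + j`. -/
def rl (k L M : ℕ) (Q : List (TC m)) : Set (Fin k × Fin L → ℂ) :=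
  {z | ∀ p, z p ∈ cs M (Q.getD (p.1 * L + p.2) .ctr)}

theorem rl_eq_pi (k L M : ℕ) (Q : List (TC m)) :
    rl k L M Q = Set.univ.pi fun p : Fin k × Fin L => cs M (Q.getD (p.1 * L + p.2) .ctr) := by
  ext z; simp [rl]

theorem rl_nonempty (k L M : ℕ) (Q : List (TC m)) : (rl k L M Q).Nonempty := by
  rw [rl_eq_pi]; exact Set.univ_pi_nonempty_iff.2 fun _ => cs_nonempty _ _

theorem rl_preconnected (k L M : ℕ) (Q : List (TC m)) : IsPreconnected (rl k L M Q) := by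
  rw [rl_eq_pi]; exact isPreconnected_univ_pi fun _ => cs_preconnected _ _

theorem rl_face {L M : ℕ} {Q' Q : List (TC m)} (h : Face Q' Q) : rl k L M Q' ⊆ rl k L M Q := by
  intro z hz p
  have := hz p
  rcases h.getD (p.1 * L + p.2) with e | ⟨g, i, e, e' | e'⟩
  · rwa [← e]
  · rw [e', cs_pt, Set.mem_singleton_iff] at this
    rw [e, this]
    exact ⟨_, ⟨le_rfl, rad_mono _ _⟩, rfl⟩
  · rw [e', cs_pt, Set.mem_singleton_iff] at this
    rw [e, this]
    exact ⟨_, ⟨rad_mono _ _, le_rfl⟩, rfl⟩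

theorem rl_dist {L M : ℕ} {Q : List (TC m)} {x y : Fin k × Fin L → ℂ} (hx : x ∈ rl k L M Q)
    (hy : y ∈ rl k L M Q) : dist x y ≤ 1 / M :=
  (dist_pi_le_iff (by positivity)).2 fun p => cs_dist _ _ (hx p) (hy p)

variable (m k) in
/-- The product of `k` joins: points with coordinates in the cone, having in every block a
coordinate of modulus one. -/
def Yset (L : ℕ) : Set (Fin k × Fin L → ℂ) :=
  {z | (∀ p, z p ∈ cone m) ∧ ∀ b, ∃ j, ‖z (b, j)‖ = 1}

theorem Yset_compact (L : ℕ) : IsCompact (Yset m k L) := by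
  have h : IsCompact {z : Fin k × Fin L → ℂ | ∀ p, z p ∈ cone m} := by
    have := isCompact_univ_pi fun _ : Fin k × Fin L => cone_compact (m := m)
    convert this using 1; ext z; simp
  refine h.of_isClosed_subset ?_ fun z hz => hz.1
  refine h.isClosed.inter ?_
  have : {z : Fin k × Fin L → ℂ | ∀ b, ∃ j, ‖z (b, j)‖ = 1} = ⋂ b, ⋃ j, {z | ‖z (b, j)‖ = 1} := by
    ext; simp
  change IsClosed {z : Fin k × Fin L → ℂ | ∀ b, ∃ j, ‖z (b, j)‖ = 1}
  rw [this]
  exact isClosed_iInter fun b => isClosed_iUnion_of_finite fun j =>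
    isClosed_eq (by fun_prop) continuous_const

theorem rl_Yset {L M : ℕ} (hM : M ≠ 0) {Q : List (TC m)} (hQ : Q ∈ GWs M L k) :
    rl k L M Q ⊆ Yset m k L := by
  intro z hz
  refine ⟨fun p => cs_cone _ _ (hz p), fun b => ?_⟩
  obtain ⟨j, hj, g, he⟩ := GWs_isEnd hQ b.2
  refine ⟨⟨j, hj⟩, ?_⟩
  have := hz (b, ⟨j, hj⟩)
  simp only [he, cs_pt, Set.mem_singleton_iff] at this
  rw [this, rad_self hM]; simp [norm_zt]

/-- The vector with entries `z_{2i} + c0 z_{2i+1}`, computed from the coordinates in block `b`.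
Pairing the coordinates maps the `(2n+2)`-fold join of `ℤ/m` to `ℂ^{n+1}`. -/
noncomputable def vec (m : ℕ) (z : Fin k × Fin (2 * n + 2) → ℂ) (b : Fin k) :
    EuclideanSpace ℂ (Fin (n + 1)) :=
  WithLp.toLp 2 fun i : Fin (n + 1) =>
    z (b, ⟨2 * i, by omega⟩) + c0 m * z (b, ⟨2 * i + 1, by omega⟩)

theorem vec_ne {z : Fin k × Fin (2 * n + 2) → ℂ} (hz : z ∈ Yset m k (2 * n + 2)) (b : Fin k) :
    vec m z b ≠ 0 := by
  obtain ⟨j, hj⟩ := hz.2 b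
  have key : ∀ i : Fin (n + 1), (‖z (b, ⟨2 * i, by omega⟩)‖ = 1 ∨
      ‖z (b, ⟨2 * i + 1, by omega⟩)‖ = 1) → vec m z b ≠ 0 := by
    intro i hi h
    exact nonvanish (hz.1 _) (hz.1 _) hi (congrArg (fun v => v.ofLp i) h)
  rcases Nat.even_or_odd' (j : ℕ) with ⟨i, h | h⟩
  · refine key ⟨i, by omega⟩ (Or.inl ?_)
    rw [← hj]; congr 3; exact Fin.ext h.symm
  · refine key ⟨i, by omega⟩ (Or.inr ?_)
    rw [← hj]; congr 3; exact Fin.ext h.symm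

omit [NeZero m] in
theorem vec_cont (b : Fin k) :
    Continuous fun z : Fin k × Fin (2 * n + 2) → ℂ => vec m z b := by
  refine (PiLp.continuous_toLp 2 _).comp ?_
  fun_prop

/-- The radial projection to the unit sphere. -/
noncomputable def nrm (v : EuclideanSpace ℂ (Fin (n + 1))) (h : v ≠ 0) : Sph n :=
  ⟨(‖v‖⁻¹ : ℝ) • v, by
    rw [mem_sphere_zero_iff_norm, norm_smul, norm_inv, norm_norm,
      inv_mul_cancel₀ (norm_ne_zero_iff.2 h)]⟩

/-- The equivariant map from the product of `k` joins of `ℤ/m` to `(S^{2n+1})^k`. -/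
noncomputable def Phi (z : Yset m k (2 * n + 2)) (b : Fin k) : Sph n :=
  nrm (vec m z.1 b) (vec_ne z.2 b)

theorem Phi_cont : Continuous (Phi : Yset m k (2 * n + 2) → Fin k → Sph n) := by
  refine continuous_pi fun b => Continuous.subtype_mk ?_ _
  have h := (vec_cont (m := m) (n := n) b).comp (continuous_subtype_val (p := (· ∈ Yset m k (2 * n + 2))))
  exact (h.norm.inv₀ fun z => norm_ne_zero_iff.2 (vec_ne z.2 b)).smul h

/-- Multiplication of the coordinates in block `b` by `exp(2πi/m)`. -/
noncomputable def rotz (b : Fin k) {L : ℕ} (z : Fin k × Fin L → ℂ) : Fin k × Fin L → ℂ :=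
  fun p => if p.1 = b then zt (1 : ZMod m) * z p else z p

theorem rotz_mem (b : Fin k) {L : ℕ} {z : Fin k × Fin L → ℂ} (hz : z ∈ Yset m k L) :
    rotz (m := m) b z ∈ Yset m k L := by
  refine ⟨fun p => ?_, fun b' => ?_⟩
  · rw [rotz]; split_ifs
    · exact cone_rot (hz.1 p)
    · exact hz.1 p
  · obtain ⟨j, hj⟩ := hz.2 b'
    refine ⟨j, ?_⟩
    rw [rotz]; split_ifs
    · rw [norm_mul, norm_zt, one_mul, hj]
    · exact hj

theorem Phi_rotz (b : Fin k) (z : Yset m k (2 * n + 2)) :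
    Phi ⟨rotz (m := m) b z.1, rotz_mem b z.2⟩ =
      Function.update (Phi z) b ((1 : ZMod m) +ᵥ Phi z b) := by
  funext b'
  by_cases h : b' = b
  · subst h
    rw [Function.update_self]
    have hv : vec m (rotz (m := m) b' z.1) b' = zt (1 : ZMod m) • vec m z.1 b' := by
      ext i; simp [vec, rotz]; ring
    apply Subtype.ext
    rw [vadd_coe]
    simp only [Phi, nrm, hv, norm_smul, norm_zt, one_mul]
    rw [smul_comm]
  · rw [Function.update_of_ne h]
    have hv : vec m (rotz (m := m) b z.1) b' = vec m z.1 b' := by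
      ext i; simp [vec, rotz, h]
    apply Subtype.ext
    simp only [Phi, nrm, hv]

theorem rl_rot {L M b : ℕ} (hb : b < k) {l₁ l₂ l₃ : List (TC m)} (h₁ : l₁.length = b * L)
    (h₂ : l₂.length = L) :
    rl k L M (l₁ ++ l₂.map rotL ++ l₃) = rotz (m := m) ⟨b, hb⟩ '' rl k L M (l₁ ++ l₂ ++ l₃) := by
  ext z
  constructor
  · intro hz
    have : ∀ p : Fin k × Fin L, ∃ w ∈ cs M ((l₁ ++ l₂ ++ l₃).getD (p.1 * L + p.2) .ctr),
        (if p.1 = (⟨b, hb⟩ : Fin k) then zt (1 : ZMod m) * w else w) = z p := by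
      intro p
      have := hz p
      rw [rot_getD h₁ h₂ p.1 p.2 p.2.2] at this
      by_cases h : (p.1 : ℕ) = b
      · rw [if_pos h, cs_rotL] at this
        simp only [if_pos (Fin.ext h : p.1 = ⟨b, hb⟩)]; exact this
      · rw [if_neg h] at this
        simp only [if_neg (fun e : p.1 = ⟨b, hb⟩ => h (congrArg Fin.val e))]
        exact ⟨_, this, rfl⟩
    choose w hw hw' using this
    exact ⟨w, hw, funext hw'⟩
  · rintro ⟨w, hw, rfl⟩ p
    rw [rot_getD h₁ h₂ p.1 p.2 p.2.2]
    by_cases h : (p.1 : ℕ) = b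
    · rw [if_pos h, cs_rotL, rotz, if_pos (Fin.ext h)]
      exact ⟨_, hw p, rfl⟩
    · rw [if_neg h, rotz, if_neg (fun e => h (congrArg Fin.val e))]
      exact hw p

end LensTC

/-! ### The lower bound -/

namespace LensTC
open Topology unitInterval
variable {m : ℕ} [NeZero m] {n k : ℕ}

/-- The cells of the product of joins are taken smaller than a Lebesgue number of the cover pulled
back along `Phi`. The colour of a cell is the least index of a member of the cover containing its
image, and its label is that of the section over this member; `no_coloring` excludes this. -/
theorem lower_bound (hC : (Nat.choose (2 * n) n : ZMod m) ≠ 0) (hk : 2 ≤ k) {r : ℕ}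
    (hr : r < k * (2 * n + 1)) : ¬ TCCoverAt (LensSpace m n) k r := by
  classical
  rintro ⟨U, hUo, hUc, hUs⟩
  choose lbl hconst hrotl using fun i => exists_label (m := m) (n := n) hk (hUs i)
  let PP : Yset m k (2 * n + 2) → Fin k → LensSpace m n := fun z a => pr m n (Phi z a)
  have hPP : Continuous PP := continuous_pi fun a =>
    pr_quot.continuous.comp ((continuous_apply a).comp Phi_cont)
  have : CompactSpace (Yset m k (2 * n + 2)) := isCompact_iff_compactSpace.1 (Yset_compact _)
  obtain ⟨δ, hδ, hleb⟩ := lebesgue_number_lemma_of_metric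
    (isCompact_univ (X := Yset m k (2 * n + 2))) (fun i => (hUo i).preimage hPP) (by
      intro z _
      have : PP z ∈ ⋃ i, U i := by rw [hUc]; trivial
      rw [Set.mem_iUnion] at this ⊢
      exact this)
  obtain ⟨M', hM'⟩ := exists_nat_gt (1 / δ)
  obtain ⟨M, hM, hMδ⟩ : ∃ M : ℕ, M ≠ 0 ∧ (1 : ℝ) / M < δ := by
    have h0 : (0 : ℝ) < M' := lt_trans (by positivity) hM'
    refine ⟨M', fun h => by rw [h] at h0; simp at h0, ?_⟩
    rw [div_lt_iff₀ h0]
    rw [div_lt_iff₀ hδ] at hM'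
    linarith
  -- the colours admissible for a word
  let good : List (TC m) → Fin r → Prop := fun Q i =>
    ∀ z : Yset m k (2 * n + 2), z.1 ∈ rl k (2 * n + 2) M Q → PP z ∈ U i
  have hgood : ∀ Q ∈ GWs M (2 * n + 2) k, ∃ i, good Q i := by
    intro Q hQ
    obtain ⟨z, hz⟩ := rl_nonempty k (2 * n + 2) M Q
    obtain ⟨i, hi⟩ := hleb ⟨z, rl_Yset hM hQ hz⟩ trivial
    refine ⟨i, fun w hw => hi ?_⟩
    rw [Metric.mem_ball]
    exact (rl_dist hw hz).trans_lt hMδ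
  let cols : List (TC m) → Set ℕ := fun Q => {c | ∃ h : c < r, good Q ⟨c, h⟩}
  have hcols : ∀ Q ∈ GWs M (2 * n + 2) k, (cols Q).Nonempty := fun Q hQ =>
    (hgood Q hQ).elim fun i hi => ⟨i, i.2, hi⟩
  have hmem : ∀ Q ∈ GWs M (2 * n + 2) k, sInf (cols Q) ∈ cols Q := fun Q hQ =>
    Nat.sInf_mem (hcols Q hQ)
  let lb : List (TC m) → Fin k → ZMod m := fun Q =>
    if h : Q ∈ GWs M (2 * n + 2) k then
      lbl ⟨sInf (cols Q), (hmem Q h).1⟩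
        (Phi ⟨(rl_nonempty k (2 * n + 2) M Q).some,
          rl_Yset hM h (rl_nonempty k (2 * n + 2) M Q).some_mem⟩)
    else 0
  -- the label can be computed at any point of the realisation
  have hlb : ∀ Q ∈ GWs M (2 * n + 2) k, ∀ z : Yset m k (2 * n + 2), z.1 ∈ rl k (2 * n + 2) M Q →
      ∀ i : Fin r, (i : ℕ) = sInf (cols Q) → lb Q = lbl i (Phi z) := by
    intro Q hQ z hz i hi
    obtain rfl : i = ⟨sInf (cols Q), (hmem Q hQ).1⟩ := Fin.ext hi
    simp only [lb, dif_pos hQ]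
    have hpre : IsPreconnected (Phi (m := m) (n := n) '' (Subtype.val ⁻¹' rl k (2 * n + 2) M Q)) := by
      refine IsPreconnected.image ?_ _ Phi_cont.continuousOn
      refine IsInducing.subtypeVal.isPreconnected_image.1 ?_
      rw [Subtype.image_preimage_coe, Set.inter_eq_right.2 (rl_Yset hM hQ)]
      exact rl_preconnected _ _ _ _
    refine hconst _ _ hpre ?_ _ ⟨_, ?_, rfl⟩ _ ⟨_, hz, rfl⟩
    · rintro _ ⟨w, hw, rfl⟩
      exact (hmem Q hQ).2 w hw
    · exact (rl_nonempty k (2 * n + 2) M Q).some_mem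
  refine no_coloring hC hk hM hr (fun Q => sInf (cols Q)) lb (fun Q hQ => (hmem Q hQ).1) ?_ ?_
  · intro Q hQ Q' hF
    have hQ' : Q' ∈ GWs M (2 * n + 2) k := hF.GWs hM hQ
    have hsub : cols Q ⊆ cols Q' := fun c ⟨hc, hg⟩ => ⟨hc, fun z hz => hg z (rl_face hF hz)⟩
    refine ⟨Nat.sInf_le (hsub (hmem Q hQ)), fun he => ?_⟩
    obtain ⟨z, hz⟩ := rl_nonempty k (2 * n + 2) M Q'
    let i : Fin r := ⟨sInf (cols Q), (hmem Q hQ).1⟩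
    rw [hlb Q' hQ' ⟨z, rl_Yset hM hQ' hz⟩ hz i he.symm,
      hlb Q hQ ⟨z, rl_Yset hM hQ' hz⟩ (rl_face hF hz) i rfl]
  · intro b e hbe l₁ h₁ l₂ h₂ l₃ h₃
    have hb : b < k := by omega
    have hQ : l₁ ++ l₂ ++ l₃ ∈ GWs M (2 * n + 2) k := by
      rw [← hbe]; exact GWs_append (GWs_append h₁ (GW_one h₂)) h₃
    have hr2 : l₂.map rotL ∈ GW M (2 * n + 2) := GW_rot h₂
    have hQr : l₁ ++ l₂.map rotL ++ l₃ ∈ GWs M (2 * n + 2) k := by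
      rw [← hbe]; exact GWs_append (GWs_append h₁ (GW_one hr2)) h₃
    have hrl := rl_rot (M := M) hb (GWs_length h₁) h₂.1 (l₃ := l₃)
    generalize hQd : l₁ ++ l₂ ++ l₃ = Q at *
    generalize hQd' : l₁ ++ l₂.map rotL ++ l₃ = Qr at *
    have hPr : ∀ z : Yset m k (2 * n + 2),
        PP ⟨rotz (m := m) ⟨b, hb⟩ z.1, rotz_mem _ z.2⟩ = PP z := by
      intro z; funext a
      simp only [PP, Phi_rotz]
      by_cases h : a = ⟨b, hb⟩
      · subst h; rw [Function.update_self, pr_vadd]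
      · rw [Function.update_of_ne h]
    have hcc : cols Qr = cols Q := by
      ext c
      refine exists_congr fun hc => ⟨fun hg z hz => ?_, fun hg z hz => ?_⟩
      · rw [← hPr]; exact hg _ (by rw [hrl]; exact ⟨_, hz, rfl⟩)
      · obtain ⟨z, hzY⟩ := z
        simp only [hrl] at hz
        obtain ⟨w, hw, rfl⟩ := hz
        have := hg ⟨w, rl_Yset hM hQ hw⟩ hw
        rw [← hPr] at this
        exact this
    refine ⟨by rw [hcc], ?_⟩
    obtain ⟨z, hz⟩ := rl_nonempty k (2 * n + 2) M Q
    let i : Fin r := ⟨sInf (cols Q), (hmem Q hQ).1⟩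
    let zY : Yset m k (2 * n + 2) := ⟨z, rl_Yset hM hQ hz⟩
    rw [hlb Q hQ zY hz i rfl, hlb Qr hQr ⟨rotz (m := m) ⟨b, hb⟩ zY.1, rotz_mem _ zY.2⟩
      (by rw [hrl]; exact ⟨_, hz, rfl⟩) i (by rw [hcc]), Phi_rotz]
    funext a
    rw [hrotl i (Phi zY) ((hmem Q hQ).2 zY hz) ⟨b, hb⟩ a]
    simp only [Fin.ext_iff]

end LensTC

/-! ### Criteria for sections -/

namespace LensTC
open Topology unitInterval

section
variable {X : Type*} [TopologicalSpace X]

/-- Consecutive homotopies `f 0 ≃ f 1 ≃ ⋯ ≃ f K` paste to a single map on `Y × ℝ`. -/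
theorem glue_homotopies {Y : Type*} [TopologicalSpace Y] (f : ℕ → C(Y, X)) (K : ℕ)
    (h : ∀ j < K, (f j).Homotopic (f (j + 1))) :
    ∃ F : C(Y × ℝ, X), ∀ j ≤ K, ∀ y, F (y, (j : ℝ)) = f j y := by
  induction K with
  | zero =>
    refine ⟨(f 0).comp ⟨Prod.fst, continuous_fst⟩, fun j hj y => ?_⟩
    obtain rfl : j = 0 := by omega
    rfl
  | succ K ih =>
    obtain ⟨F, hF⟩ := ih fun j hj => h j (by omega)
    obtain ⟨H⟩ := h K (by omega)
    refine ⟨⟨fun z => if z.2 ≤ (K : ℝ) then F (z.1, min z.2 K)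
      else H (Set.projIcc 0 1 zero_le_one (z.2 - K), z.1), ?_⟩, ?_⟩
    · refine Continuous.if_le (by fun_prop) ?_ continuous_snd continuous_const ?_
      · exact H.continuous.comp ((continuous_projIcc.comp (by fun_prop)).prodMk continuous_fst)
      · rintro ⟨y, t⟩ ht
        dsimp only at ht ⊢
        subst ht
        rw [min_self, hF K le_rfl, sub_self, Set.projIcc_left]
        exact (H.apply_zero y).symm
    · intro j hj y
      change (if ((j : ℝ)) ≤ (K : ℝ) then F (y, min (j : ℝ) K)
        else H (Set.projIcc 0 1 zero_le_one ((j : ℝ) - K), y)) = f j y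
      rcases Nat.lt_or_ge K j with h1 | h1
      · obtain rfl : j = K + 1 := by omega
        rw [if_neg (by push_cast; linarith)]
        rw [show ((K + 1 : ℕ) : ℝ) - K = 1 by push_cast; ring, Set.projIcc_right]
        exact H.apply_one y
      · have : (j : ℝ) ≤ K := by exact_mod_cast h1
        rw [if_pos this, min_eq_left this, hF j h1]

/-- The `a`-th coordinate, restricted to `U`. -/
def prj {k : ℕ} (U : Set (Fin k → X)) (a : Fin k) : C(U, X) :=
  ⟨fun u => u.1 a, (continuous_apply a).comp continuous_subtype_val⟩

/-- Over `U` there is a section of `π_k` as soon as consecutive coordinate projections `U → X`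
are homotopic. -/
theorem hasSec_of_homotopic {k : ℕ} (hk : 2 ≤ k) (U : Set (Fin k → X))
    (h : ∀ (j : ℕ) (hj : j + 1 < k), (prj U ⟨j, by omega⟩).Homotopic (prj U ⟨j + 1, hj⟩)) :
    HasSec k U := by
  let f : ℕ → C(U, X) := fun j => if hj : j < k then prj U ⟨j, hj⟩ else prj U ⟨0, by omega⟩
  obtain ⟨F, hF⟩ := glue_homotopies f (k - 1) (fun j hj => by
    have h1 : j < k := by omega
    have h2 : j + 1 < k := by omega
    simp only [f, dif_pos h1, dif_pos h2]
    exact h j h2)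
  let G : C(U × unitInterval, X) := ⟨fun z => F (z.1, ((k : ℝ) - 1) * z.2), by fun_prop⟩
  refine ⟨G.curry, fun u => funext fun a => ?_⟩
  have hk1 : (0 : ℝ) < (k : ℝ) - 1 := by
    have : (2 : ℝ) ≤ k := by exact_mod_cast hk
    linarith
  have ha : (a : ℝ) ≤ (k : ℝ) - 1 := by
    have : (a : ℕ) + 1 ≤ k := a.2
    have : ((a : ℕ) : ℝ) + 1 ≤ k := by exact_mod_cast this
    linarith
  have hm : (a : ℝ) / ((k : ℝ) - 1) ∈ Set.Icc (0 : ℝ) 1 :=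
    ⟨by positivity, by rw [div_le_one hk1]; exact ha⟩
  change F (u, ((k : ℝ) - 1) * ((Set.projIcc 0 1 zero_le_one ((a : ℝ) / ((k : ℝ) - 1)) :
    unitInterval) : ℝ)) = u.1 a
  rw [Set.projIcc_of_mem zero_le_one hm]
  dsimp only
  rw [mul_div_cancel₀ _ hk1.ne', hF a (by have := a.2; omega)]
  simp only [f, dif_pos a.2]
  rfl

/-- Sections over pairwise disjoint open sets combine to a section over the union. -/
theorem hasSec_iUnion {k : ℕ} {ι : Type*} (U : ι → Set (Fin k → X)) (ho : ∀ i, IsOpen (U i))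
    (hd : ∀ i j x, x ∈ U i → x ∈ U j → i = j) (hs : ∀ i, HasSec k (U i)) :
    HasSec k (⋃ i, U i) := by
  choose s hs using hs
  let S : ι → Set ↥(⋃ i, U i) := fun i => Subtype.val ⁻¹' U i
  let φ : ∀ i, C(S i, C(unitInterval, X)) := fun i =>
    (s i).comp ⟨fun x => ⟨x.1.1, x.2⟩, by fun_prop⟩
  have hφ : ∀ i j (x : ↥(⋃ i, U i)) (hxi : x ∈ S i) (hxj : x ∈ S j),
      φ i ⟨x, hxi⟩ = φ j ⟨x, hxj⟩ := by
    intro i j x hi hj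
    obtain rfl := hd i j x.1 hi hj
    rfl
  have hS : ∀ x : ↥(⋃ i, U i), ∃ i, S i ∈ 𝓝 x := by
    intro x
    obtain ⟨i, hi⟩ := Set.mem_iUnion.1 x.2
    exact ⟨i, ((ho i).preimage continuous_subtype_val).mem_nhds hi⟩
  refine ⟨ContinuousMap.liftCover S φ hφ hS, fun u => ?_⟩
  obtain ⟨i, hi⟩ := Set.mem_iUnion.1 u.2
  have := ContinuousMap.liftCover_coe (S := S) (φ := φ) (hφ := hφ) (hS := hS) (i := i) ⟨u, hi⟩
  rw [show (ContinuousMap.liftCover S φ hφ hS) u = s i ⟨u.1, hi⟩ from this, hs]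

/-- The points strictly closer to the stratum `τ = t` than to the union of the other strata of the
same weight. These sets are open, and disjoint for distinct types of equal weight. -/
noncomputable def nbhd {Z T : Type*} [PseudoEMetricSpace Z] (τ : Z → T) (wt : T → ℕ) (t : T) :
    Set Z :=
  {y | Metric.infEDist y (τ ⁻¹' {t}) <
    Metric.infEDist y {z | τ z ≠ t ∧ wt (τ z) = wt t}}

section
variable {Z T : Type*} [PseudoEMetricSpace Z] (τ : Z → T) (wt : T → ℕ)

theorem nbhd_open (t : T) : IsOpen (nbhd τ wt t) :=
  isOpen_lt Metric.continuous_infEDist Metric.continuous_infEDist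

/-- If points near `x` of the same weight as `x` have the same type as `x`, then `x` is not in the
closure of the other strata of its weight. -/
theorem mem_nbhd (h : ∀ x, ∀ᶠ y in 𝓝 x, wt (τ y) = wt (τ x) → τ y = τ x) (x : Z) :
    x ∈ nbhd τ wt (τ x) := by
  have h0 : Metric.infEDist x (τ ⁻¹' {τ x}) = 0 := Metric.infEDist_zero_of_mem (by simp)
  rw [nbhd, Set.mem_ofPred_eq]
  rw [h0, pos_iff_ne_zero, Ne, ← Metric.mem_closure_iff_infEDist_zero, mem_closure_iff_frequently]
  intro hf
  obtain ⟨y, ⟨hy1, hy2⟩, hy3⟩ := (hf.and_eventually (h x)).exists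
  exact hy1 (hy3 hy2)

theorem nbhd_disj {t t' : T} (hw : wt t = wt t') {y : Z} (h : y ∈ nbhd τ wt t)
    (h' : y ∈ nbhd τ wt t') : t = t' := by
  by_contra hne
  have h1 : Metric.infEDist y {z | τ z ≠ t ∧ wt (τ z) = wt t} ≤ Metric.infEDist y (τ ⁻¹' {t'}) :=
    Metric.infEDist_anti fun z hz => by
      have hz : τ z = t' := hz
      exact ⟨by rw [hz]; exact fun h => hne h.symm, by rw [hz, hw]⟩
  have h2 : Metric.infEDist y {z | τ z ≠ t' ∧ wt (τ z) = wt t'} ≤ Metric.infEDist y (τ ⁻¹' {t}) :=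
    Metric.infEDist_anti fun z hz => by
      have hz : τ z = t := hz
      exact ⟨by rw [hz]; exact hne, by rw [hz, hw]⟩
  exact lt_irrefl _ ((lt_of_lt_of_le (lt_of_lt_of_le h h1) h'.le).trans_le h2)

theorem nbhd_invariant (e : Z ≃ᵢ Z) (he : ∀ z, τ (e z) = τ z) {t : T} {y : Z}
    (h : y ∈ nbhd τ wt t) : e y ∈ nbhd τ wt t := by
  have key : ∀ S : Set Z, (∀ z, e z ∈ S ↔ z ∈ S) →
      Metric.infEDist (e y) S = Metric.infEDist y S := by
    intro S hS
    have : e '' S = S := by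
      ext z
      constructor
      · rintro ⟨w, hw, rfl⟩; exact (hS w).2 hw
      · intro hz
        exact ⟨e.symm z, (hS _).1 (by simpa using hz), by simp⟩
    conv_lhs => rw [← this]
    exact Metric.infEDist_image e.isometry
  rw [nbhd, Set.mem_ofPred_eq]
  rw [key _ (by simp [he]), key _ (by simp [he])]
  exact h

end
end
end LensTC

/-! ### The stratification by types -/

namespace LensTC
open Topology unitInterval

section
open Finset

theorem exists_factor {ι α β : Type*} [Inhabited α] (S : Finset ι) (f : ι → α) (g : ι → β)
    (h : ∀ a ∈ S, ∀ b ∈ S, g a = g b → f a = f b) : ∃ e : β → α, ∀ a ∈ S, e (g a) = f a := by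
  classical
  refine ⟨fun v => if hv : ∃ a ∈ S, g a = v then f hv.choose else default, fun a ha => ?_⟩
  have hv : ∃ b ∈ S, g b = g a := ⟨a, ha, rfl⟩
  dsimp only
  rw [dif_pos hv]
  exact h _ hv.choose_spec.1 _ ha hv.choose_spec.2

open Classical in
theorem card_image_le_of_factor {ι α β : Type*} [Inhabited α] (S : Finset ι) (f : ι → α)
    (g : ι → β) (h : ∀ a ∈ S, ∀ b ∈ S, g a = g b → f a = f b) :
    #(S.image f) ≤ #(S.image g) ∧
      (#(S.image f) = #(S.image g) → ∀ a ∈ S, ∀ b ∈ S, f a = f b → g a = g b) := by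
  obtain ⟨e, he⟩ := exists_factor S f g h
  have him : S.image f = (S.image g).image e := by
    rw [image_image]
    exact image_congr fun a ha => (he a ha).symm
  refine ⟨by rw [him]; exact card_image_le, fun hc a ha b hb hab => ?_⟩
  rw [him, card_image_iff] at hc
  exact hc (by simpa using ⟨a, ha, rfl⟩) (by simpa using ⟨b, hb, rfl⟩)
    (by rw [he a ha, he b hb, hab])

open Classical in
/-- If the indices `ix` can only drop, and values of `A` can only become equal at positions where
the index drops, then equality of the weights forces the indices and the partition into level sets
to be the same. -/
theorem rigid {k : ℕ} {α : Type*} [Inhabited α] (ix iy : Fin k → ℕ) (A B : Fin k → α)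
    (h1 : ∀ a, iy a ≤ ix a)
    (h2 : ∀ a b, iy a = ix a → iy b = ix b → B a = B b → A a = A b)
    (hw : 2 * ∑ a, iy a + (k - #(univ.image B)) = 2 * ∑ a, ix a + (k - #(univ.image A))) :
    iy = ix ∧ ∀ a b, A a = A b ↔ B a = B b := by
  let S : Finset (Fin k) := {a | iy a = ix a}
  let D : Finset (Fin k) := {a | ¬ iy a = ix a}
  have hk : ∀ C : Fin k → α, #(univ.image C) ≤ k := fun C => by
    simpa using card_image_le (s := univ) (f := C)
  have hs : ∑ a, iy a + #D ≤ ∑ a, ix a := by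
    rw [card_eq_sum_ones, sum_filter, ← sum_add_distrib]
    refine sum_le_sum fun a _ => ?_
    have := h1 a
    split_ifs <;> omega
  have hb : #(univ.image A) ≤ #(univ.image B) + #D := by
    have hu : (univ : Finset (Fin k)) = S ∪ D := (filter_union_filter_not_eq _ _).symm
    calc #(univ.image A) = #(S.image A ∪ D.image A) := by rw [hu, image_union]
      _ ≤ #(S.image A) + #(D.image A) := card_union_le _ _
      _ ≤ #(S.image B) + #D := add_le_add (card_image_le_of_factor S A B
          (fun a ha b hb => h2 a b (mem_filter.1 ha).2 (mem_filter.1 hb).2)).1 card_image_le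
      _ ≤ _ := by gcongr; exact subset_univ _
  have hA := hk A
  have hB := hk B
  -- Each index in `D` lowers the weight by at least two, while the number of classes lost there
  -- raises it by at most one.
  have hD : #D = 0 := by omega
  have hii : ∀ a, iy a = ix a := fun a => by
    by_contra h
    have : a ∈ D := mem_filter.2 ⟨mem_univ _, h⟩
    rw [card_eq_zero.1 hD] at this
    exact notMem_empty _ this
  have hii' : iy = ix := funext hii
  rw [hii'] at hw
  have h3 := card_image_le_of_factor univ A B fun a _ b _ => h2 a b (hii a) (hii b)
  exact ⟨hii', fun a b => ⟨h3.2 (by omega) a (mem_univ _) b (mem_univ _),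
    h2 a b (hii a) (hii b)⟩⟩

end

open ComplexConjugate in
theorem same_arg {z w : ℂ} (hz : z ≠ 0) (hw : w ≠ 0) (h : z.arg = w.arg) :
    w * conj z ∈ Complex.slitPlane ∧ - (w * conj z) ∉ Complex.slitPlane := by
  have h1 := (Complex.arg_eq_arg_iff hz hw).1 h
  have h2 : w * conj z = ((‖w‖ * ‖z‖ : ℝ) : ℂ) := by
    have h3 : (‖z‖ : ℂ) ≠ 0 := by exact_mod_cast norm_ne_zero_iff.2 hz
    calc w * conj z = (‖w‖ / ‖z‖ : ℂ) * z * conj z := by rw [h1]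
      _ = (‖w‖ / ‖z‖ : ℂ) * (‖z‖ ^ 2 : ℝ) := by
        rw [mul_assoc, Complex.mul_conj, Complex.normSq_eq_norm_sq]
      _ = _ := by push_cast; field_simp
  have h3 : 0 < ‖w‖ * ‖z‖ := mul_pos (norm_pos_iff.2 hw) (norm_pos_iff.2 hz)
  rw [h2, Complex.ofReal_mem_slitPlane, Complex.neg_ofReal_mem_slitPlane]
  exact ⟨h3, by linarith⟩

open ComplexConjugate ComplexOrder in
theorem diff_arg {z w : ℂ} (hz : z ≠ 0) (hw : w ≠ 0) (h : z.arg ≠ w.arg) :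
    - (w * conj z) ∈ Complex.slitPlane := by
  by_contra hn
  rw [Complex.mem_slitPlane_iff_not_le_zero, not_not, neg_nonpos] at hn
  obtain ⟨r, hr, h1⟩ := RCLike.nonneg_iff_exists_ofReal.1 hn
  have h1 : (r : ℂ) = w * conj z := h1
  have hr' : 0 < r := by
    refine lt_of_le_of_ne hr fun h0 => ?_
    rw [← h0, Complex.ofReal_zero, eq_comm, mul_eq_zero] at h1
    rcases h1 with h1 | h1
    · exact hw h1
    · exact hz (by simpa using h1)
  apply h
  have hz2 : 0 < Complex.normSq z := Complex.normSq_pos.2 hz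
  have h2 : (r : ℂ) * z = (Complex.normSq z : ℂ) * w := by
    rw [h1, mul_assoc, mul_comm (conj z), Complex.mul_conj, mul_comm]
  rw [← Complex.arg_real_mul z hr', h2, Complex.arg_real_mul w hz2]

section
variable {n k : ℕ}

theorem supp_nonempty (x : Sph n) :
    (Finset.univ.filter fun i : Fin (n + 1) => x.1 i ≠ 0).Nonempty := by
  by_contra h
  rw [Finset.not_nonempty_iff_eq_empty, Finset.filter_eq_empty_iff] at h
  have h0 : x.1 = 0 := by
    refine PiLp.ext fun i => ?_
    simpa using h (Finset.mem_univ i)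
  have := x.2
  rw [mem_sphere_zero_iff_norm, h0, norm_zero] at this
  exact zero_ne_one this

/-- The position of the first non-zero coordinate of a point of the sphere. -/
noncomputable def fst (x : Sph n) : Fin (n + 1) :=
  (Finset.univ.filter fun i : Fin (n + 1) => x.1 i ≠ 0).min' (supp_nonempty x)

theorem fst_ne (x : Sph n) : x.1 (fst x) ≠ 0 := by
  have : fst x ∈ _ := Finset.min'_mem _ (supp_nonempty x)
  exact (Finset.mem_filter.1 this).2

theorem fst_le {x : Sph n} {i : Fin (n + 1)} (h : x.1 i ≠ 0) :
    fst x ≤ i :=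
  Finset.min'_le _ i (Finset.mem_filter.2 ⟨Finset.mem_univ i, h⟩)

variable (n k) in
/-- Types of points of `(S^{2n+1})^k`: the positions of the first non-zero coordinates, and a
relation on the set of factors. -/
abbrev Ty : Type := (Fin k → Fin (n + 1)) × (Fin k → Fin k → Prop)

variable (m : ℕ)

/-- The `m`-th power of the first non-zero coordinate, which only depends on the image in the
lens space. -/
noncomputable def ld (x : Sph n) : ℂ := (x.1 (fst x)) ^ m

theorem ld_ne (x : Sph n) : ld m x ≠ 0 := pow_ne_zero _ (fst_ne x)

/-- The type of `y`: the positions of the first non-zero coordinates, and the relation for two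
factors to have leading coordinates whose `m`-th powers have the same argument. -/
noncomputable def ty (y : Fin k → Sph n) : Ty n k :=
  (fun a => fst (y a), fun a b => (ld m (y a)).arg = (ld m (y b)).arg)

open Classical in
/-- The weight of a type: twice the sum of the positions plus `k` minus the number of classes.
Classes are counted as distinct rows of the relation. -/
noncomputable def wgt (t : Ty n k) : ℕ :=
  2 * ∑ a, (t.1 a : ℕ) + (k - (Finset.univ.image t.2).card)

theorem wgt_lt (hk : 0 < k) (t : Ty n k) : wgt t < k * (2 * n + 1) := by
  classical
  have h1 : ∑ a, (t.1 a : ℕ) ≤ k * n := by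
    calc ∑ a, (t.1 a : ℕ) ≤ ∑ _a : Fin k, n :=
          Finset.sum_le_sum fun a _ => Nat.lt_succ_iff.1 (t.1 a).2
      _ = k * n := by simp
  have h2 : 0 < (Finset.univ.image t.2).card :=
    Finset.card_pos.2 ⟨_, Finset.mem_image_of_mem _ (Finset.mem_univ ⟨0, hk⟩)⟩
  have h3 : k * (2 * n + 1) = 2 * (k * n) + k := by ring
  unfold wgt
  omega

open ComplexConjugate in
/-- When `y_{a,i}` is not zero, a positive multiple of the quotient of the `m`-th powers of the
coordinates `y_{b,j}` and `y_{a,i}`. -/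
noncomputable def rat (a b : Fin k) (i j : Fin (n + 1)) (y : Fin k → Sph n) : ℂ :=
  (y b).1 j ^ m * conj ((y a).1 i ^ m)

theorem coord_cont (a : Fin k) (i : Fin (n + 1)) :
    Continuous fun y : Fin k → Sph n => (y a).1 i := by
  fun_prop

theorem rat_cont (a b : Fin k) (i j : Fin (n + 1)) :
    Continuous (rat (k := k) m a b i j) :=
  ((coord_cont b j).pow m).mul (Complex.continuous_conj.comp ((coord_cont a i).pow m))

theorem ty_rel_eq {y : Fin k → Sph n} {a b : Fin k} :
    (ty m y).2 a = (ty m y).2 b ↔ (ld m (y a)).arg = (ld m (y b)).arg := by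
  constructor
  · intro h
    have : (ty m y).2 b b := rfl
    rw [← h] at this
    exact this
  · intro h
    funext c
    simp only [ty, h]

/-- Near `x` the first non-zero positions can only drop, and arguments that differ at `x` stay
different as long as the positions do not drop, so `rigid` applies. -/
theorem ty_local (x : Fin k → Sph n) :
    ∀ᶠ y in 𝓝 x, wgt (ty m y) = wgt (ty m x) → ty m y = ty m x := by
  have e1 : ∀ᶠ y in 𝓝 x, ∀ a, (y a).1 (fst (x a)) ≠ 0 :=
    Filter.eventually_all.2 fun a => (coord_cont a _).continuousAt.eventually_ne (fst_ne (x a))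
  have e2 : ∀ᶠ y in 𝓝 x, ∀ a b, (ld m (x a)).arg ≠ (ld m (x b)).arg →
      - rat m a b (fst (x a)) (fst (x b)) y ∈ Complex.slitPlane := by
    refine Filter.eventually_all.2 fun a => Filter.eventually_all.2 fun b => ?_
    by_cases h : (ld m (x a)).arg = (ld m (x b)).arg
    · exact Filter.Eventually.of_forall fun y h' => absurd h h'
    · have := (rat_cont m a b (fst (x a)) (fst (x b))).neg.continuousAt (x := x)
      exact (this.eventually (Complex.isOpen_slitPlane.mem_nhds
        (diff_arg (ld_ne m _) (ld_ne m _) h))).mono fun y hy _ => hy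
  filter_upwards [e1, e2] with y h1 h2 hw
  have key := rigid (fun a => (fst (x a) : ℕ)) (fun a => (fst (y a) : ℕ)) (ty m x).2 (ty m y).2
    (fun a => fst_le (h1 a)) (by
      intro a b ha hb hab
      rw [ty_rel_eq] at hab ⊢
      by_contra hne
      have ha : fst (y a) = fst (x a) := Fin.ext ha
      have hb : fst (y b) = fst (x b) := Fin.ext hb
      have h3 := h2 a b hne
      rw [← ha, ← hb] at h3
      exact (same_arg (ld_ne m _) (ld_ne m _) hab).2 h3) (by unfold wgt at hw; convert hw <;> rfl)
  refine Prod.ext (funext fun a => Fin.ext (congrFun key.1 a)) ?_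
  funext a b
  have := key.2 a b
  rw [ty_rel_eq, ty_rel_eq] at this
  exact propext this.symm

/-- An open condition satisfied by the points of type `t` (`mem_good`): the ratios of the `m`-th
powers of coordinates avoid the negative half-axis for related factors, and the positive one for
unrelated factors. On this set the argument of each ratio has a continuous choice. -/
def good (t : Ty n k) : Set (Fin k → Sph n) :=
  {y | ∀ a b, (t.2 a b → rat m a b (t.1 a) (t.1 b) y ∈ Complex.slitPlane) ∧
    (¬ t.2 a b → - rat m a b (t.1 a) (t.1 b) y ∈ Complex.slitPlane)}

theorem good_open (t : Ty n k) : IsOpen (good m t) := by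
  simp only [good, Set.ofPred_forall]
  refine isOpen_iInter_of_finite fun a => isOpen_iInter_of_finite fun b => ?_
  by_cases h : t.2 a b
  · simp only [h, true_implies, not_true, false_implies, and_true]
    exact Complex.isOpen_slitPlane.preimage (rat_cont m a b _ _)
  · simp only [h, false_implies, not_false_eq_true, true_implies, true_and]
    exact Complex.isOpen_slitPlane.preimage (rat_cont m a b _ _).neg

theorem mem_good (y : Fin k → Sph n) : y ∈ good m (ty m y) := fun _ _ =>
  ⟨fun h => (same_arg (ld_ne m _) (ld_ne m _) h).1, fun h => diff_arg (ld_ne m _) (ld_ne m _) h⟩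

end
end LensTC

/-! ### Homotopies in the lens space -/

namespace LensTC
open Topology unitInterval

section
variable {X A U : Type*} [TopologicalSpace X] [TopologicalSpace A] [TopologicalSpace U]

/-- A map that is constant on the fibres of an open quotient map descends. -/
theorem exists_desc {q : A → U} (hq : IsOpenQuotientMap q) (F : A → X) (hF : Continuous F)
    (hinv : ∀ y y', q y = q y' → F y = F y') : ∃ f : C(U, X), ∀ y, f (q y) = F y :=
  ⟨IsQuotientMap.lift (f := ⟨q, hq.continuous⟩) hq.isQuotientMap ⟨F, hF⟩ fun y y' => hinv y y',
    fun y => congrFun (congrArg DFunLike.coe (IsQuotientMap.lift_comp (f := ⟨q, hq.continuous⟩)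
      hq.isQuotientMap ⟨F, hF⟩ fun y y' => hinv y y')) y⟩

/-- A homotopy upstairs which is constant on the fibres of `q` gives a homotopy downstairs. -/
theorem homotopic_of_lift {q : A → U} (hq : IsOpenQuotientMap q) (f g : C(U, X))
    (H : unitInterval × A → X) (hH : Continuous H)
    (hinv : ∀ s y y', q y = q y' → H (s, y) = H (s, y'))
    (h0 : ∀ y, H (0, y) = f (q y)) (h1 : ∀ y, H (1, y) = g (q y)) : f.Homotopic g := by
  obtain ⟨G, hG⟩ := exists_desc (IsOpenQuotientMap.id.prodMap hq) H hH (by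
    rintro ⟨s, y⟩ ⟨s', y'⟩ h
    obtain ⟨rfl, h2⟩ := Prod.mk.inj h
    exact hinv _ y y' h2)
  refine ⟨⟨G, fun u => ?_, fun u => ?_⟩⟩
  · obtain ⟨y, rfl⟩ := hq.surjective u
    rw [← h0]; exact hG (0, y)
  · obtain ⟨y, rfl⟩ := hq.surjective u
    rw [← h1]; exact hG (1, y)

end

section
variable {m : ℕ} [NeZero m] {n k : ℕ}

theorem nrm_cont {A : Type*} [TopologicalSpace A] (v : A → EuclideanSpace ℂ (Fin (n + 1)))
    (hv : Continuous v) (h : ∀ z, v z ≠ 0) : Continuous fun z => nrm (v z) (h z) := by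
  refine Continuous.subtype_mk ?_ _
  exact (hv.norm.inv₀ fun z => norm_ne_zero_iff.2 (h z)).smul hv

variable (m) in
/-- The point of the lens space represented by a non-zero vector. -/
noncomputable def Pz (v : EuclideanSpace ℂ (Fin (n + 1))) (h : v ≠ 0) : LensSpace m n :=
  pr m n (nrm v h)

omit [NeZero m] in
theorem Pz_cont {A : Type*} [TopologicalSpace A] (v : A → EuclideanSpace ℂ (Fin (n + 1)))
    (hv : Continuous v) (h : ∀ z, v z ≠ 0) : Continuous fun z => Pz m (v z) (h z) :=
  pr_quot.continuous.comp (nrm_cont v hv h)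

/-- Vectors that differ by a factor `c` with `c ^ m` real and positive represent the same point of
the lens space. -/
theorem Pz_eq {v v' : EuclideanSpace ℂ (Fin (n + 1))} (h : v ≠ 0) (h' : v' ≠ 0) (c : ℂ) (r : ℝ)
    (hr : 0 < r) (hc : c ^ m = r) (hv : v' = c • v) : Pz m v' h' = Pz m v h := by
  have hc0 : c ≠ 0 := by
    rintro rfl
    rw [zero_pow (NeZero.ne m), eq_comm, Complex.ofReal_eq_zero] at hc
    exact hr.ne' hc
  have hn : ‖c‖ ^ m = r := by
    rw [← norm_pow, hc, Complex.norm_real, Real.norm_of_nonneg hr.le]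
  have hcn : (‖c‖ : ℂ) ≠ 0 := by exact_mod_cast norm_ne_zero_iff.2 hc0
  have hu : (Units.mk0 (c / ‖c‖) (div_ne_zero hc0 hcn)) ^ m = 1 := by
    ext
    rw [Units.val_pow_eq_pow_val, Units.val_mk0, div_pow, hc, ← Complex.ofReal_pow, hn,
      div_self (by exact_mod_cast hr.ne'), Units.val_one]
  obtain ⟨g, hg⟩ := exists_zt hu
  refine pr_eq_iff.2 ⟨g, Subtype.ext ?_⟩
  rw [vadd_coe, hg, Units.val_mk0]
  change (c / ‖c‖ : ℂ) • ((‖v‖⁻¹ : ℝ) • v) = (‖v'‖⁻¹ : ℝ) • v'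
  rw [hv, norm_smul, ← Complex.coe_smul, ← Complex.coe_smul, smul_smul, smul_smul]
  congr 1
  push_cast
  rw [mul_inv]
  ring

omit [NeZero m] in
theorem Pz_self (x : Sph n) (h : x.1 ≠ 0) : Pz m x.1 h = pr m n x := by
  have := x.2
  rw [mem_sphere_zero_iff_norm] at this
  refine congrArg _ (Subtype.ext ?_)
  simp only [nrm, this, inv_one, one_smul]

variable (m n k) in
/-- The projection `(S^{2n+1})^k → (L^{2n+1}_m)^k`. -/
noncomputable def prs (y : Fin k → Sph n) : Fin k → LensSpace m n := fun a => pr m n (y a)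

theorem prs_open : IsOpenQuotientMap (prs m n k) :=
  IsOpenQuotientMap.piMap fun _ => pr_open (m := m) (n := n)

/-- The restriction of the projection to an open set and its image. -/
noncomputable def prV (V : Set (Fin k → Sph n)) : V → ↥(prs m n k '' V) :=
  fun y => ⟨prs m n k y, y, y.2, rfl⟩

theorem prV_open {V : Set (Fin k → Sph n)} (hV : IsOpen V) :
    IsOpenQuotientMap (prV (m := m) V) := by
  refine ⟨?_, (prs_open.continuous.comp continuous_subtype_val).subtype_mk _, fun W hW => ?_⟩
  · rintro ⟨_, y, hy, rfl⟩
    exact ⟨⟨y, hy⟩, rfl⟩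
  · refine ⟨prs m n k '' (Subtype.val '' W), prs_open.isOpenMap _ (hV.isOpenMap_subtype_val _ hW),
      ?_⟩
    ext u
    constructor
    · rintro ⟨_, ⟨y, hy, rfl⟩, h⟩
      exact ⟨y, hy, Subtype.ext h⟩
    · rintro ⟨y, hy, rfl⟩
      exact ⟨_, ⟨y, hy, rfl⟩, rfl⟩

theorem prV_eq {V : Set (Fin k → Sph n)} {y y' : V} (h : prV (m := m) V y = prV V y')
    (a : Fin k) : ∃ g : ZMod m, (y'.1 a).1 = zt g • (y.1 a).1 := by
  have : pr m n (y'.1 a) = pr m n (y.1 a) := (congrFun (Subtype.ext_iff.1 h) a).symm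
  obtain ⟨g, hg⟩ := pr_eq_iff.1 this
  exact ⟨g, by rw [← hg]; rfl⟩

theorem zt_pow' (g : ZMod m) : zt g ^ m = ((1 : ℝ) : ℂ) := by rw [zt_pow, Complex.ofReal_one]

theorem vec_cont' (V : Set (Fin k → Sph n)) (a : Fin k) :
    Continuous fun z : unitInterval × V => (z.2.1 a).1 :=
  continuous_subtype_val.comp
    ((continuous_apply a).comp (continuous_subtype_val.comp continuous_snd))

theorem entry_cont' (V : Set (Fin k → Sph n)) (a : Fin k) (i : Fin (n + 1)) :
    Continuous fun z : unitInterval × V => (z.2.1 a).1 i :=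
  (coord_cont a i).comp (continuous_subtype_val.comp continuous_snd)

/-- Straight-line homotopy from the `a`-th coordinate to its `i`-th entry times a fixed
vector `w`. -/
theorem homotopic_axis {V : Set (Fin k → Sph n)} (hV : IsOpen V) (a : Fin k) (i : Fin (n + 1))
    (hi : ∀ y ∈ V, (y a).1 i ≠ 0) (w : EuclideanSpace ℂ (Fin (n + 1))) (r : ℝ) (hr : 0 < r)
    (hw : w i = r) (f : C(↥(prs m n k '' V), LensSpace m n))
    (hf : ∀ (y : V) h, f (prV V y) = Pz m (((y.1 a).1 i) • w) h) :
    (prj (prs m n k '' V) a).Homotopic f := by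
  let v : unitInterval × V → EuclideanSpace ℂ (Fin (n + 1)) := fun z =>
    ((1 - (z.1 : ℝ) : ℝ) : ℂ) • (z.2.1 a).1 + ((z.1 : ℝ) : ℂ) • ((z.2.1 a).1 i) • w
  have hvc : Continuous v := by
    have h1 : Continuous fun z : unitInterval × V => (z.2.1 a).1 := vec_cont' V a
    have h2 : Continuous fun z : unitInterval × V => (z.2.1 a).1 i := entry_cont' V a i
    have h3 : Continuous fun z : unitInterval × V => ((z.1 : ℝ) : ℂ) := by fun_prop
    have h4 : Continuous fun z : unitInterval × V => ((1 - (z.1 : ℝ) : ℝ) : ℂ) := by fun_prop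
    exact (h4.smul h1).add (h3.smul (h2.smul continuous_const))
  have hv0 : ∀ z, v z ≠ 0 := by
    intro z h
    have h1 : v z i = 0 := by rw [h]; rfl
    have h2 : v z i = (((1 - (z.1 : ℝ)) + z.1 * r : ℝ) : ℂ) * (z.2.1 a).1 i := by
      simp only [v, PiLp.add_apply, PiLp.smul_apply, hw, smul_eq_mul]
      push_cast
      ring
    rw [h2, mul_eq_zero] at h1
    refine h1.elim (fun h1 => ?_) (hi _ z.2.2)
    rw [Complex.ofReal_eq_zero] at h1
    rcases z.1.2.1.eq_or_lt with h0 | h0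
    · rw [← h0] at h1; simp at h1
    · have := z.1.2.2
      have := mul_pos h0 hr
      linarith
  refine homotopic_of_lift (prV_open hV) _ _ (fun z => Pz m (v z) (hv0 z)) (Pz_cont v hvc hv0)
    ?_ ?_ ?_
  · intro s y y' h
    obtain ⟨g, hg⟩ := prV_eq h a
    refine (Pz_eq _ _ (zt g) 1 one_pos (zt_pow' g) ?_).symm
    simp only [v, hg, PiLp.smul_apply, smul_eq_mul, smul_add, smul_smul]
    congr 2 <;> ring
  · intro y
    have h0 : v (0, y) = (y.1 a).1 := by simp [v]
    simp only [h0, Pz_self]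
    rfl
  · intro y
    have h0 : v (1, y) = ((y.1 a).1 i) • w := by simp [v]
    simp only [h0]
    rw [hf]

/-- Rotating the vector `y_{a,i} w` through the angle `θ(y)`. -/
theorem homotopic_twist {V : Set (Fin k → Sph n)} (hV : IsOpen V) (a b : Fin k)
    (i j : Fin (n + 1)) (hi : ∀ y ∈ V, (y a).1 i ≠ 0) (hj : ∀ y ∈ V, (y b).1 j ≠ 0)
    (w : EuclideanSpace ℂ (Fin (n + 1))) (hw : w ≠ 0) (θ : V → ℝ) (hθ : Continuous θ)
    (hinv : ∀ y y', prV (m := m) V y = prV V y' → θ y = θ y')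
    (hθe : ∀ y : V, ∃ r : ℝ, 0 < r ∧
      r * ((y.1 a).1 i * Complex.exp (θ y * Complex.I)) ^ m = ((y.1 b).1 j) ^ m)
    (f g : C(↥(prs m n k '' V), LensSpace m n))
    (hf : ∀ (y : V) h, f (prV V y) = Pz m (((y.1 a).1 i) • w) h)
    (hg : ∀ (y : V) h, g (prV V y) = Pz m (((y.1 b).1 j) • w) h) : f.Homotopic g := by
  let c : unitInterval × V → ℂ := fun z =>
    (z.2.1 a).1 i * Complex.exp (((z.1 : ℝ) * θ z.2 : ℝ) * Complex.I)
  have hc : Continuous c := by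
    have h2 : Continuous fun z : unitInterval × V => (z.2.1 a).1 i := entry_cont' V a i
    have h3 : Continuous fun z : unitInterval × V => (((z.1 : ℝ) * θ z.2 : ℝ) : ℂ) :=
      Complex.continuous_ofReal.comp
        ((continuous_subtype_val.comp continuous_fst).mul (hθ.comp continuous_snd))
    exact h2.mul (Complex.continuous_exp.comp (h3.mul continuous_const))
  have hc0 : ∀ z, c z ≠ 0 := fun z => mul_ne_zero (hi _ z.2.2) (Complex.exp_ne_zero _)
  have hv0 : ∀ z, c z • w ≠ 0 := fun z => smul_ne_zero (hc0 z) hw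
  refine homotopic_of_lift (prV_open hV) _ _ (fun z => Pz m (c z • w) (hv0 z))
    (Pz_cont _ (hc.smul continuous_const) hv0) ?_ ?_ ?_
  · intro s y y' h
    obtain ⟨g, hg⟩ := prV_eq h a
    refine (Pz_eq _ _ (zt g) 1 one_pos (zt_pow' g) ?_).symm
    simp only [c, hg, PiLp.smul_apply, smul_eq_mul, smul_smul, hinv y y' h, mul_assoc]
  · intro y
    have h0 : c (0, y) = (y.1 a).1 i := by simp [c]
    simp only [h0]
    rw [hf]
  · intro y
    obtain ⟨r, hr, h⟩ := hθe y
    have h0 : c (1, y) = (y.1 a).1 i * Complex.exp (θ y * Complex.I) := by simp [c]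
    have h1 : (y.1 b).1 j • w ≠ 0 := smul_ne_zero (hj _ y.2) hw
    rw [hg y h1]
    refine (Pz_eq _ _ ((y.1 b).1 j / c (1, y)) r hr ?_ ?_).symm
    · rw [div_pow, ← h, ← h0, mul_div_assoc, div_self (pow_ne_zero _ (hc0 _)), mul_one]
    · rw [smul_smul, div_mul_cancel₀ _ (hc0 _)]

end
end LensTC

/-! ### The upper bound -/

namespace LensTC
open Topology unitInterval

section
variable {m : ℕ} [NeZero m] {n k : ℕ}

open ComplexConjugate in
/-- If `φ` is an argument of `w^m / z^m`, then rotating `z` through `φ / m` gives a number whose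
`m`-th power is positively proportional to `w^m`. -/
theorem angle_eq {z w : ℂ} (hz : z ≠ 0) (hw : w ≠ 0) (φ : ℝ)
    (h : ‖w ^ m * conj (z ^ m)‖ * Complex.exp (φ * Complex.I) = w ^ m * conj (z ^ m)) :
    ∃ r : ℝ, 0 < r ∧ r * (z * Complex.exp ((φ / m : ℝ) * Complex.I)) ^ m = w ^ m := by
  have hzm : z ^ m ≠ 0 := pow_ne_zero _ hz
  have hn : 0 < Complex.normSq (z ^ m) := Complex.normSq_pos.2 hzm
  have hR : 0 < ‖w ^ m * conj (z ^ m)‖ := by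
    rw [norm_pos_iff]
    exact mul_ne_zero (pow_ne_zero _ hw) ((map_ne_zero _).2 hzm)
  refine ⟨‖w ^ m * conj (z ^ m)‖ / Complex.normSq (z ^ m), div_pos hR hn, ?_⟩
  have he : Complex.exp ((φ / m : ℝ) * Complex.I) ^ m = Complex.exp (φ * Complex.I) := by
    rw [← Complex.exp_nat_mul]
    congr 1
    have : (m : ℂ) ≠ 0 := NeZero.ne _
    push_cast
    field_simp
  have hn' : (Complex.normSq (z ^ m) : ℂ) ≠ 0 := by exact_mod_cast hn.ne'
  rw [mul_pow, he]
  calc ((‖w ^ m * conj (z ^ m)‖ / Complex.normSq (z ^ m) : ℝ) : ℂ) *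
        (z ^ m * Complex.exp (φ * Complex.I))
      = (‖w ^ m * conj (z ^ m)‖ * Complex.exp (φ * Complex.I)) * z ^ m /
        Complex.normSq (z ^ m) := by push_cast; ring
    _ = w ^ m * (z ^ m * conj (z ^ m)) / Complex.normSq (z ^ m) := by rw [h]; ring
    _ = w ^ m := by rw [Complex.mul_conj, mul_div_assoc, div_self hn', mul_one]

theorem exp_arg_neg (R : ℂ) : ‖R‖ * Complex.exp (((-R).arg + Real.pi : ℝ) * Complex.I) = R := by
  have := Complex.norm_mul_exp_arg_mul_I (-R)
  rw [norm_neg] at this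
  rw [Complex.ofReal_add, add_mul, Complex.exp_add, Complex.exp_pi_mul_I, mul_neg_one, mul_neg,
    this, neg_neg]

theorem good_ne {t : Ty n k} {y : Fin k → Sph n} (hy : y ∈ good m t) (a : Fin k) :
    (y a).1 (t.1 a) ≠ 0 := by
  intro h
  have h1 := hy a a
  have h2 : rat m a a (t.1 a) (t.1 a) y = 0 := by
    rw [rat, h, zero_pow (NeZero.ne m), zero_mul]
  rw [h2, neg_zero] at h1
  by_cases ht : t.2 a a
  · exact Complex.slitPlane_ne_zero (h1.1 ht) rfl
  · exact Complex.slitPlane_ne_zero (h1.2 ht) rfl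

theorem pow_smul_eq {g : ZMod m} {u v : EuclideanSpace ℂ (Fin (n + 1))} (h : v = zt g • u)
    (i : Fin (n + 1)) : v i ^ m = u i ^ m := by
  rw [h, PiLp.smul_apply, smul_eq_mul, mul_pow, zt_pow, one_mul]

theorem rat_inv {V : Set (Fin k → Sph n)} {y y' : V} (h : prV (m := m) V y = prV V y')
    (a b : Fin k) (i j : Fin (n + 1)) : rat m a b i j y.1 = rat m a b i j y'.1 := by
  obtain ⟨g, hg⟩ := prV_eq h a
  obtain ⟨g', hb⟩ := prV_eq h b
  rw [rat, rat, pow_smul_eq hg, pow_smul_eq hb]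

/-- Over the image of an open set of good points the coordinates are homotopic. Both deform to
multiples `y_{a,i} w` and `y_{b,j} w` of one vector `w`, equal to `1` at the positions `i` and
`j`, and these are related by a rotation through an `m`-th of the argument of the ratio. -/
theorem homotopic_coords {V : Set (Fin k → Sph n)} (hV : IsOpen V) {t : Ty n k}
    (hVt : V ⊆ good m t) (a b : Fin k) :
    (prj (prs m n k '' V) a).Homotopic (prj (prs m n k '' V) b) := by
  classical
  set i := t.1 a with hi
  set j := t.1 b with hj
  have hyi : ∀ y ∈ V, (y a).1 i ≠ 0 := fun y hy => good_ne (hVt hy) a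
  have hyj : ∀ y ∈ V, (y b).1 j ≠ 0 := fun y hy => good_ne (hVt hy) b
  let w : EuclideanSpace ℂ (Fin (n + 1)) := WithLp.toLp 2 fun l => if l = i ∨ l = j then 1 else 0
  have hwi : w i = ((1 : ℝ) : ℂ) := by simp [w]
  have hwj : w j = ((1 : ℝ) : ℂ) := by simp [w]
  have hw : w ≠ 0 := by
    intro h
    rw [h] at hwi
    simp at hwi
  have hcont : ∀ (a : Fin k) i, Continuous fun y : V => (y.1 a).1 i := fun a i =>
    (coord_cont a i).comp continuous_subtype_val
  have hdesc : ∀ (a : Fin k) (i : Fin (n + 1)) (h : ∀ y ∈ V, (y a).1 i ≠ 0),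
      ∃ f : C(↥(prs m n k '' V), LensSpace m n), ∀ y : V,
        f (prV V y) = Pz m (((y.1 a).1 i) • w) (smul_ne_zero (h _ y.2) hw) := by
    intro a i h
    refine exists_desc (prV_open hV) _ (Pz_cont _ ((hcont a i).smul continuous_const) _) ?_
    intro y y' hyy
    obtain ⟨g, hg⟩ := prV_eq hyy a
    refine (Pz_eq _ _ (zt g) 1 one_pos (zt_pow' g) ?_).symm
    rw [hg, PiLp.smul_apply, smul_eq_mul, smul_smul]
  obtain ⟨f, hf⟩ := hdesc a i hyi
  obtain ⟨f', hf'⟩ := hdesc b j hyj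
  have h1 := homotopic_axis hV a i hyi w 1 one_pos hwi f fun y _ => hf y
  have h2 := homotopic_axis hV b j hyj w 1 one_pos hwj f' fun y _ => hf' y
  have hr : Continuous fun y : V => rat m a b i j y.1 :=
    (rat_cont m a b i j).comp continuous_subtype_val
  refine (h1.trans ?_).trans h2.symm
  -- Related factors have ratio in the slit plane. Otherwise the argument is taken from the
  -- opposite of the ratio and shifted by `π`.
  by_cases ht : t.2 a b
  · refine homotopic_twist hV a b i j hyi hyj w hw (fun y => (rat m a b i j y.1).arg / m) ?_ ?_ ?_
      f f' (fun y _ => hf y) fun y _ => hf' y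
    · refine Continuous.div_const (continuous_iff_continuousAt.2 fun y => ?_) _
      exact ContinuousAt.comp (g := Complex.arg)
        (Complex.continuousAt_arg ((hVt y.2 a b).1 ht)) hr.continuousAt
    · intro y y' h
      simp only [rat_inv h]
    · intro y
      exact angle_eq (hyi _ y.2) (hyj _ y.2) _ (Complex.norm_mul_exp_arg_mul_I _)
  · refine homotopic_twist hV a b i j hyi hyj w hw
      (fun y => ((- rat m a b i j y.1).arg + Real.pi) / m) ?_ ?_ ?_
      f f' (fun y _ => hf y) fun y _ => hf' y
    · refine Continuous.div_const (Continuous.add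
        (continuous_iff_continuousAt.2 fun y => ?_) continuous_const) _
      exact ContinuousAt.comp (g := Complex.arg)
        (Complex.continuousAt_arg ((hVt y.2 a b).2 ht)) hr.neg.continuousAt
    · intro y y' h
      simp only [rat_inv h]
    · intro y
      exact angle_eq (hyi _ y.2) (hyj _ y.2) _ (exp_arg_neg _)

/-- The action of `(ℤ/m)^k` on `(S^{2n+1})^k` by isometries. -/
noncomputable def rotAll (g : Fin k → ZMod m) : (Fin k → Sph n) ≃ᵢ (Fin k → Sph n) where
  toFun y a := g a +ᵥ y a
  invFun y a := -g a +ᵥ y a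
  left_inv y := funext fun a => neg_vadd_vadd _ _
  right_inv y := funext fun a => vadd_neg_vadd _ _
  isometry_toFun := by
    refine Isometry.piMap (fun a (x : Sph n) => g a +ᵥ x) fun a => ?_
    refine Isometry.of_dist_eq fun x x' => ?_
    rw [Subtype.dist_eq, Subtype.dist_eq, dist_eq_norm, dist_eq_norm, vadd_coe, vadd_coe,
      ← smul_sub, norm_smul, norm_zt, one_mul]

theorem fst_vadd (g : ZMod m) (x : Sph n) : fst (g +ᵥ x) = fst x := by
  apply le_antisymm
  · refine fst_le ?_
    rw [vadd_apply]
    exact mul_ne_zero (zt_ne g) (fst_ne x)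
  · refine fst_le ?_
    have := fst_ne (g +ᵥ x)
    rw [vadd_apply] at this
    exact right_ne_zero_of_mul this

theorem ld_vadd (g : ZMod m) (x : Sph n) : ld m (g +ᵥ x) = ld m x := by
  rw [ld, fst_vadd]
  exact pow_smul_eq (vadd_coe g x) _

theorem rotAll_apply (g : Fin k → ZMod m) (y : Fin k → Sph n) (a : Fin k) :
    rotAll g y a = g a +ᵥ y a := rfl

theorem ty_rotAll (g : Fin k → ZMod m) (y : Fin k → Sph n) : ty m (rotAll g y) = ty m y := by
  simp only [ty, rotAll_apply, fst_vadd, ld_vadd]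

theorem good_rotAll (g : Fin k → ZMod m) {t : Ty n k} {y : Fin k → Sph n} (h : y ∈ good m t) :
    rotAll g y ∈ good m t := by
  have : ∀ a b i j, rat m a b i j (rotAll g y) = rat m a b i j y := fun a b i j => by
    rw [rat, rat, rotAll_apply, rotAll_apply, pow_smul_eq (vadd_coe (g a) (y a)),
      pow_smul_eq (vadd_coe (g b) (y b))]
  intro a b
  rw [this]
  exact h a b

variable (m) in
/-- The open neighbourhood of the points of type `t`. -/
noncomputable def Vt (t : Ty n k) : Set (Fin k → Sph n) := nbhd (ty m) wgt t ∩ good m t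

omit [NeZero m] in
theorem Vt_open (t : Ty n k) : IsOpen (Vt m t) := (nbhd_open _ _ t).inter (good_open m t)

/-- `Vt m t` is a union of orbits of the deck group. -/
theorem Vt_sat {t : Ty n k} {y y' : Fin k → Sph n} (hy : y ∈ Vt m t)
    (h : prs m n k y' = prs m n k y) : y' ∈ Vt m t := by
  have : ∀ a, ∃ g : ZMod m, g +ᵥ y a = y' a := fun a => pr_eq_iff.1 (congrFun h a)
  choose g hg using this
  have : y' = rotAll g y := funext fun a => (hg a).symm
  rw [this]
  exact ⟨nbhd_invariant _ _ _ (ty_rotAll g) hy.1, good_rotAll g hy.2⟩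

/-- For each weight `c`, the images of the `Vt m t` with `t` of weight `c` are pairwise disjoint,
and there is a section over each; their union is the `c`-th set of the cover. -/
theorem upper_bound (hk : 2 ≤ k) : TCCoverAt (LensSpace m n) k (k * (2 * n + 1)) := by
  let U : Fin (k * (2 * n + 1)) → Ty n k → Set (Fin k → LensSpace m n) :=
    fun c t => {x | wgt t = c ∧ x ∈ prs m n k '' Vt m t}
  have hUo : ∀ c t, IsOpen (U c t) := by
    intro c t
    by_cases h : wgt t = c
    · simp only [U, h, true_and]
      exact prs_open.isOpenMap _ (Vt_open _)
    · simp [U, h]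
  refine ⟨fun c => ⋃ t, U c t, fun c => isOpen_iUnion (hUo c), ?_, fun c => ?_⟩
  · refine Set.eq_univ_of_forall fun x => ?_
    obtain ⟨y, rfl⟩ := prs_open.surjective x
    refine Set.mem_iUnion.2 ⟨⟨wgt (ty m y), wgt_lt (by omega) _⟩, Set.mem_iUnion.2
      ⟨ty m y, rfl, y, ⟨mem_nbhd _ _ (ty_local m) y, mem_good m y⟩, rfl⟩⟩
  · refine hasSec_iUnion _ (hUo c) ?_ ?_
    · rintro t t' x ⟨hw, y, hy, rfl⟩ ⟨hw', y', hy', h⟩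
      exact nbhd_disj _ _ (hw.trans hw'.symm) hy.1 (Vt_sat hy' h.symm).1
    · intro t
      by_cases h : wgt t = c
      · have : U c t = prs m n k '' Vt m t := Set.ext fun x => by
          simp only [U, h, true_and]
          rfl
        rw [this]
        exact hasSec_of_homotopic hk _ fun j hj =>
          homotopic_coords (Vt_open t) (fun y hy => hy.2) _ _
      · have : U c t = prs m n k '' ∅ := by simp [U, h]
        rw [this]
        exact hasSec_of_homotopic hk _ fun j hj =>
          homotopic_coords (m := m) (t := t) isOpen_empty (by simp) _ _

end
end LensTC

/-- If `p^{α_p(n)·⌊k/2⌋ + 1}` divides `m`, where `α_p(n)` is the `p`-adic valuation of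
the central binomial coefficient `C(2n, n)`, then `TC_k(L^{2n+1}_m) = k(2n+1)`. -/
theorem stmt16 (k m n : ℕ) (hk : 2 ≤ k) (hm : 2 ≤ m) (hn : 1 ≤ n)
    (p : ℕ) (hp : p.Prime)
    (hdvd : p ^ ((Nat.choose (2 * n) n).factorization p * (k / 2) + 1) ∣ m) :
    higherTC (LensSpace m n) k = k * (2 * n + 1) := by
  have : NeZero m := ⟨by omega⟩
  have hC : (Nat.choose (2 * n) n : ZMod m) ≠ 0 := by
    rw [Ne, ZMod.natCast_eq_zero_iff]
    intro h
    have h0 : Nat.choose (2 * n) n ≠ 0 := (Nat.choose_pos (by omega)).ne'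
    have h1 := (hp.pow_dvd_iff_le_factorization h0).1 (hdvd.trans h)
    -- Only this much of `k / 2` matters: the exponent in `hdvd` exceeds the valuation.
    have h2 : 1 ≤ k / 2 := by omega
    have h3 := Nat.mul_le_mul_left ((Nat.choose (2 * n) n).factorization p) h2
    omega
  refine le_antisymm (Nat.sInf_le (LensTC.upper_bound hk))
    (le_csInf ⟨_, LensTC.upper_bound hk⟩ fun r hr => ?_)
  by_contra h
  exact LensTC.lower_bound hC hk (not_le.1 h) hr
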